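/- Let M be a quasianalytic intersectable weight sequence of moderate growth and let d ≥ 1. Then the ring of germs at 0 ∈ ℝ^d of complex-valued E^{M}-functions has property (D): for every function f defined on an open neighborhood of 0 in ℝ^d and every integer j ≥ 1, if f^j and f^{j+1} are of class E^{M} on some open neighborhood of 0, then f is of class E^{M} on some open neighborhood of 0. -/

import Mathlib

open Filter Set Asymptotics MeasureTheory

noncomputable section

/-- `M` is a weight sequence: `M 0 = 1`, positive, `M 1 ≥ 1`, log-convex and
`M k ^ (1/k) → ∞`. -/
def IsWeightSeq (M : ℕ → ℝ) : Prop :=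
  M 0 = 1 ∧ (∀ k, 0 < M k) ∧ 1 ≤ M 1 ∧
    (∀ k : ℕ, 1 ≤ k → M k ^ 2 ≤ M (k - 1) * M (k + 1)) ∧
    Tendsto (fun k : ℕ => M k ^ (1 / (k : ℝ))) atTop atTop

/-- The sequence `m k = M k / k!`. -/
def mseq (M : ℕ → ℝ) : ℕ → ℝ := fun k => M k / (Nat.factorial k : ℝ)

/-- Log-convexity of a sequence. -/
def LogConvexSeq (m : ℕ → ℝ) : Prop := ∀ k : ℕ, 1 ≤ k → m k ^ 2 ≤ m (k - 1) * m (k + 1)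

/-- `m k ^ (1/k) → ∞`. -/
def RootTendsToInfty (m : ℕ → ℝ) : Prop :=
  Tendsto (fun k : ℕ => m k ^ (1 / (k : ℝ))) atTop atTop

/-- Moderate growth of a sequence. -/
def ModerateGrowth (M : ℕ → ℝ) : Prop :=
  ∃ C : ℝ, 0 < C ∧ ∀ j k : ℕ, M (j + k) ≤ C ^ (j + k) * M j * M k

/-- Derivation closedness of a sequence. -/
def DerivClosed (M : ℕ → ℝ) : Prop :=
  ∃ C : ℝ, 0 < C ∧ ∀ k : ℕ, M (k + 1) ≤ C ^ (k + 1) * M k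

/-- Non-quasianalyticity: `∑_{k≥1} M (k-1) / M k = ∑_{k≥1} 1/μ_k < ∞`. -/
def NonQuasianalytic (M : ℕ → ℝ) : Prop := Summable fun k : ℕ => M k / M (k + 1)

/-- Quasianalyticity: `∑_{k≥1} 1/μ_k = ∞`. -/
def Quasianalytic (M : ℕ → ℝ) : Prop := ¬ NonQuasianalytic M

/-- The associated function `h_m (t) = inf_k m k * t ^ k`. -/
def hFun (m : ℕ → ℝ) (t : ℝ) : ℝ := ⨅ k : ℕ, m k * t ^ k

/-- `Γ̄_m (t) = min {k | h_m t = m k * t ^ k}`. -/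
def GammaBar (m : ℕ → ℝ) (t : ℝ) : ℕ := sInf {k : ℕ | hFun m t = m k * t ^ k}

/-- `Γ̲_m (t) = min {k | m (k+1) / m k ≥ 1 / t}`. -/
def GammaLow (m : ℕ → ℝ) (t : ℝ) : ℕ := sInf {k : ℕ | 1 / t ≤ m (k + 1) / m k}

/-- The set whose supremum is `mg (M, N)`. -/
def mgSet (M N : ℕ → ℝ) : Set ℝ :=
  {x | ∃ j k : ℕ, 1 ≤ j + k ∧ x = (M (j + k) / (N j * N k)) ^ (1 / (j + k : ℝ))}

/-- `mg (M, N) = sup_{j+k ≥ 1} (M (j+k) / (N j * N k)) ^ (1/(j+k))`. -/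
def mg (M N : ℕ → ℝ) : ℝ := sSup (mgSet M N)

/-- `mg (M, N) < ∞`. -/
def MgFinite (M N : ℕ → ℝ) : Prop := BddAbove (mgSet M N)

/-- A weight sequence is regular: `m k ^ (1/k) → ∞`, derivation closed, and
`Γ̄_m (C t) ≤ Γ̲_m t` for some `C ≥ 1`. -/
def RegularWS (M : ℕ → ℝ) : Prop :=
  RootTendsToInfty (mseq M) ∧ DerivClosed M ∧
    ∃ C : ℝ, 1 ≤ C ∧ ∀ t : ℝ, 0 < t → GammaBar (mseq M) (C * t) ≤ GammaLow (mseq M) t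

/-- `f` is of class `E^{M}` (Roumieu) on the open set `U`. -/
def RoumieuOn {E : Type*} [NormedAddCommGroup E] [NormedSpace ℝ E]
    (M : ℕ → ℝ) (f : E → ℂ) (U : Set E) : Prop :=
  ContDiffOn ℝ (⊤ : ℕ∞) f U ∧
    ∀ V : Set E, IsOpen V → IsCompact (closure V) → closure V ⊆ U →
      ∃ C σ : ℝ, 0 < C ∧ 0 < σ ∧
        ∀ x ∈ V, ∀ k : ℕ, ‖iteratedFDerivWithin ℝ k f U x‖ ≤ C * σ ^ k * M k

/-- `f` is of class `E^{(M)}` (Beurling) on the open set `U`. -/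
def BeurlingOn {E : Type*} [NormedAddCommGroup E] [NormedSpace ℝ E]
    (M : ℕ → ℝ) (f : E → ℂ) (U : Set E) : Prop :=
  ContDiffOn ℝ (⊤ : ℕ∞) f U ∧
    ∀ V : Set E, IsOpen V → IsCompact (closure V) → closure V ⊆ U →
      ∀ σ : ℝ, 0 < σ → ∃ C : ℝ, 0 < C ∧
        ∀ x ∈ V, ∀ k : ℕ, ‖iteratedFDerivWithin ℝ k f U x‖ ≤ C * σ ^ k * M k

/-- A weight matrix: a nonempty, pointwise totally ordered family of weight sequences. -/
def IsWeightMatrix (W : Set (ℕ → ℝ)) : Prop :=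
  W.Nonempty ∧ (∀ M ∈ W, IsWeightSeq M) ∧
    ∀ M ∈ W, ∀ N ∈ W, (∀ k, M k ≤ N k) ∨ (∀ k, N k ≤ M k)

/-- R-regularity of a weight matrix. -/
def RRegular (W : Set (ℕ → ℝ)) : Prop :=
  (∀ M ∈ W, RootTendsToInfty (mseq M)) ∧
    (∀ M ∈ W, ∃ N ∈ W, ∃ C : ℝ, 1 ≤ C ∧ ∀ j : ℕ, M (j + 1) ≤ C ^ (j + 1) * N j) ∧
    (∀ M ∈ W, ∃ N ∈ W, ∃ C : ℝ, 1 ≤ C ∧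
      ∀ t : ℝ, 0 < t → GammaBar (mseq N) (C * t) ≤ GammaLow (mseq M) t)

/-- B-regularity of a weight matrix. -/
def BRegular (W : Set (ℕ → ℝ)) : Prop :=
  (∀ M ∈ W, RootTendsToInfty (mseq M)) ∧
    (∀ M ∈ W, ∃ N ∈ W, ∃ C : ℝ, 1 ≤ C ∧ ∀ j : ℕ, N (j + 1) ≤ C ^ j * M j) ∧
    (∀ M ∈ W, ∃ N ∈ W, ∃ C : ℝ, 1 ≤ C ∧
      ∀ t : ℝ, 0 < t → GammaBar (mseq M) (C * t) ≤ GammaLow (mseq N) t)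

/-- R-moderate growth of a weight matrix. -/
def RModerateGrowth (W : Set (ℕ → ℝ)) : Prop := ∀ M ∈ W, ∃ N ∈ W, MgFinite M N

/-- B-moderate growth of a weight matrix. -/
def BModerateGrowth (W : Set (ℕ → ℝ)) : Prop := ∀ M ∈ W, ∃ N ∈ W, MgFinite N M

/-- `f` is of class `E^{W}` (Roumieu, weight matrix) on the open set `U`. -/
def MatrixRoumieuOn {E : Type*} [NormedAddCommGroup E] [NormedSpace ℝ E]
    (W : Set (ℕ → ℝ)) (f : E → ℂ) (U : Set E) : Prop :=
  ContDiffOn ℝ (⊤ : ℕ∞) f U ∧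
    ∀ V : Set E, IsOpen V → IsCompact (closure V) → closure V ⊆ U →
      ∃ M ∈ W, ∃ C σ : ℝ, 0 < C ∧ 0 < σ ∧
        ∀ x ∈ V, ∀ k : ℕ, ‖iteratedFDerivWithin ℝ k f U x‖ ≤ C * σ ^ k * M k

/-- `f` is of class `E^{(W)}` (Beurling, weight matrix) on the open set `U`. -/
def MatrixBeurlingOn {E : Type*} [NormedAddCommGroup E] [NormedSpace ℝ E]
    (W : Set (ℕ → ℝ)) (f : E → ℂ) (U : Set E) : Prop :=
  ContDiffOn ℝ (⊤ : ℕ∞) f U ∧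
    ∀ V : Set E, IsOpen V → IsCompact (closure V) → closure V ⊆ U →
      ∀ M ∈ W, ∀ σ : ℝ, 0 < σ → ∃ C : ℝ, 0 < C ∧
        ∀ x ∈ V, ∀ k : ℕ, ‖iteratedFDerivWithin ℝ k f U x‖ ≤ C * σ ^ k * M k

/-- `ω` is a weight function. -/
def IsWeightFunction (ω : ℝ → ℝ) : Prop :=
  ContinuousOn ω (Ici 0) ∧ MonotoneOn ω (Ici 0) ∧ (∀ t ∈ Ici (0 : ℝ), 0 ≤ ω t) ∧
    ((fun t => ω (2 * t)) =O[atTop] ω) ∧ (ω =o[atTop] fun t : ℝ => t) ∧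
    ((fun t => Real.log t) =o[atTop] ω) ∧ ConvexOn ℝ (Ici 0) fun t => ω (Real.exp t)

/-- The Young conjugate `φ*_ω (s) = sup_{t ≥ 0} (s t - ω (e^t))`. -/
def phiStar (ω : ℝ → ℝ) (s : ℝ) : ℝ := sSup ((fun t => s * t - ω (Real.exp t)) '' Ici 0)

/-- Non-quasianalyticity of a weight function. -/
def NonQuasianalyticW (ω : ℝ → ℝ) : Prop := IntegrableOn (fun t => ω t / t ^ 2) (Ici 1)

/-- `f` is of class `E^{ω}` (Roumieu) on the open set `U`. -/
def OmegaRoumieuOn {E : Type*} [NormedAddCommGroup E] [NormedSpace ℝ E]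
    (ω : ℝ → ℝ) (f : E → ℂ) (U : Set E) : Prop :=
  ContDiffOn ℝ (⊤ : ℕ∞) f U ∧
    ∀ V : Set E, IsOpen V → IsCompact (closure V) → closure V ⊆ U →
      ∃ C ρ : ℝ, 0 < C ∧ 0 < ρ ∧
        ∀ x ∈ V, ∀ k : ℕ,
          ‖iteratedFDerivWithin ℝ k f U x‖ ≤ C * Real.exp (phiStar ω (ρ * k) / ρ)

/-- `f` is of class `E^{(ω)}` (Beurling) on the open set `U`. -/
def OmegaBeurlingOn {E : Type*} [NormedAddCommGroup E] [NormedSpace ℝ E]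
    (ω : ℝ → ℝ) (f : E → ℂ) (U : Set E) : Prop :=
  ContDiffOn ℝ (⊤ : ℕ∞) f U ∧
    ∀ V : Set E, IsOpen V → IsCompact (closure V) → closure V ⊆ U →
      ∀ ρ : ℝ, 0 < ρ → ∃ C : ℝ, 0 < C ∧
        ∀ x ∈ V, ∀ k : ℕ,
          ‖iteratedFDerivWithin ℝ k f U x‖ ≤ C * Real.exp (phiStar ω (ρ * k) / ρ)

/-- The open ellipse `Ω_ε` with vertices `± cosh ε` and co-vertices `± i sinh ε`. -/
def OmegaE (ε : ℝ) : Set ℂ :=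
  {z : ℂ | (z.re / Real.cosh ε) ^ 2 + (z.im / Real.sinh ε) ^ 2 < 1}

/-- The sequence space `Λ^{M}`. -/
def Lambda (M : ℕ → ℝ) : Set (ℕ → ℂ) :=
  {c | ∃ ρ : ℝ, 0 < ρ ∧ ∃ C : ℝ, ∀ k, ‖c k‖ ≤ C * ρ ^ k * M k}

/-- `L(M)`: all non-quasianalytic weight sequences `N ≥ M` with `n = N/k!` log-convex. -/
def LM (M : ℕ → ℝ) : Set (ℕ → ℝ) :=
  {N | IsWeightSeq N ∧ NonQuasianalytic N ∧ (∀ k, M k ≤ N k) ∧ LogConvexSeq (mseq N)}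

/-- A quasianalytic weight sequence `M` is intersectable if `Λ^{M} = ⋂_{N ∈ L(M)} Λ^{N}`. -/
def Intersectable (M : ℕ → ℝ) : Prop := Lambda M = ⋂ N ∈ LM M, Lambda N


namespace JorisAux
open Complex

/-- twice the `∂bar` derivative -/
def dbar2 (U : ℂ → ℂ) (z : ℂ) : ℂ := fderiv ℝ U z 1 + I * fderiv ℝ U z I

lemma clm_polar (L : ℂ →L[ℝ] ℂ) (e : ℂ) :
    L e + I * L (I * e) = (starRingEnd ℂ) e * (L 1 + I * L I) := by
  have h1 : L e = (e.re : ℂ) * L 1 + (e.im : ℂ) * L I := by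
    conv_lhs => rw [show e = e.re • (1:ℂ) + e.im • I by simp [Complex.re_add_im]]
    rw [map_add, map_smul, map_smul]; simp
  have h2 : L (I * e) = -(e.im : ℂ) * L 1 + (e.re : ℂ) * L I := by
    conv_lhs => rw [show I * e = (-e.im) • (1:ℂ) + e.re • I by
      apply Complex.ext <;> simp]
    rw [map_add, map_smul, map_smul]; simp
  rw [h1, h2]
  have h3 : (starRingEnd ℂ) e = e.re - e.im * I := by
    apply Complex.ext <;> simp
  rw [h3]
  linear_combination (e.im * L I) * I_sq

/-- the point on the circle -/
def pt (w : ℂ) (s θ : ℝ) : ℂ := w + s * exp (θ * I)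

lemma continuous_pt (w : ℂ) : Continuous fun p : ℝ × ℝ => pt w p.1 p.2 := by
  unfold pt; fun_prop

lemma hasDerivAt_pt_s (w : ℂ) (s θ : ℝ) :
    HasDerivAt (fun s => pt w s θ) (exp (θ * I)) s := by
  unfold pt
  have : HasDerivAt (fun s : ℝ => (s : ℂ)) 1 s := Complex.ofRealCLM.hasDerivAt
  simpa using (this.mul_const (exp (θ * I))).const_add w

lemma hasDerivAt_exp_θ (θ : ℝ) :
    HasDerivAt (fun θ : ℝ => exp (θ * I)) (I * exp (θ * I)) θ := by
  have : HasDerivAt (fun s : ℝ => (s : ℂ)) 1 θ := Complex.ofRealCLM.hasDerivAt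
  have h := (this.mul_const I).cexp
  simpa [mul_comm] using h

lemma hasDerivAt_pt_θ (w : ℂ) (s θ : ℝ) :
    HasDerivAt (fun θ => pt w s θ) (s * (I * exp (θ * I))) θ := by
  unfold pt
  exact ((hasDerivAt_exp_θ θ).const_mul (s : ℂ)).const_add w

lemma conj_exp_mul (θ : ℝ) : (starRingEnd ℂ) (exp (θ * I)) = exp (-(θ * I)) := by
  rw [← exp_conj]; simp

lemma continuous_dbar2 {U : ℂ → ℂ} (hU : ContDiff ℝ 1 U) : Continuous (dbar2 U) := by
  unfold dbar2
  have := hU.continuous_fderiv (by norm_num)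
  fun_prop

lemma swap_cont {E : Type*} [NormedAddCommGroup E] [NormedSpace ℝ E]
    {F : ℝ → ℝ → E} (hF : Continuous fun p : ℝ × ℝ => F p.1 p.2)
    (a b c d : ℝ) : ∫ x in a..b, ∫ y in c..d, F x y = ∫ y in c..d, ∫ x in a..b, F x y := by
  apply MeasureTheory.intervalIntegral_intervalIntegral_swap
  have h : IntegrableOn (fun p : ℝ × ℝ => F p.1 p.2) (uIcc a b ×ˢ uIcc c d)
      (volume.prod volume) :=
    hF.continuousOn.integrableOn_compact (isCompact_uIcc.prod isCompact_uIcc)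
  exact h.mono_set (Set.prod_mono uIoc_subset_uIcc uIoc_subset_uIcc)

lemma pompeiu_polar {U : ℂ → ℂ} (hU : ContDiff ℝ 1 U) (w : ℂ) (R : ℝ)
    (h0 : ∀ θ, U (pt w R θ) = 0) :
    ∫ θ in (0:ℝ)..(2 * Real.pi), ∫ s in (0:ℝ)..R, exp (-(θ * I)) * dbar2 U (pt w s θ)
      = - (2 * Real.pi) * U w := by
  have hd : ∀ z, HasFDerivAt U (fderiv ℝ U z) z := fun z =>
    (hU.differentiable (by norm_num) z).hasFDerivAt
  have hc := hU.continuous_fderiv (by norm_num)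
  have hcp : Continuous fun p : ℝ × ℝ => pt w p.1 p.2 := continuous_pt w
  have e1 : ∀ θ s : ℝ, exp (-(θ * I)) * dbar2 U (pt w s θ) =
      fderiv ℝ U (pt w s θ) (exp (θ * I)) + I * fderiv ℝ U (pt w s θ) (I * exp (θ * I)) := by
    intro θ s
    rw [clm_polar, conj_exp_mul]; rfl
  -- continuity
  have cA : Continuous fun p : ℝ × ℝ => fderiv ℝ U (pt w p.2 p.1) (exp (p.1 * I)) := by
    have : Continuous fun p : ℝ × ℝ => pt w p.2 p.1 := hcp.comp continuous_swap
    have := hc.comp this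
    exact this.clm_apply (by fun_prop)
  have cB : Continuous fun p : ℝ × ℝ => I * fderiv ℝ U (pt w p.2 p.1) (I * exp (p.1 * I)) := by
    have : Continuous fun p : ℝ × ℝ => pt w p.2 p.1 := hcp.comp continuous_swap
    have := hc.comp this
    exact continuous_const.mul (this.clm_apply (by fun_prop))
  have i1 : ∀ θ, ∫ s in (0:ℝ)..R, fderiv ℝ U (pt w s θ) (exp (θ * I)) = - U w := by
    intro θ
    rw [intervalIntegral.integral_eq_sub_of_hasDerivAt (f := fun s => U (pt w s θ))]
    · rw [h0]; simp [pt]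
    · intro s _
      exact (hd _).comp_hasDerivAt s (hasDerivAt_pt_s w s θ)
    · exact (cA.comp (Continuous.prodMk_right θ)).intervalIntegrable _ _
  have i2 : ∀ s : ℝ, ∫ θ in (0:ℝ)..(2 * Real.pi),
      (I * fderiv ℝ U (pt w s θ) (I * exp (θ * I))) = 0 := by
    intro s
    by_cases hs : s = 0
    · subst hs
      have : ∀ θ : ℝ, pt w 0 θ = w := by intro θ; simp [pt]
      simp only [this]
      rw [intervalIntegral.integral_eq_sub_of_hasDerivAt
        (f := fun θ : ℝ => I * fderiv ℝ U w (exp (θ * I)))]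
      · simp [exp_two_pi_mul_I]
      · intro θ _
        exact ((fderiv ℝ U w).hasFDerivAt.comp_hasDerivAt θ (hasDerivAt_exp_θ θ)).const_mul I
      · apply Continuous.intervalIntegrable; fun_prop
    · rw [intervalIntegral.integral_eq_sub_of_hasDerivAt
        (f := fun θ : ℝ => (I / s) * U (pt w s θ))]
      · simp [pt, exp_two_pi_mul_I]
      · intro θ _
        have h := ((hd _).comp_hasDerivAt θ (hasDerivAt_pt_θ w s θ)).const_mul (I / s)
        refine h.congr_deriv ?_
        have : (s : ℂ) * (I * exp (θ * I)) = s • (I * exp (θ * I)) := by simp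
        rw [this, map_smul, real_smul]
        have : (s:ℂ) ≠ 0 := by exact_mod_cast hs
        field_simp
      · exact (cB.comp (Continuous.prodMk_left s)).intervalIntegrable _ _
  simp_rw [e1]
  have i3 : ∀ θ, ∫ s in (0:ℝ)..R, (fderiv ℝ U (pt w s θ) (exp (θ * I)) +
      I * fderiv ℝ U (pt w s θ) (I * exp (θ * I))) = -U w +
      ∫ s in (0:ℝ)..R, I * fderiv ℝ U (pt w s θ) (I * exp (θ * I)) := by
    intro θ
    rw [intervalIntegral.integral_add, i1]
    · exact (cA.comp (Continuous.prodMk_right θ)).intervalIntegrable _ _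
    · exact (cB.comp (Continuous.prodMk_right θ)).intervalIntegrable _ _
  simp_rw [i3]
  rw [intervalIntegral.integral_add (by simp)]
  · rw [swap_cont (F := fun θ s : ℝ => I * fderiv ℝ U (pt w s θ) (I * exp (θ * I))) cB]
    simp [i2]
  · apply Continuous.intervalIntegrable
    exact intervalIntegral.continuous_parametric_intervalIntegral_of_continuous' cB 0 R

lemma stokes_polar {a : ℂ → ℂ} (ha : ContDiff ℝ 1 a) (w : ℂ) (R : ℝ) :
    ∫ θ in (0:ℝ)..(2 * Real.pi), R * exp (θ * I) * a (pt w R θ) =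
    ∫ θ in (0:ℝ)..(2 * Real.pi), ∫ s in (0:ℝ)..R, (s : ℂ) * dbar2 a (pt w s θ) := by
  have hd : ∀ z, HasFDerivAt a (fderiv ℝ a z) z := fun z =>
    (ha.differentiable (by norm_num) z).hasFDerivAt
  have hc := ha.continuous_fderiv (by norm_num)
  have hcp : Continuous fun p : ℝ × ℝ => pt w p.2 p.1 := (continuous_pt w).comp continuous_swap
  have hcc := hc.comp hcp
  have hac := ha.continuous.comp hcp
  simp only [Function.comp_def] at hcc hac
  let A : ℝ × ℝ → ℂ := fun p => exp (p.1 * I) * a (pt w p.2 p.1) +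
    p.2 * exp (p.1 * I) * fderiv ℝ a (pt w p.2 p.1) (exp (p.1 * I))
  let B : ℝ × ℝ → ℂ := fun p => I * (I * exp (p.1 * I) * a (pt w p.2 p.1) +
    exp (p.1 * I) * fderiv ℝ a (pt w p.2 p.1) (p.2 * (I * exp (p.1 * I))))
  have cA : Continuous A := by
    have := hcc.clm_apply (g := fun p : ℝ × ℝ => exp (p.1 * I)) (by fun_prop)
    dsimp only [A]
    fun_prop
  have cB : Continuous B := by
    have := hcc.clm_apply (g := fun p : ℝ × ℝ => p.2 * (I * exp (p.1 * I))) (by fun_prop)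
    dsimp only [B]
    fun_prop
  have e1 : ∀ θ s : ℝ, (s : ℂ) * dbar2 a (pt w s θ) = A (θ, s) + B (θ, s) := by
    intro θ s
    have h := clm_polar (fderiv ℝ a (pt w s θ)) (exp (θ * I))
    have h2 : exp (θ * I) * (starRingEnd ℂ) (exp (θ * I)) = 1 := by
      rw [conj_exp_mul, ← exp_add]; simp
    have h3 : (s : ℂ) * (I * exp (θ * I)) = s • (I * exp (θ * I)) := by simp
    dsimp only [A, B, dbar2]
    rw [h3, map_smul, real_smul]
    linear_combination (-s * exp (θ * I)) * h - (exp (θ * I) * a (pt w s θ)) * I_sq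
      - s * (fderiv ℝ a (pt w s θ) 1 + I * fderiv ℝ a (pt w s θ) I) * h2
  have i1 : ∀ θ : ℝ, ∫ s in (0:ℝ)..R, A (θ, s) = R * exp (θ * I) * a (pt w R θ) := by
    intro θ
    rw [intervalIntegral.integral_eq_sub_of_hasDerivAt
      (f := fun s : ℝ => s * exp (θ * I) * a (pt w s θ))]
    · simp
    · intro s _
      have h1 : HasDerivAt (fun s : ℝ => (s : ℂ)) 1 s := Complex.ofRealCLM.hasDerivAt
      have := (h1.mul_const (exp (θ * I))).mul
        ((hd _).comp_hasDerivAt s (hasDerivAt_pt_s w s θ))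
      refine this.congr_deriv ?_
      dsimp [A]; ring
    · exact (cA.comp (Continuous.prodMk_right θ)).intervalIntegrable _ _
  have i2 : ∀ s : ℝ, ∫ θ in (0:ℝ)..(2 * Real.pi), B (θ, s) = 0 := by
    intro s
    rw [intervalIntegral.integral_eq_sub_of_hasDerivAt
      (f := fun θ : ℝ => I * (exp (θ * I) * a (pt w s θ)))]
    · simp [pt, exp_two_pi_mul_I]
    · intro θ _
      have := (((hasDerivAt_exp_θ θ).mul
        ((hd _).comp_hasDerivAt θ (hasDerivAt_pt_θ w s θ)))).const_mul I
      exact this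
    · exact (cB.comp (Continuous.prodMk_left s)).intervalIntegrable _ _
  simp_rw [e1]
  have i3 : ∀ θ, ∫ s in (0:ℝ)..R, (A (θ, s) + B (θ, s)) = R * exp (θ * I) * a (pt w R θ) +
      ∫ s in (0:ℝ)..R, B (θ, s) := by
    intro θ
    rw [intervalIntegral.integral_add, i1]
    · exact (cA.comp (Continuous.prodMk_right θ)).intervalIntegrable _ _
    · exact (cB.comp (Continuous.prodMk_right θ)).intervalIntegrable _ _
  simp_rw [i3]
  rw [intervalIntegral.integral_add]
  · rw [swap_cont (F := fun θ s => B (θ, s)) cB]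
    simp [i2]
  · have : Continuous fun θ : ℝ => a (pt w R θ) := hac.comp (Continuous.prodMk_left (X := ℝ) R)
    apply Continuous.intervalIntegrable
    exact Continuous.mul (by fun_prop) this
  · apply Continuous.intervalIntegrable
    exact intervalIntegral.continuous_parametric_intervalIntegral_of_continuous' (f := fun θ s => B (θ, s)) cB 0 R

end JorisAux

namespace JorisAux
open Complex

lemma energy {φ : ℂ → ℝ} {a : ℂ → ℂ} {e : ℂ → ℝ} (ha : ContDiff ℝ 1 a)
    (hφ : Differentiable ℝ φ) (hφa : ∀ z v, fderiv ℝ φ z v = (a z * v).re)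
    (he : ∀ z, dbar2 a z = e z) (he0 : ∀ z, 0 ≤ e z) (hec : Continuous e)
    (w : ℂ) (A B : ℝ) (hAB : ∀ z, ‖z - w‖ ≤ 8 → A ≤ φ z ∧ φ z ≤ B) :
    ∫ θ in (0:ℝ)..(2 * Real.pi), ∫ s in (0:ℝ)..4, s * e (pt w s θ) ≤
      2 * (2 * Real.pi) * (B - A) := by
  have hpi := Real.pi_pos
  have hcp : Continuous fun p : ℝ × ℝ => pt w p.2 p.1 := (continuous_pt w).comp continuous_swap
  have hcs : Continuous fun p : ℝ × ℝ => p.2 * e (pt w p.2 p.1) :=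
    continuous_snd.mul (hec.comp hcp)
  have hca : Continuous fun p : ℝ × ℝ => (a (pt w p.2 p.1) * exp (p.1 * I)).re := by
    have := ha.continuous.comp hcp
    exact Complex.continuous_re.comp (this.mul (by fun_prop))
  have hca' : Continuous fun p : ℝ × ℝ => (a (pt w p.1 p.2) * exp (p.2 * I)).re :=
    hca.comp continuous_swap
  set K : ℝ → ℝ := fun ρ => ∫ θ in (0:ℝ)..(2 * Real.pi), ∫ s in (0:ℝ)..ρ, s * e (pt w s θ)
    with hK
  have hK1 : ∀ ρ : ℝ, ρ * ∫ θ in (0:ℝ)..(2 * Real.pi), (a (pt w ρ θ) * exp (θ * I)).re = K ρ := by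
    intro ρ
    have h := stokes_polar ha w ρ
    have hr : (∫ θ in (0:ℝ)..(2 * Real.pi), ∫ s in (0:ℝ)..ρ, (s : ℂ) * dbar2 a (pt w s θ))
        = ((K ρ : ℝ) : ℂ) := by
      rw [hK]
      simp_rw [he]
      rw [← intervalIntegral.integral_ofReal]
      congr 1; ext θ
      rw [← intervalIntegral.integral_ofReal]
      congr 1; ext s; push_cast; rfl
    rw [hr] at h
    have h2 := congrArg Complex.re h
    rw [ofReal_re] at h2
    rw [← h2, ← intervalIntegral.integral_const_mul]
    have hint : IntervalIntegrable (fun θ : ℝ => (ρ:ℂ) * exp (θ * I) * a (pt w ρ θ)) volume 0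
        (2 * Real.pi) := by
      apply Continuous.intervalIntegrable
      exact Continuous.mul (by fun_prop)
        ((ha.continuous.comp hcp).comp (Continuous.prodMk_left (X := ℝ) ρ))
    have := Complex.reCLM.intervalIntegral_comp_comm hint
    simp only [Complex.reCLM_apply] at this
    rw [← this]
    congr 1; ext θ
    rw [mul_assoc, Complex.re_ofReal_mul, mul_comm (a _)]
  have hK2 : ∀ ρ, 4 ≤ ρ → K 4 ≤ K ρ := by
    intro ρ hρ
    apply intervalIntegral.integral_mono_on (by positivity)
    · exact (intervalIntegral.continuous_parametric_intervalIntegral_of_continuous'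
        (f := fun θ s => s * e (pt w s θ)) hcs 0 4).intervalIntegrable _ _
    · exact (intervalIntegral.continuous_parametric_intervalIntegral_of_continuous'
        (f := fun θ s => s * e (pt w s θ)) hcs 0 ρ).intervalIntegrable _ _
    · intro θ _
      have hi : ∀ x y : ℝ, IntervalIntegrable (fun s => s * e (pt w s θ)) volume x y := fun x y =>
        (hcs.comp (Continuous.prodMk_right (Y := ℝ) θ)).intervalIntegrable x y
      rw [← intervalIntegral.integral_add_adjacent_intervals (hi 0 4) (hi 4 ρ)]
      have : 0 ≤ ∫ s in (4:ℝ)..ρ, s * e (pt w s θ) := by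
        apply intervalIntegral.integral_nonneg hρ
        intro s hs
        exact mul_nonneg (by linarith [hs.1]) (he0 _)
      linarith
  have hK0 : 0 ≤ K 4 := by
    apply intervalIntegral.integral_nonneg (by positivity)
    intro θ _
    apply intervalIntegral.integral_nonneg (by norm_num)
    intro s hs
    exact mul_nonneg hs.1 (he0 _)
  have hup : ∫ θ in (0:ℝ)..(2 * Real.pi), ∫ s in (4:ℝ)..8, (a (pt w s θ) * exp (θ * I)).re ≤
      (2 * Real.pi) * (B - A) := by
    have : ∀ θ, ∫ s in (4:ℝ)..8, (a (pt w s θ) * exp (θ * I)).re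
        = φ (pt w 8 θ) - φ (pt w 4 θ) := by
      intro θ
      rw [intervalIntegral.integral_eq_sub_of_hasDerivAt (f := fun s => φ (pt w s θ))]
      · intro s _
        have := (hφ (pt w s θ)).hasFDerivAt.comp_hasDerivAt s (hasDerivAt_pt_s w s θ)
        rw [hφa] at this
        exact this
      · exact (hca.comp (Continuous.prodMk_right (Y := ℝ) θ)).intervalIntegrable _ _
    calc _ ≤ ∫ θ in (0:ℝ)..(2 * Real.pi), (B - A) := by
          apply intervalIntegral.integral_mono_on (by positivity)
          · exact (intervalIntegral.continuous_parametric_intervalIntegral_of_continuous'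
              (f := fun θ s => (a (pt w s θ) * exp (θ * I)).re) hca 4 8).intervalIntegrable _ _
          · simp
          · intro θ _
            rw [this]
            have n1 : ∀ s : ℝ, ‖pt w s θ - w‖ = |s| := by
              intro s; simp [pt, Complex.norm_exp_ofReal_mul_I]
            have h8 := (hAB (pt w 8 θ) (by rw [n1]; norm_num)).2
            have h4 := (hAB (pt w 4 θ) (by rw [n1]; norm_num)).1
            linarith
      _ = _ := by simp; ring
  have hlo : K 4 / 2 ≤
      ∫ θ in (0:ℝ)..(2 * Real.pi), ∫ s in (4:ℝ)..8, (a (pt w s θ) * exp (θ * I)).re := by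
    rw [swap_cont (F := fun θ s => (a (pt w s θ) * exp (θ * I)).re) hca]
    calc K 4 / 2 = ∫ s in (4:ℝ)..8, K 4 / 8 := by simp; ring
      _ ≤ _ := by
        apply intervalIntegral.integral_mono_on (by norm_num) (by simp)
        · exact (intervalIntegral.continuous_parametric_intervalIntegral_of_continuous'
              (f := fun s θ => (a (pt w s θ) * exp (θ * I)).re) hca' 0 _).intervalIntegrable _ _
        · intro s hs
          have h1 := hK1 s
          have h2 := hK2 s hs.1
          have hs0 : 0 < s := by linarith [hs.1]
          rw [mul_comm, ← eq_div_iff hs0.ne'] at h1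
          rw [h1]
          calc K 4 / 8 ≤ K 4 / s := by gcongr; exact hs.2
            _ ≤ K s / s := by gcongr
  show K 4 ≤ _
  linarith

end JorisAux

set_option linter.unnecessarySeqFocus false
namespace JorisAux
open Complex

lemma hasFDerivAt_param {F : ℂ → ℝ → ℂ} {F' : ℂ → ℝ → ℂ →L[ℝ] ℂ}
    (hF : Continuous fun p : ℂ × ℝ => F p.1 p.2)
    (hF' : Continuous fun p : ℂ × ℝ => F' p.1 p.2)
    (hd : ∀ w t, HasFDerivAt (fun w => F w t) (F' w t) w) (a b : ℝ) (w : ℂ) :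
    HasFDerivAt (fun w => ∫ t in a..b, F w t) (∫ t in a..b, F' w t) w := by
  obtain ⟨B, hB⟩ := ((isCompact_closedBall w 1).prod (isCompact_uIcc (a := a) (b := b))).bddAbove_image
    hF'.norm.continuousOn
  have c1 : ∀ w, Continuous (F w) := fun w => hF.comp (Continuous.prodMk_right (Y := ℝ) w)
  have c2 : ∀ w, Continuous (F' w) := fun w => hF'.comp (Continuous.prodMk_right (Y := ℝ) w)
  apply intervalIntegral.hasFDerivAt_integral_of_dominated_of_fderiv_le (bound := fun _ => B)
    (Metric.closedBall_mem_nhds w one_pos)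
  · exact Eventually.of_forall fun w => (c1 w).aestronglyMeasurable
  · exact (c1 w).intervalIntegrable _ _
  · exact (c2 w).aestronglyMeasurable
  · refine Eventually.of_forall fun t ht x hx => ?_
    exact hB ⟨(x, t), ⟨hx, uIoc_subset_uIcc ht⟩, rfl⟩
  · simp
  · exact Eventually.of_forall fun t ht x hx => hd x t

/-- A polar Cauchy transform of `ψ`. -/
def cauchyT (ψ : ℂ → ℂ) (R : ℝ) (w : ℂ) : ℂ :=
  ∫ θ in (0:ℝ)..(2 * Real.pi), ∫ s in (0:ℝ)..R, exp (-(θ * I)) * ψ (pt w s θ)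

lemma cauchyT_diff {ψ : ℂ → ℂ} (hψ : ContDiff ℝ 1 ψ) (R : ℝ) (w : ℂ)
    (h0 : ∀ θ, ψ (pt w R θ) = 0) (hw : ψ w = 0) : DifferentiableAt ℂ (cauchyT ψ R) w := by
  have hc := hψ.continuous_fderiv (by norm_num)
  have hcp : Continuous fun p : (ℂ × ℝ) × ℝ => pt p.1.1 p.2 p.1.2 := by unfold pt; fun_prop
  have hcp2 : ∀ θ, Continuous fun p : ℂ × ℝ => pt p.1 p.2 θ := by intro θ; unfold pt; fun_prop
  set F' : ℂ → ℝ → ℝ → ℂ →L[ℝ] ℂ := fun w θ s => exp (-(θ * I)) • fderiv ℝ ψ (pt w s θ) with hF'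
  have hF'c : Continuous fun p : (ℂ × ℝ) × ℝ => F' p.1.1 p.1.2 p.2 := by
    simp only [hF']
    have : Continuous fun p : (ℂ × ℝ) × ℝ => exp (-((p.1.2 : ℂ) * I)) := by fun_prop
    exact this.smul (hc.comp hcp)
  have hin : ∀ (θ : ℝ) (w : ℂ), HasFDerivAt (fun w => ∫ s in (0:ℝ)..R, exp (-(θ * I)) * ψ (pt w s θ))
      (∫ s in (0:ℝ)..R, F' w θ s) w := by
    intro θ w
    apply hasFDerivAt_param (F := fun w s => exp (-(θ * I)) * ψ (pt w s θ))
      (F' := fun w s => F' w θ s)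
    · exact continuous_const.mul (hψ.continuous.comp (hcp2 θ))
    · have : Continuous fun _ : ℂ × ℝ => exp (-((θ : ℂ) * I)) := continuous_const
      exact this.smul (hc.comp (hcp2 θ))
    · intro w s
      have h1 : HasFDerivAt (fun w => pt w s θ) (ContinuousLinearMap.id ℝ ℂ) w := by
        unfold pt; exact (hasFDerivAt_id w).add_const _
      have h2 := (hψ.differentiable (by norm_num) (pt w s θ)).hasFDerivAt.comp w h1
      exact (h2.const_smul (exp (-(θ * I)))).congr_fderiv (by ext v; simp [hF'])
  have hout : HasFDerivAt (cauchyT ψ R)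
      (∫ θ in (0:ℝ)..(2 * Real.pi), ∫ s in (0:ℝ)..R, F' w θ s) w := by
    apply hasFDerivAt_param (F := fun w θ => ∫ s in (0:ℝ)..R, exp (-(θ * I)) * ψ (pt w s θ))
      (F' := fun w θ => ∫ s in (0:ℝ)..R, F' w θ s)
    · apply intervalIntegral.continuous_parametric_intervalIntegral_of_continuous'
        (f := fun (p : ℂ × ℝ) s => exp (-(p.2 * I)) * ψ (pt p.1 s p.2))
      exact Continuous.mul (by fun_prop) (hψ.continuous.comp hcp)
    · apply intervalIntegral.continuous_parametric_intervalIntegral_of_continuous'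
        (f := fun (p : ℂ × ℝ) s => F' p.1 p.2 s)
      exact hF'c
    · intro w θ; exact hin θ w
  have hev : ∀ v, (∫ θ in (0:ℝ)..(2 * Real.pi), ∫ s in (0:ℝ)..R, F' w θ s) v =
      ∫ θ in (0:ℝ)..(2 * Real.pi), ∫ s in (0:ℝ)..R, exp (-(θ * I)) * fderiv ℝ ψ (pt w s θ) v := by
    intro v
    have hcw : Continuous fun p : ℝ × ℝ => F' w p.1 p.2 :=
      hF'c.comp (g := fun p : (ℂ × ℝ) × ℝ => F' p.1.1 p.1.2 p.2)
        (f := fun p : ℝ × ℝ => ((w, p.1), p.2)) (by fun_prop)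
    rw [ContinuousLinearMap.intervalIntegral_apply]
    · congr 1; ext θ
      rw [ContinuousLinearMap.intervalIntegral_apply]
      · simp [hF']
      · exact (hcw.comp (Continuous.prodMk_right (Y := ℝ) θ)).intervalIntegrable _ _
    · exact (intervalIntegral.continuous_parametric_intervalIntegral_of_continuous'
        (f := fun θ s => F' w θ s) hcw 0 R).intervalIntegrable _ _
  rw [differentiableAt_complex_iff_differentiableAt_real]
  refine ⟨hout.differentiableAt, ?_⟩
  rw [hout.fderiv]
  have hP := pompeiu_polar hψ w R h0
  rw [hw] at hP
  have hcw2 : Continuous fun p : ℝ × ℝ => pt w p.2 p.1 := (continuous_pt w).comp continuous_swap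
  have hcv : ∀ v, Continuous fun p : ℝ × ℝ => exp (-(p.1 * I)) * fderiv ℝ ψ (pt w p.2 p.1) v := by
    intro v
    exact Continuous.mul (by fun_prop) ((hc.comp hcw2).clm_apply continuous_const)
  have key : (∫ θ in (0:ℝ)..(2 * Real.pi), ∫ s in (0:ℝ)..R, F' w θ s) 1 +
      I * (∫ θ in (0:ℝ)..(2 * Real.pi), ∫ s in (0:ℝ)..R, F' w θ s) I = 0 := by
    rw [hev, hev, ← intervalIntegral.integral_const_mul, ← intervalIntegral.integral_add]
    · rw [mul_zero] at hP
      rw [← hP]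
      congr 1; ext θ
      rw [← intervalIntegral.integral_const_mul, ← intervalIntegral.integral_add]
      · congr 1; ext s
        simp only [dbar2]; ring
      · exact ((hcv 1).comp (Continuous.prodMk_right (Y := ℝ) θ)).intervalIntegrable _ _
      · exact (continuous_const.mul
          ((hcv I).comp (Continuous.prodMk_right (Y := ℝ) θ))).intervalIntegrable _ _
    · exact (intervalIntegral.continuous_parametric_intervalIntegral_of_continuous'
        (f := fun (θ : ℝ) (s : ℝ) => exp (-(θ * I)) * fderiv ℝ ψ (pt w s θ) 1) (hcv 1) 0 R).intervalIntegrable _ _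
    · exact (continuous_const.mul
        (intervalIntegral.continuous_parametric_intervalIntegral_of_continuous'
        (f := fun (θ : ℝ) (s : ℝ) => exp (-(θ * I)) * fderiv ℝ ψ (pt w s θ) I) (hcv I) 0 R)).intervalIntegrable _ _
  rw [smul_eq_mul]
  linear_combination (-I) * key + (∫ θ in (0:ℝ)..(2 * Real.pi), ∫ s in (0:ℝ)..R, F' w θ s) I * I_sq

/-- Wirtinger derivatives. -/
def HW (f : ℂ → ℂ) (p q : ℂ) (z : ℂ) : Prop :=
  HasFDerivAt f (p • (ContinuousLinearMap.id ℝ ℂ) + q • (conjCLE : ℂ →L[ℝ] ℂ)) z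

lemma HW.dbar {f : ℂ → ℂ} {p q z : ℂ} (h : HW f p q z) : dbar2 f z = 2 * q := by
  unfold dbar2
  rw [h.fderiv]
  simp
  linear_combination (p - q) * I_sq

lemma HW.of_deriv {f : ℂ → ℂ} {p z : ℂ} (h : HasDerivAt f p z) : HW f p 0 z := by
  have := h.hasFDerivAt.restrictScalars ℝ
  refine this.congr_fderiv ?_
  ext v <;> simp [mul_comm]

lemma HW.conj {f : ℂ → ℂ} {p q z : ℂ} (h : HW f p q z) :
    HW (fun z => (starRingEnd ℂ) (f z)) ((starRingEnd ℂ) q) ((starRingEnd ℂ) p) z := by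
  have := (conjCLE : ℂ →L[ℝ] ℂ).hasFDerivAt.comp z h
  refine this.congr_fderiv ?_
  ext v <;> simp <;> ring

lemma HW.mul {f g : ℂ → ℂ} {p q p' q' z : ℂ} (h : HW f p q z) (h' : HW g p' q' z) :
    HW (fun z => f z * g z) (p * g z + f z * p') (q * g z + f z * q') z := by
  refine (HasFDerivAt.mul h h').congr_fderiv ?_
  ext v <;> simp <;> ring

lemma HW.add_const {f : ℂ → ℂ} {p q z : ℂ} (h : HW f p q z) (c : ℂ) :
    HW (fun z => f z + c) p q z := HasFDerivAt.add_const c h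

lemma HW.const_mul {f : ℂ → ℂ} {p q z : ℂ} (h : HW f p q z) (c : ℂ) :
    HW (fun z => c * f z) (c * p) (c * q) z := by
  refine (HasFDerivAt.const_mul h c).congr_fderiv ?_
  ext v <;> simp <;> ring

lemma HW.inv {f : ℂ → ℂ} {p q z : ℂ} (h : HW f p q z) (h0 : f z ≠ 0) :
    HW (fun z => (f z)⁻¹) (-p / f z ^ 2) (-q / f z ^ 2) z := by
  have h1 := ((hasDerivAt_inv h0).hasFDerivAt.restrictScalars ℝ).comp z h
  refine h1.congr_fderiv ?_
  ext v <;> simp <;> ring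

end JorisAux

set_option linter.unnecessarySeqFocus false
namespace JorisAux
open Complex

lemma norm_exp_neg_I (θ : ℝ) : ‖exp (-(θ * I))‖ = 1 := by
  have := Complex.norm_exp_ofReal_mul_I (-θ)
  simpa using this

lemma dbl_bound {Ψ : ℂ → ℂ} {e : ℂ → ℝ} (hΨ : Continuous Ψ) (hec : Continuous e)
    (he0 : ∀ z, 0 ≤ e z) {w : ℂ} {r ϱ E : ℝ} (hr : 0 < r) (hr1 : r ≤ 1) (hϱ : 0 < ϱ) (hϱ1 : ϱ ≤ 1)
    (h1 : ∀ s θ : ℝ, 0 ≤ s → s ≤ 4 → ‖Ψ (pt w s θ)‖ ≤ 4 / r)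
    (h2 : ∀ s θ : ℝ, 0 ≤ s → s ≤ 4 → ‖Ψ (pt w s θ)‖ ^ 2 ≤ 4 * ϱ ^ 4 * e (pt w s θ))
    (hE : ∫ θ in (0:ℝ)..(2 * Real.pi), ∫ s in (0:ℝ)..4, s * e (pt w s θ) ≤ E) :
    ‖∫ θ in (0:ℝ)..(2 * Real.pi), ∫ s in (0:ℝ)..4, exp (-(θ * I)) * Ψ (pt w s θ)‖ ≤
      2 * Real.pi * (4 * ϱ + ϱ ^ 2 / 2 * Real.log (4 / (r * ϱ))) + 2 * ϱ ^ 2 * E := by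
  have hpi := Real.pi_pos
  have hcp : Continuous fun p : ℝ × ℝ => pt w p.2 p.1 := (continuous_pt w).comp continuous_swap
  have hcs : Continuous fun p : ℝ × ℝ => p.2 * e (pt w p.2 p.1) :=
    continuous_snd.mul (hec.comp hcp)
  have hcI : Continuous fun θ : ℝ => ∫ s in (0:ℝ)..4, s * e (pt w s θ) :=
    intervalIntegral.continuous_parametric_intervalIntegral_of_continuous'
        (f := fun θ s => s * e (pt w s θ)) hcs 0 4
  have hc0 : 0 < r * ϱ := by positivity
  have hc4 : r * ϱ ≤ 4 := by nlinarith
  have hin : ∀ θ : ℝ, ‖∫ s in (0:ℝ)..4, exp (-(θ * I)) * Ψ (pt w s θ)‖ ≤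
      (4 * ϱ + ϱ ^ 2 / 2 * Real.log (4 / (r * ϱ))) +
        2 * ϱ ^ 2 * ∫ s in (0:ℝ)..4, s * e (pt w s θ) := by
    intro θ
    have hcΨ : Continuous fun s : ℝ => exp (-(θ * I)) * Ψ (pt w s θ) :=
      continuous_const.mul ((hΨ.comp hcp).comp (Continuous.prodMk_right (Y := ℝ) θ))
    have hce : Continuous fun s : ℝ => s * e (pt w s θ) :=
      hcs.comp (Continuous.prodMk_right (Y := ℝ) θ)
    have hnn : ∀ s, ‖exp (-(θ * I)) * Ψ (pt w s θ)‖ = ‖Ψ (pt w s θ)‖ := by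
      intro s; rw [norm_mul, norm_exp_neg_I, one_mul]
    rw [← intervalIntegral.integral_add_adjacent_intervals (hcΨ.intervalIntegrable 0 (r * ϱ))
      (hcΨ.intervalIntegrable (r * ϱ) 4)]
    refine (norm_add_le _ _).trans ?_
    have b1 : ‖∫ s in (0:ℝ)..(r * ϱ), exp (-(θ * I)) * Ψ (pt w s θ)‖ ≤ 4 * ϱ := by
      have := intervalIntegral.norm_integral_le_of_norm_le_const (a := 0) (b := r * ϱ) (C := 4 / r)
        (f := fun s : ℝ => exp (-(θ * I)) * Ψ (pt w s θ)) (by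
          intro s hs
          rw [uIoc_of_le hc0.le] at hs
          rw [hnn]
          exact h1 s θ hs.1.le (hs.2.trans hc4))
      refine this.trans (le_of_eq ?_)
      rw [sub_zero, abs_of_pos hc0]
      field_simp
    have hiI : IntervalIntegrable (fun s : ℝ => s⁻¹) volume (r * ϱ) 4 := by
      apply ContinuousOn.intervalIntegrable
      intro s hs
      rw [uIcc_of_le hc4] at hs
      exact (continuousAt_inv₀ (by linarith [hs.1] : s ≠ 0)).continuousWithinAt
    have b2 : ‖∫ s in (r * ϱ)..4, exp (-(θ * I)) * Ψ (pt w s θ)‖ ≤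
        ∫ s in (r * ϱ)..4, (2 * ϱ ^ 2 * (s * e (pt w s θ)) + ϱ ^ 2 / 2 * s⁻¹) := by
      apply intervalIntegral.norm_integral_le_of_norm_le hc4
      · refine Eventually.of_forall fun s hs => ?_
        have hs0 : 0 < s := hc0.trans hs.1
        rw [hnn]
        have hh := h2 s θ hs0.le hs.2
        set P := ‖Ψ (pt w s θ)‖
        set q := e (pt w s θ)
        have key : P * (2 * s * ϱ ^ 2) ≤ s ^ 2 * P ^ 2 + ϱ ^ 4 := by
          nlinarith [sq_nonneg (s * P - ϱ ^ 2)]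
        have key2 : P * (2 * s * ϱ ^ 2) ≤ s ^ 2 * (4 * ϱ ^ 4 * q) + ϱ ^ 4 := by
          have := mul_le_mul_of_nonneg_left hh (sq_nonneg s)
          linarith
        have hpos : 0 < 2 * s * ϱ ^ 2 := by positivity
        rw [← mul_le_mul_iff_left₀ hpos]
        refine key2.trans (le_of_eq ?_)
        field_simp
        ring
      · exact ((continuous_const.mul hce).intervalIntegrable _ _).add (hiI.const_mul _)
    rw [intervalIntegral.integral_add ((hce.intervalIntegrable _ _).const_mul _)
      (hiI.const_mul _), intervalIntegral.integral_const_mul (2 * ϱ ^ 2),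
      intervalIntegral.integral_const_mul (ϱ ^ 2 / 2),
      integral_inv_of_pos hc0 (by norm_num)] at b2
    have b3 : ∫ s in (r * ϱ)..4, s * e (pt w s θ) ≤ ∫ s in (0:ℝ)..4, s * e (pt w s θ) := by
      rw [← intervalIntegral.integral_add_adjacent_intervals (hce.intervalIntegrable 0 (r * ϱ))
        (hce.intervalIntegrable (r * ϱ) 4)]
      have : 0 ≤ ∫ s in (0:ℝ)..(r * ϱ), s * e (pt w s θ) := by
        apply intervalIntegral.integral_nonneg hc0.le
        intro s hs
        exact mul_nonneg hs.1 (he0 _)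
      linarith
    have b4 := mul_le_mul_of_nonneg_left b3 (by positivity : 0 ≤ 2 * ϱ ^ 2)
    linarith
  have hout := intervalIntegral.norm_integral_le_of_norm_le (μ := volume) (a := 0) (b := 2 * Real.pi)
    (by positivity) (Eventually.of_forall fun θ _ => hin θ)
    ((continuous_const.add (continuous_const.mul hcI)).intervalIntegrable _ _)
  refine hout.trans ?_
  rw [intervalIntegral.integral_add (by simp)
    ((hcI.intervalIntegrable _ _).const_mul _), intervalIntegral.integral_const_mul]
  have := mul_le_mul_of_nonneg_left hE (by positivity : 0 ≤ 2 * ϱ ^ 2)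
  simp only [intervalIntegral.integral_const, sub_zero, smul_eq_mul]
  linarith

lemma est1 {j : ℕ} (hj : 1 ≤ j) {x s : ℝ} (hs : 0 < s) (hs2 : s ≤ 2)
    (h : x ^ j ≤ 2 * s ^ (j + 1)) : x ≤ 4 * s := by
  by_contra hc
  push Not at hc
  have h4 : (4 * s) ^ j < x ^ j := pow_lt_pow_left₀ hc (by positivity) (by omega)
  have : (4:ℝ) * s ^ j ≤ (4 * s) ^ j := by
    rw [mul_pow]
    gcongr
    calc (4:ℝ) = 4 ^ 1 := by norm_num
      _ ≤ 4 ^ j := pow_le_pow_right₀ (by norm_num) hj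
  have h5 : 2 * s ^ (j + 1) ≤ 4 * s ^ j := by
    rw [pow_succ]
    have : 0 < s ^ j := by positivity
    nlinarith
  linarith

lemma est2 {j : ℕ} (hj : 1 ≤ j) {x s r ϱ : ℝ} (_hx : 0 ≤ x) (hr : 0 < r) (hs : r ≤ s) (hϱ : 0 < ϱ)
    (hrϱ : r = ϱ ^ (2 * j)) (h : x ^ j ≤ 2 * s ^ (j + 1)) : x * r ≤ 2 * ϱ ^ 2 * s ^ 2 := by
  have hs0 : 0 < s := hr.trans_le hs
  by_contra hc
  push Not at hc
  have h4 : (2 * ϱ ^ 2 * s ^ 2) ^ j < (x * r) ^ j :=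
    pow_lt_pow_left₀ hc (by positivity) (by omega)
  have h5 : (2 * ϱ ^ 2 * s ^ 2) ^ j = 2 ^ j * r * (s ^ j * s ^ j) := by
    rw [hrϱ, mul_pow, mul_pow, ← pow_mul, ← pow_mul]; ring
  have h6 : (x * r) ^ j ≤ 2 * s ^ (j + 1) * r ^ j := by
    rw [mul_pow]; gcongr
  obtain ⟨i, rfl⟩ : ∃ i, j = i + 1 := ⟨j - 1, by omega⟩
  have h7 : s ^ (i + 1 + 1) * r ^ (i + 1) ≤ r * (s ^ (i + 1) * s ^ (i + 1)) := by
    have : r ^ i ≤ s ^ i := by gcongr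
    calc s ^ (i + 1 + 1) * r ^ (i + 1) = s ^ (i + 2) * r * r ^ i := by ring
      _ ≤ s ^ (i + 2) * r * s ^ i := by gcongr
      _ = _ := by ring
  have h8 : (2:ℝ) ≤ 2 ^ (i + 1) := by
    calc (2:ℝ) = 2 ^ 1 := by norm_num
      _ ≤ _ := pow_le_pow_right₀ (by norm_num) hj
  have h9 : 0 ≤ r * (s ^ (i + 1) * s ^ (i + 1)) := by positivity
  nlinarith

end JorisAux

set_option linter.unnecessarySeqFocus false
namespace JorisAux
open Complex

lemma dbar2_mul {f g : ℂ → ℂ} {z : ℂ} (hf : DifferentiableAt ℝ f z) (hg : DifferentiableAt ℝ g z) :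
    dbar2 (fun z => f z * g z) z = dbar2 f z * g z + f z * dbar2 g z := by
  unfold dbar2
  rw [fderiv_fun_mul hf hg]
  simp
  ring

/-- the regularised quotient -/
def uq (g h : ℂ → ℂ) (r : ℝ) (z : ℂ) : ℂ :=
  h z * (starRingEnd ℂ) (g z) * (g z * (starRingEnd ℂ) (g z) + (r : ℂ) ^ 2)⁻¹

def aq (g : ℂ → ℂ) (r : ℝ) (z : ℂ) : ℂ :=
  2 * deriv g z * (starRingEnd ℂ) (g z) * (g z * (starRingEnd ℂ) (g z) + (r : ℂ) ^ 2)⁻¹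

def eq' (g : ℂ → ℂ) (r : ℝ) (z : ℂ) : ℝ :=
  4 * ‖deriv g z‖ ^ 2 * r ^ 2 / (‖g z‖ ^ 2 + r ^ 2) ^ 2

lemma den_eq (g : ℂ → ℂ) (r : ℝ) (z : ℂ) : g z * (starRingEnd ℂ) (g z) + (r : ℂ) ^ 2 =
    ((‖g z‖ ^ 2 + r ^ 2 : ℝ) : ℂ) := by
  rw [Complex.mul_conj']; push_cast; rfl

lemma den_pos (g : ℂ → ℂ) {r : ℝ} (hr : 0 < r) (z : ℂ) : 0 < ‖g z‖ ^ 2 + r ^ 2 := by positivity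

lemma den_ne (g : ℂ → ℂ) {r : ℝ} (hr : 0 < r) (z : ℂ) :
    g z * (starRingEnd ℂ) (g z) + (r : ℂ) ^ 2 ≠ 0 := by
  rw [den_eq]; exact_mod_cast (den_pos g hr z).ne'

lemma HW_den {g : ℂ → ℂ} (hg : Differentiable ℂ g) (r : ℝ) (z : ℂ) :
    HW (fun z => g z * (starRingEnd ℂ) (g z) + (r : ℂ) ^ 2)
      (deriv g z * (starRingEnd ℂ) (g z)) (g z * (starRingEnd ℂ) (deriv g z)) z := by
  have h1 := HW.of_deriv (hg z).hasDerivAt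
  have := (h1.mul h1.conj).add_const ((r : ℂ) ^ 2)
  simpa using this

lemma HW_q {g k : ℂ → ℂ} (hg : Differentiable ℂ g) (hk : Differentiable ℂ k) {r : ℝ} (hr : 0 < r)
    (z : ℂ) : ∃ p, HW (fun z => k z * (starRingEnd ℂ) (g z) *
        (g z * (starRingEnd ℂ) (g z) + (r : ℂ) ^ 2)⁻¹) p
      (k z * (starRingEnd ℂ) (deriv g z) * r ^ 2 /
        (g z * (starRingEnd ℂ) (g z) + (r : ℂ) ^ 2) ^ 2) z := by
  have h1 := (HW.of_deriv (hk z).hasDerivAt).mul (HW.of_deriv (hg z).hasDerivAt).conj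
  have h2 := (HW_den hg r z).inv (den_ne g hr z)
  have h3 := h1.mul h2
  have h4 : (k z * (starRingEnd ℂ) (deriv g z) * r ^ 2 /
        (g z * (starRingEnd ℂ) (g z) + (r : ℂ) ^ 2) ^ 2) =
      (0 * (starRingEnd ℂ) (g z) + k z * (starRingEnd ℂ) (deriv g z)) *
        (g z * (starRingEnd ℂ) (g z) + (r : ℂ) ^ 2)⁻¹ +
      k z * (starRingEnd ℂ) (g z) * (-(g z * (starRingEnd ℂ) (deriv g z)) /
        (g z * (starRingEnd ℂ) (g z) + (r : ℂ) ^ 2) ^ 2) := by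
    have := den_ne g hr z
    field_simp
    ring
  rw [h4]
  exact ⟨_, h3⟩

lemma contDiff_q {g k : ℂ → ℂ} (hg : Differentiable ℂ g) (hk : Differentiable ℂ k) {r : ℝ}
    (hr : 0 < r) : ContDiff ℝ 2 (fun z => k z * (starRingEnd ℂ) (g z) *
        (g z * (starRingEnd ℂ) (g z) + (r : ℂ) ^ 2)⁻¹) := by
  have hg' : ContDiff ℝ 2 g := (hg.contDiff (n := 2)).restrict_scalars ℝ
  have hk' : ContDiff ℝ 2 k := (hk.contDiff (n := 2)).restrict_scalars ℝ
  have hc : ContDiff ℝ 2 (fun z => (starRingEnd ℂ) (g z)) :=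
    (conjCLE : ℂ →L[ℝ] ℂ).contDiff.comp hg'
  exact (hk'.mul hc).mul (((hg'.mul hc).add contDiff_const).inv (den_ne g hr))

lemma dbar2_u {g h : ℂ → ℂ} (hg : Differentiable ℂ g) (hh : Differentiable ℂ h) {r : ℝ}
    (hr : 0 < r) (z : ℂ) :
    ‖dbar2 (uq g h r) z‖ = 2 * ‖h z‖ * ‖deriv g z‖ * r ^ 2 / (‖g z‖ ^ 2 + r ^ 2) ^ 2 := by
  obtain ⟨p, hp⟩ := HW_q hg hh hr z
  have := hp.dbar
  unfold uq
  rw [this, den_eq]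
  rw [norm_mul, norm_div, norm_mul, norm_mul, norm_pow, norm_pow, Complex.norm_real,
    Complex.norm_real, Real.norm_of_nonneg hr.le, Real.norm_of_nonneg (den_pos g hr z).le,
    RCLike.norm_conj]
  simp
  ring

lemma dbar2_a {g : ℂ → ℂ} (hg : Differentiable ℂ g) {r : ℝ}
    (hr : 0 < r) (z : ℂ) : dbar2 (aq g r) z = eq' g r z := by
  obtain ⟨p, hp⟩ := HW_q hg (hg.deriv.const_mul 2) hr z
  have := hp.dbar
  unfold aq
  rw [this, den_eq]
  unfold eq'
  have h2 : (2 * deriv g z) * (starRingEnd ℂ) (deriv g z) = 2 * (‖deriv g z‖ : ℂ) ^ 2 := by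
    rw [mul_assoc, Complex.mul_conj']
  rw [h2]
  push_cast
  ring

lemma log_deriv {g : ℂ → ℂ} (hg : Differentiable ℂ g) {r : ℝ} (hr : 0 < r) (z : ℂ) :
    ∃ L : ℂ →L[ℝ] ℝ, HasFDerivAt (fun z => Real.log (‖g z‖ ^ 2 + r ^ 2)) L z ∧
      ∀ v, L v = (aq g r z * v).re := by
  have h1 := Complex.reCLM.hasFDerivAt.comp z (HW_den hg r z)
  have h2 : (reCLM ∘ fun z => g z * (starRingEnd ℂ) (g z) + (r : ℂ) ^ 2) =
      fun z => ‖g z‖ ^ 2 + r ^ 2 := by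
    ext z; simp only [Function.comp, den_eq, reCLM_apply, ofReal_re]
  rw [h2] at h1
  refine ⟨_, h1.log (den_pos g hr z).ne', ?_⟩
  intro v
  unfold aq
  rw [den_eq, ← ofReal_inv]
  generalize ‖g z‖ ^ 2 + r ^ 2 = Q
  simp
  ring

lemma lemD {j : ℕ} (hj : 1 ≤ j) {g h : ℂ → ℂ} (hg : Differentiable ℂ g) (hh : Differentiable ℂ h)
    {r ϱ : ℝ} (hϱ : 0 < ϱ) (hϱ1 : ϱ ≤ 1) (hrϱ : r = ϱ ^ (2 * j))
    (hgb : ∀ z, ‖z‖ ≤ 10 → ‖g z‖ ≤ 1)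
    (hgh : ∀ z, ‖z‖ ≤ 10 → ‖h z ^ j - g z ^ (j + 1)‖ ≤ r ^ (j + 1)) :
    ∃ F : ℂ → ℂ, DifferentiableOn ℂ F (Metric.ball 0 1) ∧ ∀ w ∈ Metric.ball (0:ℂ) 1,
      ‖F w - uq g h r w‖ ≤ 100 * (j + 1) * ϱ ∧ ‖uq g h r w‖ ≤ 4 := by
  have hr : 0 < r := by rw [hrϱ]; positivity
  have hr1 : r ≤ 1 := by rw [hrϱ]; exact pow_le_one₀ hϱ.le hϱ1
  have hpi := Real.pi_pos
  -- basic pointwise estimates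
  have hsq : ∀ z, ∃ s : ℝ, 0 < s ∧ s ^ 2 = ‖g z‖ ^ 2 + r ^ 2 ∧ r ≤ s ∧ ‖g z‖ ≤ s := by
    intro z
    refine ⟨√(‖g z‖ ^ 2 + r ^ 2), Real.sqrt_pos.2 (den_pos g hr z), Real.sq_sqrt (den_pos g hr z).le,
      Real.le_sqrt_of_sq_le (by nlinarith [sq_nonneg ‖g z‖]),
      Real.le_sqrt_of_sq_le (by nlinarith [sq_nonneg r])⟩
  have hpow : ∀ z s, ‖z‖ ≤ 10 → r ≤ s → ‖g z‖ ≤ s → ‖h z‖ ^ j ≤ 2 * s ^ (j + 1) := by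
    intro z s hz hrs hgs
    have h1 := hgh z hz
    have h2 : ‖h z‖ ^ j ≤ ‖h z ^ j - g z ^ (j + 1)‖ + ‖g z ^ (j + 1)‖ := by
      rw [← norm_pow]
      have := norm_add_le (h z ^ j - g z ^ (j + 1)) (g z ^ (j + 1))
      simpa using this
    rw [norm_pow (g z)] at h2
    have h3 : ‖g z‖ ^ (j + 1) ≤ s ^ (j + 1) := by gcongr
    have h4 : r ^ (j + 1) ≤ s ^ (j + 1) := by gcongr
    linarith
  have hub : ∀ z, ‖z‖ ≤ 10 → ‖uq g h r z‖ ≤ 4 := by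
    intro z hz
    obtain ⟨s, hs0, hs, hrs, hgs⟩ := hsq z
    have hs2 : s ≤ 2 := by
      have := hgb z hz
      nlinarith [norm_nonneg (g z)]
    have := est1 hj hs0 hs2 (hpow z s hz hrs hgs)
    unfold uq
    rw [den_eq, ← hs, norm_mul, norm_mul, norm_inv, Complex.norm_real, RCLike.norm_conj,
      Real.norm_of_nonneg (by positivity), ← div_eq_mul_inv, div_le_iff₀ (by positivity)]
    nlinarith [norm_nonneg (g z), norm_nonneg (h z)]
  have hg1 : ∀ z, ‖z‖ ≤ 5 → ‖deriv g z‖ ≤ 1 := by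
    intro z hz
    have := Complex.norm_deriv_le_of_forall_mem_sphere_norm_le (c := z) one_pos
      hg.diffContOnCl (C := 1) (by
        intro y hy
        apply hgb
        have h1 : ‖y - z‖ = 1 := by simpa [dist_eq_norm] using hy
        have := norm_add_le (y - z) z
        simp at this
        linarith)
    simpa using this
  have hX : ∀ z, ‖z‖ ≤ 5 → ‖h z‖ * r ≤ 2 * ϱ ^ 2 * (‖g z‖ ^ 2 + r ^ 2) := by
    intro z hz
    obtain ⟨s, hs0, hs, hrs, hgs⟩ := hsq z
    have := est2 hj (norm_nonneg (h z)) hr hrs hϱ hrϱ (hpow z s (by linarith) hrs hgs)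
    rwa [hs] at this
  have hd1 : ∀ z, ‖z‖ ≤ 5 → ‖dbar2 (uq g h r) z‖ ≤ 4 / r := by
    intro z hz
    rw [dbar2_u hg hh hr]
    have h1 := hX z hz
    have h2 := hg1 z hz
    have hd := den_pos g hr z
    have h3 : r ^ 2 ≤ ‖g z‖ ^ 2 + r ^ 2 := by nlinarith [sq_nonneg ‖g z‖]
    set Q := ‖g z‖ ^ 2 + r ^ 2
    have h0 := norm_nonneg (h z)
    have h5 : ϱ ^ 2 ≤ 1 := pow_le_one₀ hϱ.le hϱ1
    rw [div_le_div_iff₀ (by positivity) hr]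
    calc 2 * ‖h z‖ * ‖deriv g z‖ * r ^ 2 * r = 2 * (‖h z‖ * r) * ‖deriv g z‖ * r ^ 2 := by ring
      _ ≤ 2 * (2 * ϱ ^ 2 * Q) * 1 * Q := by gcongr
      _ = 4 * ϱ ^ 2 * Q ^ 2 := by ring
      _ ≤ 4 * 1 * Q ^ 2 := by gcongr
      _ = _ := by ring
  have hd2 : ∀ z, ‖z‖ ≤ 5 → ‖dbar2 (uq g h r) z‖ ^ 2 ≤ 4 * ϱ ^ 4 * eq' g r z := by
    intro z hz
    rw [dbar2_u hg hh hr]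
    have h1 := hX z hz
    have hd := den_pos g hr z
    unfold eq'
    set Q := ‖g z‖ ^ 2 + r ^ 2
    have h6 : (‖h z‖ * r) ^ 2 ≤ (2 * ϱ ^ 2 * Q) ^ 2 := by gcongr
    have : (2 * ‖h z‖ * ‖deriv g z‖ * r ^ 2 / Q ^ 2) ^ 2 =
        (‖h z‖ * r) ^ 2 * (4 * ‖deriv g z‖ ^ 2 * r ^ 2 / Q ^ 4) := by
      field_simp
      ring
    rw [this]
    refine (mul_le_mul_of_nonneg_right h6 (by positivity)).trans (le_of_eq ?_)
    field_simp
    ring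
  -- cutoff
  let χ : ContDiffBump (0:ℂ) := ⟨2, 3, by norm_num, by norm_num⟩
  set χc : ℂ → ℂ := fun z => ((χ z : ℝ) : ℂ) with hχc
  have hχ2 : ContDiff ℝ 2 χc := ofRealCLM.contDiff.comp (χ.contDiff (n := 2))
  have hu2 : ContDiff ℝ 2 (uq g h r) := contDiff_q hg hh hr
  have hχd : ContDiff ℝ 1 (dbar2 χc) := by
    have hf : ContDiff ℝ 1 (fderiv ℝ χc) := hχ2.fderiv_right (by norm_num)
    unfold dbar2
    exact (hf.clm_apply contDiff_const).add (contDiff_const.mul (hf.clm_apply contDiff_const))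
  set ψ : ℂ → ℂ := fun z => dbar2 χc z * uq g h r z with hψdef
  have hψ : ContDiff ℝ 1 ψ := hχd.mul (hu2.of_le (by norm_num))
  have hU : ContDiff ℝ 1 (fun z => χc z * uq g h r z) := (hχ2.mul hu2).of_le (by norm_num)
  set Ψ : ℂ → ℂ := fun z => χc z * dbar2 (uq g h r) z with hΨdef
  have hΨc : Continuous Ψ := hχ2.continuous.mul (continuous_dbar2 (hu2.of_le (by norm_num)))
  have hsplit : ∀ z, dbar2 (fun z => χc z * uq g h r z) z = ψ z + Ψ z := by
    intro z
    exact dbar2_mul (hχ2.differentiable (by norm_num) z) (hu2.differentiable (by norm_num) z)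
  have hχin : ∀ z, ‖z‖ < 2 → dbar2 χc z = 0 ∧ χc z = 1 := by
    intro z hz
    have h1 := χ.eventuallyEq_one_of_mem_ball (x := z) (by simpa using hz)
    have h2 : χc =ᶠ[nhds z] fun _ => 1 := by
      filter_upwards [h1] with y hy
      simp [hχc, hy]
    constructor
    · unfold dbar2
      rw [h2.fderiv_eq]; simp
    · exact h2.eq_of_nhds
  have hχout : ∀ z, 3 < ‖z‖ → dbar2 χc z = 0 ∧ χc z = 0 := by
    intro z hz
    have h1 : z ∉ tsupport χ := by
      rw [χ.tsupport_eq]; simpa using hz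
    have h1 := notMem_tsupport_iff_eventuallyEq.1 h1
    have h2 : χc =ᶠ[nhds z] fun _ => 0 := by
      filter_upwards [h1] with y hy
      simp [hχc, hy]
    constructor
    · unfold dbar2
      rw [h2.fderiv_eq]; simp
    · exact h2.eq_of_nhds
  have hχ1 : ∀ z, ‖χc z‖ ≤ 1 := by
    intro z
    simp only [hχc]
    rw [Complex.norm_real, Real.norm_of_nonneg χ.nonneg]
    exact χ.le_one
  have hptn : ∀ w s θ, ‖pt w s θ - w‖ = |s| := by
    intro w s θ; simp [pt, Complex.norm_exp_ofReal_mul_I]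
  have hpt4 : ∀ w θ, ‖w‖ < 1 → 3 < ‖pt w 4 θ‖ := by
    intro w θ hw
    have h1 := hptn w 4 θ
    have h2 := norm_sub_le (pt w 4 θ) w
    rw [h1] at h2
    norm_num at h2
    linarith
  have hpt5 : ∀ w s θ, ‖w‖ < 1 → 0 ≤ s → s ≤ 4 → ‖pt w s θ‖ ≤ 5 := by
    intro w s θ hw hs0 hs
    have h1 := hptn w s θ
    have h2 := norm_add_le (pt w s θ - w) w
    rw [h1, abs_of_nonneg hs0] at h2
    simp at h2
    linarith
  refine ⟨fun w => -(1 / (2 * Real.pi)) * cauchyT ψ 4 w, ?_, ?_⟩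
  · intro w hw
    rw [mem_ball_zero_iff] at hw
    apply DifferentiableAt.differentiableWithinAt
    apply DifferentiableAt.const_mul
    apply cauchyT_diff hψ
    · intro θ
      simp only [hψdef]
      rw [(hχout _ (hpt4 w θ hw)).1, zero_mul]
    · simp only [hψdef]
      rw [(hχin w (by linarith)).1, zero_mul]
  intro w hw
  rw [mem_ball_zero_iff] at hw
  refine ⟨?_, hub w (by linarith)⟩
  have hP := pompeiu_polar hU w 4 (by
    intro θ
    rw [(hχout _ (hpt4 w θ hw)).2, zero_mul])
  have hcp : Continuous fun p : ℝ × ℝ => pt w p.2 p.1 := (continuous_pt w).comp continuous_swap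
  have hadd : (∫ θ in (0:ℝ)..(2 * Real.pi), ∫ s in (0:ℝ)..4, exp (-(θ * I)) *
      dbar2 (fun z => χc z * uq g h r z) (pt w s θ)) = cauchyT ψ 4 w + cauchyT Ψ 4 w := by
    have hcv : ∀ f : ℂ → ℂ, Continuous f →
        Continuous fun p : ℝ × ℝ => exp (-(p.1 * I)) * f (pt w p.2 p.1) := by
      intro f hf
      exact Continuous.mul (by fun_prop) (hf.comp hcp)
    unfold cauchyT
    rw [← intervalIntegral.integral_add]
    · congr 1; ext θ
      rw [← intervalIntegral.integral_add]
      · congr 1; ext s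
        rw [hsplit]; ring
      · exact ((hcv _ hψ.continuous).comp (Continuous.prodMk_right (Y := ℝ) θ)).intervalIntegrable _ _
      · exact ((hcv _ hΨc).comp (Continuous.prodMk_right (Y := ℝ) θ)).intervalIntegrable _ _
    · exact (intervalIntegral.continuous_parametric_intervalIntegral_of_continuous'
        (f := fun (θ : ℝ) (s : ℝ) => exp (-(θ * I)) * ψ (pt w s θ))
          (hcv _ hψ.continuous) 0 4).intervalIntegrable _ _
    · exact (intervalIntegral.continuous_parametric_intervalIntegral_of_continuous'
        (f := fun (θ : ℝ) (s : ℝ) => exp (-(θ * I)) * Ψ (pt w s θ))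
          (hcv _ hΨc) 0 4).intervalIntegrable _ _
  rw [hadd] at hP
  simp only [(hχin w (by linarith)).2, one_mul] at hP
  have hFu : -(1 / (2 * (Real.pi : ℂ))) * cauchyT ψ 4 w - uq g h r w =
      (1 / (2 * (Real.pi : ℂ))) * cauchyT Ψ 4 w := by
    have : (Real.pi : ℂ) ≠ 0 := by exact_mod_cast hpi.ne'
    field_simp
    linear_combination -hP
  show ‖-(1 / (2 * (Real.pi : ℂ))) * cauchyT ψ 4 w - uq g h r w‖ ≤ _
  rw [hFu, norm_mul]
  have hn : ‖1 / (2 * (Real.pi : ℂ))‖ = 1 / (2 * Real.pi) := by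
    simp [abs_of_pos hpi]
  rw [hn]
  have hE := energy (φ := fun z => Real.log (‖g z‖ ^ 2 + r ^ 2)) (a := aq g r) (e := eq' g r)
    ((contDiff_q hg (hg.deriv.const_mul 2) hr).of_le (by norm_num))
    (fun z => by obtain ⟨L, hL, -⟩ := log_deriv hg hr z; exact hL.differentiableAt)
    (fun z v => by obtain ⟨L, hL, h2⟩ := log_deriv hg hr z; rw [hL.fderiv, h2])
    (fun z => dbar2_a hg hr z) (fun z => by unfold eq'; positivity)
    (by
      unfold eq'
      have := hg.continuous
      have := hg.deriv.continuous
      exact Continuous.div (by fun_prop) (by fun_prop) (fun z => (pow_pos (den_pos g hr z) 2).ne'))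
    w (2 * Real.log r) (Real.log 2) (by
      intro z hz
      have hz' : ‖z‖ ≤ 10 := by
        have := norm_add_le (z - w) w
        simp at this
        linarith
      have h1 := hgb z hz'
      constructor
      · rw [← Real.log_rpow hr]
        apply Real.log_le_log (by positivity)
        norm_num
      · apply Real.log_le_log (den_pos g hr z)
        nlinarith [norm_nonneg (g z)])
  have hB := dbl_bound hΨc (e := eq' g r) (by
      unfold eq'
      have := hg.continuous
      have := hg.deriv.continuous
      exact Continuous.div (by fun_prop) (by fun_prop) (fun z => (pow_pos (den_pos g hr z) 2).ne'))
    (fun z => by unfold eq'; positivity) hr hr1 hϱ hϱ1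
    (fun s θ hs0 hs => by
      simp only [hΨdef]
      rw [norm_mul]
      have h1 := hd1 _ (hpt5 w s θ hw hs0 hs)
      have h2 := hχ1 (pt w s θ)
      nlinarith [norm_nonneg (dbar2 (uq g h r) (pt w s θ))])
    (fun s θ hs0 hs => by
      simp only [hΨdef]
      rw [norm_mul, mul_pow]
      have h1 := hd2 _ (hpt5 w s θ hw hs0 hs)
      have h2 : ‖χc (pt w s θ)‖ ^ 2 ≤ 1 := pow_le_one₀ (norm_nonneg _) (hχ1 (pt w s θ))
      nlinarith [sq_nonneg ‖dbar2 (uq g h r) (pt w s θ)‖]) hE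
  change ‖cauchyT Ψ 4 w‖ ≤ _ at hB
  refine (mul_le_mul_of_nonneg_left hB (by positivity)).trans ?_
  have hlr : Real.log r = 2 * j * Real.log ϱ := by
    rw [hrϱ, Real.log_pow]; push_cast; ring
  have hl4 : Real.log (4 / (r * ϱ)) = 2 * Real.log 2 - 2 * j * Real.log ϱ - Real.log ϱ := by
    rw [Real.log_div (by norm_num) (by positivity), Real.log_mul hr.ne' hϱ.ne', hlr,
      show (4:ℝ) = 2 ^ 2 by norm_num, Real.log_pow]
    push_cast; ring
  rw [hl4, hlr]
  have hl2 : Real.log 2 ≤ 1 := by linarith [Real.log_two_lt_d9]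
  have hll : -(ϱ * Real.log ϱ) ≤ 1 := by
    have := Real.log_le_sub_one_of_pos (inv_pos.2 hϱ)
    rw [Real.log_inv] at this
    have h3 := mul_le_mul_of_nonneg_left this hϱ.le
    rw [mul_sub, mul_inv_cancel₀ hϱ.ne'] at h3
    linarith
  have hj0 : (1:ℝ) ≤ j := by exact_mod_cast hj
  set l := -(ϱ * Real.log ϱ) with hldef
  have e1 : 1 / (2 * Real.pi) * (2 * Real.pi * (4 * ϱ + ϱ ^ 2 / 2 *
      (2 * Real.log 2 - 2 * j * Real.log ϱ - Real.log ϱ)) + 2 * ϱ ^ 2 *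
      (2 * (2 * Real.pi) * (Real.log 2 - 2 * (2 * j * Real.log ϱ)))) =
      ϱ * (4 + ϱ * Real.log 2 + j * l + l / 2 + 4 * ϱ * Real.log 2 + 16 * j * l) := by
    rw [hldef]; field_simp; ring
  rw [e1, mul_comm]
  have e2 : ϱ * Real.log 2 ≤ 1 := by nlinarith
  have e3 : j * l ≤ j := by nlinarith
  gcongr
  linarith

end JorisAux

set_option linter.unnecessarySeqFocus false
namespace JorisAux
open Complex

/-- partial sum of a power series -/
def psum (b : ℕ → ℂ) (L : ℕ) (z : ℂ) : ℂ := ∑ l ∈ Finset.range L, b l * z ^ l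

lemma val_lemma {j : ℕ} (hj : 1 ≤ j) {φ g h : ℂ} {r ϱ δ : ℝ} (hϱ : 0 < ϱ) (hϱ1 : ϱ ≤ 1)
    (hrϱ : r = ϱ ^ (2 * j)) (hδ : δ ≤ r) (hg : ‖g‖ ≤ 1) (h1 : ‖φ ^ j - g‖ ≤ δ)
    (h2 : ‖φ ^ (j + 1) - h‖ ≤ δ) (h3 : ‖h ^ j - g ^ (j + 1)‖ ≤ r ^ (j + 1)) :
    ‖φ - uq (fun _ => g) (fun _ => h) r 0‖ ≤ 6 * ϱ := by
  have hr : 0 < r := by rw [hrϱ]; positivity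
  have hr1 : r ≤ ϱ ^ j * ϱ ^ j := by rw [hrϱ, two_mul, pow_add]
  have hϱj : ϱ ^ j ≤ ϱ := by
    calc ϱ ^ j ≤ ϱ ^ 1 := pow_le_pow_of_le_one hϱ.le hϱ1 hj
      _ = ϱ := pow_one _
  have hϱj0 : 0 < ϱ ^ j := by positivity
  have hj2 : (2:ℝ) ≤ 2 ^ j := by
    calc (2:ℝ) = 2 ^ 1 := by norm_num
      _ ≤ _ := pow_le_pow_right₀ (by norm_num) hj
  have hr1' : r ≤ ϱ ^ j := by nlinarith
  have hφj : ‖φ‖ ^ j ≤ ‖g‖ + δ := by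
    have := norm_add_le (φ ^ j - g) g
    simp at this; linarith
  obtain ⟨s, hs0, hs, hrs, hgs⟩ : ∃ s : ℝ, 0 < s ∧ s ^ 2 = ‖g‖ ^ 2 + r ^ 2 ∧ r ≤ s ∧ ‖g‖ ≤ s :=
    ⟨√(‖g‖ ^ 2 + r ^ 2), Real.sqrt_pos.2 (by positivity), Real.sq_sqrt (by positivity),
      Real.le_sqrt_of_sq_le (by nlinarith [sq_nonneg ‖g‖]),
      Real.le_sqrt_of_sq_le (by nlinarith [sq_nonneg r])⟩
  have hhj : ‖h‖ ^ j ≤ 2 * s ^ (j + 1) := by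
    have h2 : ‖h‖ ^ j ≤ ‖h ^ j - g ^ (j + 1)‖ + ‖g ^ (j + 1)‖ := by
      rw [← norm_pow]
      have := norm_add_le (h ^ j - g ^ (j + 1)) (g ^ (j + 1))
      simpa using this
    rw [norm_pow g] at h2
    have h3 : ‖g‖ ^ (j + 1) ≤ s ^ (j + 1) := by gcongr
    have h4 : r ^ (j + 1) ≤ s ^ (j + 1) := by gcongr
    linarith
  have hu : uq (fun _ => g) (fun _ => h) r 0 = h * (starRingEnd ℂ) g / ((s:ℂ) ^ 2) := by
    unfold uq
    rw [den_eq (fun _ => g) r 0, ← hs]; push_cast; rw [div_eq_mul_inv]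
  rw [hu]
  have hsn : ‖(s:ℂ) ^ 2‖ = s ^ 2 := by rw [norm_pow, Complex.norm_real, Real.norm_of_nonneg hs0.le]
  rcases le_or_gt ‖g‖ (ϱ ^ j) with hc | hc
  · have hs2 : s ≤ 2 * ϱ ^ j := by
      by_contra hcon
      push Not at hcon
      nlinarith [norm_nonneg g]
    have hh : ‖h‖ ≤ 4 * ϱ * s := by
      by_contra hcon
      push Not at hcon
      have a1 : (4 * ϱ * s) ^ j < ‖h‖ ^ j := pow_lt_pow_left₀ hcon (by positivity) (by omega)
      have a2 : (4 * ϱ * s) ^ j = 4 ^ j * ϱ ^ j * s ^ j := by rw [mul_pow, mul_pow]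
      have a3 : (4:ℝ) ≤ 4 ^ j := by
        calc (4:ℝ) = 4 ^ 1 := by norm_num
          _ ≤ _ := pow_le_pow_right₀ (by norm_num) hj
      have a4 : 4 * ϱ ^ j * s ^ j ≤ 4 ^ j * ϱ ^ j * s ^ j := by gcongr
      have a5 : 2 * s ^ (j + 1) ≤ 4 * ϱ ^ j * s ^ j := by
        calc 2 * s ^ (j + 1) = 2 * s * s ^ j := by ring
          _ ≤ 2 * (2 * ϱ ^ j) * s ^ j := by gcongr
          _ = _ := by ring
      linarith
    have hφ : ‖φ‖ ≤ 2 * ϱ := by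
      by_contra hcon
      push Not at hcon
      have a1 : (2 * ϱ) ^ j < ‖φ‖ ^ j := pow_lt_pow_left₀ hcon (by positivity) (by omega)
      rw [mul_pow] at a1
      nlinarith
    have hub : ‖h * (starRingEnd ℂ) g / ((s:ℂ) ^ 2)‖ ≤ 4 * ϱ := by
      rw [norm_div, norm_mul, RCLike.norm_conj, hsn, div_le_iff₀ (by positivity)]
      calc ‖h‖ * ‖g‖ ≤ (4 * ϱ * s) * s := by gcongr
        _ = _ := by ring
    have := norm_sub_le φ (h * (starRingEnd ℂ) g / ((s:ℂ) ^ 2))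
    linarith
  · have hg0 : g ≠ 0 := by
      rintro rfl
      simp at hc; linarith
    have hgn : 0 < ‖g‖ := norm_pos_iff.2 hg0
    have hφ : ‖φ‖ ≤ 2 := by
      by_contra hcon
      push Not at hcon
      have a1 : (2:ℝ) ^ j < ‖φ‖ ^ j := pow_lt_pow_left₀ hcon (by positivity) (by omega)
      nlinarith
    have b1 : ‖φ - h / g‖ ≤ 3 * ϱ := by
      have : φ - h / g = (φ * (g - φ ^ j) + (φ ^ (j + 1) - h)) / g := by
        field_simp; ring
      rw [this, norm_div, div_le_iff₀ hgn]
      have a1 := norm_add_le (φ * (g - φ ^ j)) (φ ^ (j + 1) - h)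
      rw [norm_mul, norm_sub_rev] at a1
      have a2 : ‖φ‖ * ‖φ ^ j - g‖ ≤ 2 * δ := by gcongr
      nlinarith
    have b2 : ‖h / g - h * (starRingEnd ℂ) g / ((s:ℂ) ^ 2)‖ ≤ 2 * ϱ := by
      have hsc : (s:ℂ) ^ 2 = g * (starRingEnd ℂ) g + (r:ℂ) ^ 2 := by
        rw [den_eq (fun _ => g) r 0, ← hs]; push_cast; rfl
      have hs0' : (s:ℂ) ^ 2 ≠ 0 := by exact_mod_cast (by positivity : s ^ 2 ≠ 0)
      have : h / g - h * (starRingEnd ℂ) g / ((s:ℂ) ^ 2) = h * (r:ℂ) ^ 2 / (g * (s:ℂ) ^ 2) := by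
        rw [div_sub_div _ _ hg0 hs0']
        congr 1
        rw [hsc]; ring
      rw [this, norm_div, norm_mul, norm_mul, hsn, norm_pow, Complex.norm_real,
        Real.norm_of_nonneg hr.le, div_le_iff₀ (by positivity)]
      have a1 := est2 hj (norm_nonneg h) hr hrs hϱ hrϱ hhj
      have a2 : r ≤ ‖g‖ := by linarith
      have a3 : ϱ ^ 2 ≤ ϱ := by nlinarith
      calc ‖h‖ * r ^ 2 = (‖h‖ * r) * r := by ring
        _ ≤ (2 * ϱ ^ 2 * s ^ 2) * ‖g‖ := by gcongr
        _ ≤ (2 * ϱ * s ^ 2) * ‖g‖ := by gcongr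
        _ = _ := by ring
    have := norm_add_le (φ - h / g) (h / g - h * (starRingEnd ℂ) g / ((s:ℂ) ^ 2))
    simp only [sub_add_sub_cancel] at this
    linarith

lemma pc1 {b : ℕ → ℂ} {L : ℕ} {A : ℝ} (hA : ∀ x : ℝ, |x| ≤ 1 → ‖psum b L x‖ ≤ A)
    {z : ℂ} (hz : ‖z‖ ≤ 1) : ‖psum b L z‖ ≤ 3 ^ L * A := by
  set G : ℂ → ℂ := fun w => ∑ l ∈ Finset.range L, b l * (w ^ (L - l) * ((w ^ 2 + 1) / 2) ^ l) with hG
  have hGd : Differentiable ℂ G := by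
    simp only [hG]; fun_prop
  have hGw : ∀ w : ℂ, w ≠ 0 → G w = w ^ L * psum b L ((w + w⁻¹) / 2) := by
    intro w hw
    simp only [hG, psum, Finset.mul_sum]
    apply Finset.sum_congr rfl
    intro l hl
    have hl' : l < L := Finset.mem_range.1 hl
    have e1 : (w ^ 2 + 1) / 2 = w * ((w + w⁻¹) / 2) := by field_simp
    have e2 : w ^ L = w ^ (L - l) * w ^ l := by rw [← pow_add]; congr 1; omega
    rw [e1, e2, mul_pow]; ring
  have hGb : ∀ w : ℂ, ‖w‖ ≤ 1 → ‖G w‖ ≤ A := by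
    intro w hw
    apply Complex.norm_le_of_forall_mem_frontier_norm_le (U := Metric.ball 0 1) Metric.isBounded_ball
      hGd.diffContOnCl
    · intro w hw
      rw [frontier_ball _ one_ne_zero, mem_sphere_zero_iff_norm] at hw
      have hw0 : w ≠ 0 := by rintro rfl; simp at hw
      rw [hGw w hw0, norm_mul, norm_pow, hw, one_pow, one_mul]
      have : (w + w⁻¹) / 2 = ((w.re : ℝ) : ℂ) := by
        rw [Complex.inv_eq_conj hw, Complex.add_conj]; push_cast; ring
      rw [this]
      exact hA _ ((Complex.abs_re_le_norm w).trans hw.le)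
    · rw [closure_ball _ one_ne_zero]; simpa using hw
  obtain ⟨c, hc⟩ := IsAlgClosed.exists_pow_nat_eq (z ^ 2 - 1) (n := 2) (by norm_num)
  have hroot : ∃ v w : ℂ, v * w = 1 ∧ v + w = 2 * z ∧ ‖w‖ ≤ 1 := by
    rcases le_or_gt ‖z + c‖ 1 with hh | hh
    · exact ⟨z - c, z + c, by linear_combination -hc, by ring, hh⟩
    · refine ⟨z + c, z - c, by linear_combination -hc, by ring, ?_⟩
      have : ‖z + c‖ * ‖z - c‖ = 1 := by
        rw [← norm_mul, show (z + c) * (z - c) = 1 by linear_combination -hc, norm_one]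
      nlinarith [norm_nonneg (z - c)]
  obtain ⟨v, w, hvw, hsum, hw⟩ := hroot
  have hw0 : w ≠ 0 := by rintro rfl; simp at hvw
  have hv : v = w⁻¹ := eq_inv_of_mul_eq_one_left hvw
  have hv3 : ‖v‖ ≤ 3 := by
    have h1 : v * v = 2 * z * v - 1 := by linear_combination v * hsum - hvw
    have h2 : ‖v‖ * ‖v‖ ≤ 2 * ‖v‖ + 1 := by
      rw [← norm_mul, h1]
      refine (norm_sub_le _ _).trans ?_
      rw [norm_mul, norm_mul, norm_one]
      simp
      nlinarith [norm_nonneg v]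
    by_contra hcon
    push Not at hcon
    nlinarith
  have hz2 : psum b L z = v ^ L * G w := by
    rw [hGw w hw0, ← mul_assoc, ← mul_pow, hvw, one_pow, one_mul]
    congr 1
    rw [← hv]; linear_combination -(1/2) * hsum
  rw [hz2, norm_mul, norm_pow]
  have := hGb w hw
  gcongr

lemma psum_scale (b : ℕ → ℂ) (L : ℕ) (c z : ℂ) :
    psum (fun l => b l * c ^ l) L z = psum b L (c * z) := by
  simp only [psum]
  apply Finset.sum_congr rfl
  intro l _; rw [mul_pow]; ring

lemma pc {b : ℕ → ℂ} {L : ℕ} {A R : ℝ} (hR : 0 < R) (hA : ∀ x : ℝ, |x| ≤ R → ‖psum b L x‖ ≤ A)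
    {z : ℂ} (hz : ‖z‖ ≤ R) : ‖psum b L z‖ ≤ 3 ^ L * A := by
  have h := pc1 (b := fun l => b l * (R:ℂ) ^ l) (L := L) (A := A) (by
    intro x hx
    rw [psum_scale]
    have := hA (R * x) (by rw [abs_mul, abs_of_pos hR]; nlinarith)
    simpa using this) (z := z / R) (by
      rw [norm_div, Complex.norm_real, Real.norm_of_nonneg hR.le]; exact div_le_one_of_le₀ hz hR.le)
  rw [psum_scale] at h
  have hR' : (R:ℂ) ≠ 0 := by exact_mod_cast hR.ne'
  rwa [mul_div_cancel₀ _ hR'] at h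

lemma taylor_rem {R : ℝ} (hR : 0 < R) (L : ℕ) : ∀ {G : ℂ → ℂ} {B : ℝ},
    DifferentiableOn ℂ G (Metric.ball 0 R) → (∀ z ∈ Metric.ball (0:ℂ) R, ‖G z‖ ≤ B) →
    ∃ b : ℕ → ℂ, ∀ z ∈ Metric.ball (0:ℂ) R, ‖G z - psum b L z‖ ≤ B * (2 * ‖z‖ / R) ^ L := by
  induction L with
  | zero => intro G B _ hB; exact ⟨0, fun z hz => by simpa [psum] using hB z hz⟩
  | succ L ih =>
    intro G B hG hB
    have h0 : (0:ℂ) ∈ Metric.ball (0:ℂ) R := Metric.mem_ball_self hR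
    have hd : DifferentiableOn ℂ (dslope G 0) (Metric.ball 0 R) :=
      (Complex.differentiableOn_dslope (Metric.ball_mem_nhds 0 hR)).2 hG
    have hb : ∀ z ∈ Metric.ball (0:ℂ) R, ‖dslope G 0 z‖ ≤ 2 * B / R := by
      intro z hz
      apply Complex.norm_dslope_le_div_of_mapsTo_ball hG _ hz
      intro y hy
      rw [mem_closedBall_iff_norm]
      have := norm_sub_le (G y) (G 0)
      linarith [hB y hy, hB 0 h0]
    obtain ⟨b, hb'⟩ := ih hd hb
    refine ⟨fun l => if l = 0 then G 0 else b (l - 1), ?_⟩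
    intro z hz
    have hs := sub_smul_dslope G 0 z
    rw [sub_zero, smul_eq_mul] at hs
    have hp : psum (fun l => if l = 0 then G 0 else b (l - 1)) (L + 1) z = G 0 + z * psum b L z := by
      simp only [psum]
      rw [Finset.sum_range_succ', Finset.mul_sum]
      simp only [if_true, Nat.add_sub_cancel, pow_zero, mul_one, Nat.succ_ne_zero, if_false]
      rw [add_comm]
      congr 1
      apply Finset.sum_congr rfl
      intro l _; ring
    rw [hp, show G z - (G 0 + z * psum b L z) = z * (dslope G 0 z - psum b L z) by
      rw [mul_sub, hs]; ring, norm_mul]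
    calc ‖z‖ * ‖dslope G 0 z - psum b L z‖ ≤ ‖z‖ * (2 * B / R * (2 * ‖z‖ / R) ^ L) := by
          gcongr; exact hb' z hz
      _ = _ := by rw [pow_succ]; ring

/-- two constants estimate -/
lemma two_const {G : ℂ → ℂ} (hG : DifferentiableOn ℂ G (Metric.ball 0 1))
    (hb : ∀ z ∈ Metric.ball (0:ℂ) 1, ‖G z‖ ≤ 1) {κ : ℝ} (hκ : 0 < κ) (hκ1 : κ ≤ 1)
    (hr : ∀ x : ℝ, |x| < 1 → ‖G x‖ ≤ κ ^ 2) {z : ℂ} (hz : ‖z‖ ≤ 1 / 54) : ‖G z‖ ≤ 11 * κ := by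
  obtain ⟨n, hn1, hn2⟩ := exists_nat_pow_near_of_lt_one hκ hκ1 (y := (1/9:ℝ)) (by norm_num)
    (by norm_num)
  set L := n + 1
  obtain ⟨b, hb'⟩ := taylor_rem one_pos L hG hb
  have hrem : ∀ z : ℂ, ‖z‖ ≤ 1 / 54 → ‖G z - psum b L z‖ ≤ (1/27) ^ L := by
    intro z hz
    have := hb' z (by rw [mem_ball_zero_iff]; linarith)
    refine this.trans ?_
    rw [one_mul, div_one]
    gcongr
    linarith
  have hreal : ∀ x : ℝ, |x| ≤ 1/54 → ‖psum b L x‖ ≤ κ ^ 2 + (1/27) ^ L := by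
    intro x hx
    have h1 := hr x (by linarith)
    have h2 := hrem x (by simpa using hx)
    have := norm_sub_le (G x) (G x - psum b L x)
    simp only [sub_sub_cancel] at this
    linarith
  have h3 := pc (by norm_num) hreal hz
  have h4 := norm_add_le (G z - psum b L z) (psum b L z)
  rw [sub_add_cancel] at h4
  have h5 := hrem z hz
  have h6 : (3:ℝ) ^ L * (1/27) ^ L = (1/9) ^ L := by rw [← mul_pow]; norm_num
  have h7 : ((1:ℝ)/27) ^ L ≤ (1/9) ^ L := by gcongr; norm_num
  have h8 : (3:ℝ) ^ L ≤ 9 ^ L := by gcongr; norm_num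
  have h9 : (9:ℝ) ^ L * κ ≤ 9 := by
    have e1 : (9:ℝ) ^ L * (1/9) ^ n = 9 := by
      simp only [L]; rw [pow_succ, mul_right_comm, ← mul_pow]; norm_num
    calc (9:ℝ) ^ L * κ ≤ 9 ^ L * (1/9) ^ n := by gcongr
      _ = 9 := e1
  have h10 : (3:ℝ) ^ L * κ ^ 2 ≤ 9 * κ := by
    calc (3:ℝ) ^ L * κ ^ 2 ≤ 9 ^ L * κ ^ 2 := by gcongr
      _ = (9 ^ L * κ) * κ := by ring
      _ ≤ 9 * κ := by gcongr
  linarith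

/-- finite difference of a sequence -/
def fd (k : ℕ) (a : ℕ → ℂ) : ℂ :=
  ∑ i ∈ Finset.range (k + 1), ((-1) ^ (k - i) * (k.choose i : ℂ)) * a i

lemma fd_add (k : ℕ) (a b : ℕ → ℂ) : fd k (fun i => a i + b i) = fd k a + fd k b := by
  simp only [fd, mul_add, Finset.sum_add_distrib]

lemma fd_sub (k : ℕ) (a b : ℕ → ℂ) : fd k (fun i => a i - b i) = fd k a - fd k b := by
  simp only [fd, mul_sub, Finset.sum_sub_distrib]

lemma fd_const_mul (k : ℕ) (c : ℂ) (a : ℕ → ℂ) : fd k (fun i => c * a i) = c * fd k a := by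
  simp only [fd, Finset.mul_sum]
  apply Finset.sum_congr rfl
  intro i _; ring

lemma fd_sum {ι : Type*} (s : Finset ι) (k : ℕ) (a : ι → ℕ → ℂ) :
    fd k (fun i => ∑ x ∈ s, a x i) = ∑ x ∈ s, fd k (a x) := by
  simp only [fd, Finset.mul_sum]
  rw [Finset.sum_comm]

lemma fd_congr {k : ℕ} {a b : ℕ → ℂ} (h : ∀ i ≤ k, a i = b i) : fd k a = fd k b := by
  apply Finset.sum_congr rfl
  intro i hi
  rw [h i (by simpa [Nat.lt_succ_iff] using hi)]

lemma fd_bound {k : ℕ} {a : ℕ → ℂ} {B : ℝ} (h : ∀ i ≤ k, ‖a i‖ ≤ B) : ‖fd k a‖ ≤ 2 ^ k * B := by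
  unfold fd
  have h2 : ((2:ℝ)) ^ k = ∑ i ∈ Finset.range (k + 1), (k.choose i : ℝ) := by
    exact_mod_cast (Nat.sum_range_choose k).symm
  rw [h2, Finset.sum_mul]
  apply norm_sum_le_of_le
  intro i hi
  rw [norm_mul, norm_mul, norm_pow, norm_neg, norm_one, one_pow, one_mul, Complex.norm_natCast]
  gcongr
  exact h i (by simpa [Nat.lt_succ_iff] using hi)

lemma fd_pow_lt {k l : ℕ} (h : l < k) : fd k (fun i => (i : ℂ) ^ l) = 0 := by
  have h1 := congrFun (fwdDiff_iter_pow_eq_zero_of_lt (R := ℂ) h) 0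
  rw [fwdDiff_iter_eq_sum_shift] at h1
  simp only [zero_add, nsmul_eq_mul, mul_one, zsmul_eq_mul, Pi.zero_apply] at h1
  rw [← h1]
  apply Finset.sum_congr rfl
  intro i _; push_cast; rfl

lemma fd_pow_self (k : ℕ) : fd k (fun i => (i : ℂ) ^ k) = k.factorial := by
  have h1 := congrFun (fwdDiff_iter_eq_factorial (R := ℂ) (n := k)) 0
  rw [fwdDiff_iter_eq_sum_shift] at h1
  simp only [zero_add, nsmul_eq_mul, mul_one, zsmul_eq_mul] at h1
  have e : ((k.factorial : ℂ → ℂ)) 0 = (k.factorial : ℂ) := rfl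
  rw [e] at h1
  rw [← h1]
  apply Finset.sum_congr rfl
  intro i _; push_cast; rfl

lemma fd_psum {k : ℕ} (b : ℕ → ℂ) (t : ℂ) : fd k (fun i => psum b k (i * t)) = 0 := by
  simp only [psum]
  rw [fd_sum]
  apply Finset.sum_eq_zero
  intro l hl
  have : (fun i : ℕ => b l * ((i:ℂ) * t) ^ l) = fun i : ℕ => (b l * t ^ l) * (i:ℂ) ^ l := by
    ext i; rw [mul_pow]; ring
  rw [this, fd_const_mul, fd_pow_lt (Finset.mem_range.1 hl), mul_zero]

/-- finite differences of a holomorphic function -/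
lemma fd_holo {R : ℝ} (hR : 0 < R) {G : ℂ → ℂ} {B : ℝ}
    (hG : DifferentiableOn ℂ G (Metric.ball 0 R)) (hB : ∀ z ∈ Metric.ball (0:ℂ) R, ‖G z‖ ≤ B)
    {k : ℕ} {t : ℝ} (ht : 0 ≤ t) (hkt : k * t < R) :
    ‖fd k (fun i => G ((i * t : ℝ) : ℂ))‖ ≤ B * (4 * (k * t) / R) ^ k := by
  obtain ⟨b, hb⟩ := taylor_rem hR k hG hB
  have hB0 : 0 ≤ B := (norm_nonneg _).trans (hB 0 (Metric.mem_ball_self hR))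
  have h1 : fd k (fun i => G ((i * t : ℝ) : ℂ)) =
      fd k (fun i => G ((i * t : ℝ) : ℂ) - psum b k (i * t)) := by
    rw [fd_sub, fd_psum, sub_zero]
  rw [h1]
  have h2 : B * (4 * (k * t) / R) ^ k = 2 ^ k * (B * (2 * (k * t) / R) ^ k) := by
    rw [show 4 * (k * t) / R = 2 * (2 * (k * t) / R) by ring, mul_pow 2 (2 * (k * t) / R)]; ring
  rw [h2]
  apply fd_bound
  intro i hi
  have hit : (i:ℝ) * t ≤ k * t := by gcongr
  have hn : ‖((i * t : ℝ) : ℂ)‖ = i * t := by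
    rw [Complex.norm_real, Real.norm_of_nonneg (by positivity)]
  have := hb ((i * t : ℝ) : ℂ) (by rw [mem_ball_zero_iff, hn]; linarith)
  rw [hn] at this
  push_cast at this ⊢
  refine this.trans ?_
  gcongr

end JorisAux

set_option linter.unnecessarySeqFocus false
namespace JorisAux
open Complex

/-- Minimising index of `n k * t ^ k`. -/
lemma min_index {n : ℕ → ℝ} (hpos : ∀ k, 0 < n k)
    (hlc : ∀ k, n (k + 1) ^ 2 ≤ n k * n (k + 2))
    (hlim : ∀ c : ℝ, ∃ k, c * n k ≤ n (k + 1)) {t : ℝ} (ht : 0 < t) :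
    ∃ p, (∀ k, n p * t ^ p ≤ n k * t ^ k) ∧ ∀ k ≤ p, ∀ l ≤ k, n k * t ^ k ≤ n l * t ^ l := by
  classical
  have hex : ∃ k, n k ≤ n (k + 1) * t := by
    obtain ⟨k, hk⟩ := hlim (1 / t)
    refine ⟨k, ?_⟩
    rw [div_mul_eq_mul_div, one_mul, div_le_iff₀ ht] at hk
    exact hk
  have hp := Nat.find_spec hex
  have hlt : ∀ k < Nat.find hex, n (k + 1) * t < n k := fun k hk => by
    have := Nat.find_min hex hk
    push Not at this; exact this
  set p := Nat.find hex
  have hge : ∀ k, n (p + k) ≤ n (p + k + 1) * t := by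
    intro k
    induction k with
    | zero => exact hp
    | succ k ih =>
      have h1 := hlc (p + k)
      have h2 := hpos (p + k)
      have h3 := hpos (p + k + 1)
      have h4 : n (p + k + 1) ^ 2 ≤ n (p + k + 1) * (n (p + k + 2) * t) := by
        calc _ ≤ _ := h1
          _ ≤ (n (p + k + 1) * t) * n (p + k + 2) := by
            have := hpos (p + k + 2)
            gcongr
          _ = _ := by ring
      rw [sq] at h4
      exact le_of_mul_le_mul_left h4 h3
  have hup : ∀ k, n p * t ^ p ≤ n (p + k) * t ^ (p + k) := by
    intro k
    induction k with
    | zero => simp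
    | succ k ih =>
      refine ih.trans ?_
      have := hge k
      have h5 : 0 < t ^ (p + k) := by positivity
      calc n (p + k) * t ^ (p + k) ≤ (n (p + k + 1) * t) * t ^ (p + k) := by gcongr
        _ = _ := by rw [← add_assoc, pow_succ]; ring
  have hdn : ∀ k ≤ p, ∀ l ≤ k, n k * t ^ k ≤ n l * t ^ l := by
    intro k hk l hl
    induction k, hl using Nat.le_induction with
    | base => exact le_rfl
    | succ k hlk ih =>
      refine le_trans ?_ (ih (by omega))
      have := (hlt k (by omega)).le
      have h5 : 0 < t ^ k := by positivity
      calc n (k + 1) * t ^ (k + 1) = (n (k + 1) * t) * t ^ k := by rw [pow_succ]; ring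
        _ ≤ _ := by gcongr
  refine ⟨p, fun k => ?_, hdn⟩
  rcases le_total p k with h | h
  · obtain ⟨i, rfl⟩ := Nat.exists_eq_add_of_le h
    exact hup i
  · exact hdn p le_rfl k h

/-- moderate growth splitting, uniform bound -/
lemma split1 {m n : ℕ → ℝ} {C t : ℝ} {p : ℕ} (hC : 1 ≤ C) (ht : 0 < t)
    (hm : ∀ k, 0 < m k) (hmn : ∀ k, m k ≤ n k)
    (hmg : ∀ a b, m (a + b) ≤ C ^ (a + b) * m a * m b)
    (hle : ∀ k ≤ p, n k * t ^ k ≤ 1) (q : ℕ) :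
    ∀ l ≤ (q + 1) * p, m l * t ^ l ≤ (C ^ q) ^ l := by
  induction q with
  | zero =>
    intro l hl
    simp only [zero_add, one_mul] at hl
    simp only [pow_zero, one_pow]
    exact le_trans (by gcongr; exact hmn l) (hle l hl)
  | succ q ih =>
    intro l hl
    rcases le_total l p with h | h
    · calc m l * t ^ l ≤ 1 := le_trans (by gcongr; exact hmn l) (hle l h)
        _ ≤ _ := one_le_pow₀ (one_le_pow₀ hC)
    · obtain ⟨i, rfl⟩ := Nat.exists_eq_add_of_le h
      have hi : i ≤ (q + 1) * p := by nlinarith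
      have h1 := ih i hi
      have h2 : m p * t ^ p ≤ 1 := le_trans (by gcongr; exact hmn p) (hle p le_rfl)
      have h3 : 0 < m p * t ^ p := mul_pos (hm p) (by positivity)
      have h4 : 0 < m i * t ^ i := mul_pos (hm i) (by positivity)
      calc m (p + i) * t ^ (p + i) ≤ (C ^ (p + i) * m p * m i) * t ^ (p + i) := by
            gcongr; exact hmg p i
        _ = C ^ (p + i) * ((m p * t ^ p) * (m i * t ^ i)) := by rw [pow_add t]; ring
        _ ≤ C ^ (p + i) * (1 * (C ^ q) ^ (p + i)) := by
            gcongr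
            refine h1.trans ?_
            exact pow_le_pow_right₀ (one_le_pow₀ hC) (by omega)
        _ = _ := by rw [pow_succ C q, mul_pow]; ring

/-- moderate growth splitting, sharp bound -/
lemma split2 {m n : ℕ → ℝ} {C t : ℝ} {p : ℕ} (hC : 1 ≤ C) (ht : 0 < t)
    (hm : ∀ k, 0 < m k) (hmn : ∀ k, m k ≤ n k)
    (hmg : ∀ a b, m (a + b) ≤ C ^ (a + b) * m a * m b) (q : ℕ) :
    m ((q + 1) * p) * t ^ ((q + 1) * p) ≤ (C ^ q) ^ ((q + 1) * p) * (n p * t ^ p) ^ (q + 1) := by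
  have h0 : m p * t ^ p ≤ n p * t ^ p := by gcongr; exact hmn p
  have h3 : 0 < m p * t ^ p := mul_pos (hm p) (by positivity)
  induction q with
  | zero => simpa using h0
  | succ q ih =>
    have e : (q + 1 + 1) * p = p + (q + 1) * p := by ring
    rw [e]
    set i := (q + 1) * p
    have h4 : 0 < m i * t ^ i := mul_pos (hm i) (by positivity)
    calc m (p + i) * t ^ (p + i) ≤ (C ^ (p + i) * m p * m i) * t ^ (p + i) := by
          gcongr; exact hmg p i
      _ = C ^ (p + i) * ((m p * t ^ p) * (m i * t ^ i)) := by rw [pow_add t]; ring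
      _ ≤ C ^ (p + i) * ((n p * t ^ p) * ((C ^ q) ^ (p + i) * (n p * t ^ p) ^ (q + 1))) := by
          have : 0 < n p * t ^ p := h3.trans_le h0
          refine mul_le_mul_of_nonneg_left (mul_le_mul h0 (ih.trans ?_) h4.le this.le)
            (by positivity)
          gcongr
          · exact one_le_pow₀ hC
          · omega
      _ = _ := by rw [pow_succ C q, mul_pow]; ring

/-- Taylor data. -/
def TD (m : ℕ → ℝ) (A σ ρ : ℝ) (g : ℝ → ℂ) (a : ℕ → ℂ) : Prop :=
  (∀ l, ‖a l‖ ≤ A * σ ^ l * m l) ∧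
    ∀ (L : ℕ) (s : ℝ), |s| < ρ → ‖g s - psum a L (s : ℂ)‖ ≤ A * σ ^ L * m L * |s| ^ L

lemma psum_poly (a : ℕ → ℂ) (L : ℕ) : ∃ P : Polynomial ℂ, P.natDegree ≤ L ∧
    ∀ z, P.eval z = psum a L z := by
  refine ⟨∑ l ∈ Finset.range L, Polynomial.C (a l) * Polynomial.X ^ l, ?_, ?_⟩
  · apply Polynomial.natDegree_sum_le_of_forall_le
    intro i hi
    refine (Polynomial.natDegree_C_mul_X_pow_le _ _).trans ?_
    simp at hi; omega
  · intro z
    simp [psum, Polynomial.eval_finsetSum]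

lemma poly_psum (P : Polynomial ℂ) {D : ℕ} (h : P.natDegree ≤ D) (z : ℂ) :
    P.eval z = psum P.coeff (D + 1) z :=
  Polynomial.eval_eq_sum_range' (by omega) z

lemma differentiable_psum (a : ℕ → ℂ) (L : ℕ) : Differentiable ℂ (psum a L) := by
  unfold psum; fun_prop

lemma pow_sub_bound {x y : ℂ} (hx : ‖x‖ ≤ 1) (hy : ‖y‖ ≤ 1) (k : ℕ) :
    ‖x ^ k - y ^ k‖ ≤ k * ‖x - y‖ := by
  induction k with
  | zero => simp
  | succ k ih =>
    have : x ^ (k + 1) - y ^ (k + 1) = (x ^ k - y ^ k) * x + y ^ k * (x - y) := by ring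
    rw [this]
    refine (norm_add_le _ _).trans ?_
    rw [norm_mul, norm_mul, norm_pow]
    have h1 : ‖y‖ ^ k ≤ 1 := pow_le_one₀ (norm_nonneg _) hy
    have h2 := norm_nonneg (x - y)
    have h3 := norm_nonneg (x ^ k - y ^ k)
    push_cast
    nlinarith [norm_nonneg x]

/-- size of the partial sums on the disc of radius 10 -/
lemma psum_size {m n : ℕ → ℝ} {C t A σ ε B : ℝ} {p q : ℕ} {a : ℕ → ℂ}
    (hC : 1 ≤ C) (hm : ∀ k, 0 < m k) (hmn : ∀ k, m k ≤ n k)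
    (hmg : ∀ a b, m (a + b) ≤ C ^ (a + b) * m a * m b) (hA : 0 ≤ A) (hσ : 0 < σ)
    (hε : 0 < ε) (hB : 0 < B) (ht : t = B * ε) (hBσ : 20 * σ * C ^ q ≤ B)
    (hle : ∀ k ≤ p, n k * t ^ k ≤ 1)
    (ha : ∀ l, ‖a l‖ ≤ A * σ ^ l * m l) {z : ℂ} (hz : ‖z‖ ≤ 10) :
    ‖psum a ((q + 1) * p) (ε * z)‖ ≤ 2 * A := by
  have ht0 : 0 < t := by rw [ht]; positivity
  have hterm : ∀ l ∈ Finset.range ((q + 1) * p), ‖a l * (ε * z) ^ l‖ ≤ A * (1 / 2) ^ l := by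
    intro l hl
    have h1 := split1 hC ht0 hm hmn hmg hle q l (by simp at hl; omega)
    rw [norm_mul, norm_pow, norm_mul, Complex.norm_real, Real.norm_of_nonneg hε.le]
    have hCq : 0 < C ^ q := by positivity
    have h2 : 10 * σ / B * C ^ q ≤ 1 / 2 := by
      rw [div_mul_eq_mul_div, div_le_iff₀ hB]; linarith
    have h3 : ε = t / B := by rw [ht]; field_simp
    calc ‖a l‖ * (ε * ‖z‖) ^ l ≤ (A * σ ^ l * m l) * (ε * 10) ^ l := by
          gcongr
          · exact mul_nonneg (by positivity) (hm l).le
          · exact ha l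
      _ = A * (10 * σ / B) ^ l * (m l * t ^ l) := by
          rw [h3, div_pow, mul_pow, mul_pow, div_pow]; ring
      _ ≤ A * (10 * σ / B) ^ l * (C ^ q) ^ l := by gcongr
      _ = A * (10 * σ / B * C ^ q) ^ l := by rw [mul_pow (10 * σ / B)]; ring
      _ ≤ _ := by gcongr
  refine (norm_sum_le_of_le _ hterm).trans ?_
  rw [← Finset.mul_sum]
  have := (summable_geometric_two).sum_le_tsum (Finset.range ((q + 1) * p)) (fun i _ => by positivity)
  rw [tsum_geometric_two] at this
  nlinarith

lemma rem_size {m n : ℕ → ℝ} {C t A σ ε B ρ β : ℝ} {p q : ℕ} {a : ℕ → ℂ} {g : ℝ → ℂ}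
    (hC : 1 ≤ C) (hm : ∀ k, 0 < m k) (hmn : ∀ k, m k ≤ n k)
    (hmg : ∀ a b, m (a + b) ≤ C ^ (a + b) * m a * m b) (hA : 0 ≤ A) (hσ : 0 < σ)
    (hε : 0 < ε) (hB : 0 < B) (ht : t = B * ε) (hβ : 10 * σ * C ^ q ≤ β * B)
    (hρ : 10 * ε < ρ)
    (ha : TD m A σ ρ g a) {x : ℝ} (hx : |x| ≤ 10) :
    ‖g (ε * x) - psum a ((q + 1) * p) (ε * x)‖ ≤
      A * β ^ ((q + 1) * p) * (n p * t ^ p) ^ (q + 1) := by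
  have ht0 : 0 < t := by rw [ht]; positivity
  set L := (q + 1) * p with hL
  have h1 := split2 (p := p) hC ht0 hm hmn hmg q
  rw [← hL] at h1
  have hab : |ε * x| ≤ ε * 10 := by rw [abs_mul, abs_of_pos hε]; gcongr
  have h2 := ha.2 L (ε * x) (by linarith)
  push_cast at h2
  refine h2.trans ?_
  have h3 : ε = t / B := by rw [ht]; field_simp
  have h0 : 0 < n p * t ^ p := mul_pos ((hm p).trans_le (hmn p)) (by positivity)
  have hb : 10 * σ / B * C ^ q ≤ β := by
    rw [div_mul_eq_mul_div, div_le_iff₀ hB]; linarith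
  calc A * σ ^ L * m L * |ε * x| ^ L ≤ A * σ ^ L * m L * (ε * 10) ^ L := by
        gcongr
        exact mul_nonneg (by positivity) (hm L).le
    _ = A * (10 * σ / B) ^ L * (m L * t ^ L) := by
        rw [h3, div_pow, mul_pow, mul_pow, div_pow]; ring
    _ ≤ A * (10 * σ / B) ^ L * ((C ^ q) ^ L * (n p * t ^ p) ^ (q + 1)) := by gcongr
    _ = A * (10 * σ / B * C ^ q) ^ L * (n p * t ^ p) ^ (q + 1) := by
        rw [mul_pow (10 * σ / B)]; ring
    _ ≤ _ := by gcongr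

/-- holomorphic approximation at scale `ε` -/
lemma stepE {j : ℕ} (hj : 1 ≤ j) {m n : ℕ → ℝ} {C t A σ ε B ρ : ℝ} {p q : ℕ} {a b : ℕ → ℂ}
    {φ : ℝ → ℂ} (hq : q + 1 = 8 * j * (j + 1))
    (hC : 1 ≤ C) (hm : ∀ k, 0 < m k) (hmn : ∀ k, m k ≤ n k)
    (hmg : ∀ a b, m (a + b) ≤ C ^ (a + b) * m a * m b) (hA : 0 ≤ A)
    (hA1 : A * (12 * (j + 1)) ≤ 1) (hσ : 0 < σ)
    (hε : 0 < ε) (hB : 0 < B) (ht : t = B * ε) (hBσ : 3 ^ (j + 1) * (20 * σ * C ^ q) ≤ B)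
    (hle : ∀ k ≤ p, n k * t ^ k ≤ 1)
    (hρ : 10 * ε < ρ)
    (ha : TD m A σ ρ (fun s => φ s ^ j) a) (hb : TD m A σ ρ (fun s => φ s ^ (j + 1)) b) :
    ∃ F : ℂ → ℂ, DifferentiableOn ℂ F (Metric.ball 0 1) ∧
      (∀ w ∈ Metric.ball (0:ℂ) 1, ‖F w‖ ≤ 200 * (j + 1)) ∧
      ∀ x : ℝ, |x| < 1 → ‖φ (ε * x) - F x‖ ≤ 200 * (j + 1) * (n p * t ^ p) ^ 4 := by
  have ht0 : 0 < t := by rw [ht]; positivity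
  have hCq : 0 < C ^ q := by positivity
  have hj1 : (1:ℝ) ≤ j := by exact_mod_cast hj
  set τ := n p * t ^ p with hτ
  have hτ0 : 0 < τ := mul_pos ((hm p).trans_le (hmn p)) (by positivity)
  have hτ1 : τ ≤ 1 := hle p le_rfl
  set L := (q + 1) * p with hL
  set β : ℝ := 1 / 3 ^ (j + 1) with hβ
  have h3 : (0:ℝ) < 3 ^ (j + 1) := by positivity
  have h31 : (1:ℝ) ≤ 3 ^ (j + 1) := one_le_pow₀ (by norm_num)
  have hβ0 : 0 < β := by positivity
  have hβ1 : β ≤ 1 := by rw [hβ, div_le_one h3]; exact h31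
  have hBβ : 10 * σ * C ^ q ≤ β * B := by
    rw [hβ, div_mul_eq_mul_div, one_mul, le_div_iff₀ h3]
    have : 0 < 3 ^ (j + 1) * (σ * C ^ q) := by positivity
    nlinarith
  have hB20 : 20 * σ * C ^ q ≤ B := by
    refine le_trans ?_ hBσ
    have : 0 < 20 * σ * C ^ q := by positivity
    nlinarith
  set g : ℂ → ℂ := fun z => psum a L (ε * z) with hg
  set h : ℂ → ℂ := fun z => psum b L (ε * z) with hh
  have hgd : Differentiable ℂ g := (differentiable_psum a L).comp (by fun_prop)
  have hhd : Differentiable ℂ h := (differentiable_psum b L).comp (by fun_prop)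
  have hgs : ∀ z : ℂ, ‖z‖ ≤ 10 → ‖g z‖ ≤ 2 * A := fun z hz =>
    psum_size hC hm hmn hmg hA hσ hε hB ht hB20 hle ha.1 hz
  have hhs : ∀ z : ℂ, ‖z‖ ≤ 10 → ‖h z‖ ≤ 2 * A := fun z hz =>
    psum_size hC hm hmn hmg hA hσ hε hB ht hB20 hle hb.1 hz
  set δ := A * β ^ L * τ ^ (q + 1) with hδ
  have hA2 : A ≤ 1 / 24 := by nlinarith
  have hβL : β ^ L ≤ 1 := pow_le_one₀ hβ0.le hβ1
  have hτq : τ ^ (q + 1) ≤ 1 := pow_le_one₀ hτ0.le hτ1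
  have hδA : δ ≤ A := by
    rw [hδ, mul_assoc]
    exact mul_le_of_le_one_right hA (mul_le_one₀ hβL (by positivity) hτq)
  have hδ0 : 0 ≤ δ := by positivity
  have hge : ∀ x : ℝ, |x| ≤ 10 → ‖φ (ε * x) ^ j - g x‖ ≤ δ := fun x hx =>
    rem_size hC hm hmn hmg hA hσ hε hB ht hBβ hρ ha hx
  have hhe : ∀ x : ℝ, |x| ≤ 10 → ‖φ (ε * x) ^ (j + 1) - h x‖ ≤ δ := fun x hx =>
    rem_size hC hm hmn hmg hA hσ hε hB ht hBβ hρ hb hx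
  -- the polynomial `h ^ j - g ^ (j+1)`
  have hQreal : ∀ x : ℝ, |x| ≤ 10 → ‖h x ^ j - g x ^ (j + 1)‖ ≤ (1 / 3) * (β ^ L * τ ^ (q + 1)) := by
    intro x hx
    have hxn : ‖(x:ℂ)‖ ≤ 10 := by rw [Complex.norm_real]; exact hx
    have e1 := hge x hx
    have e2 := hhe x hx
    have e3 := hgs x hxn
    have e4 := hhs x hxn
    set G := φ (ε * x) ^ j with hG
    set H := φ (ε * x) ^ (j + 1) with hH
    have hGH : H ^ j = G ^ (j + 1) := by rw [hG, hH, ← pow_mul, ← pow_mul, mul_comm (j + 1) j]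
    have e5 : ‖G‖ ≤ 1 := by
      have := norm_add_le (G - g x) (g x)
      rw [sub_add_cancel] at this; linarith
    have e6 : ‖H‖ ≤ 1 := by
      have := norm_add_le (H - h x) (h x)
      rw [sub_add_cancel] at this; linarith
    have e7 := pow_sub_bound (x := h x) (y := H) (by linarith) e6 j
    have e8 := pow_sub_bound (x := G) (y := g x) e5 (by linarith) (j + 1)
    have e9 : h x ^ j - g x ^ (j + 1) = (h x ^ j - H ^ j) + (G ^ (j + 1) - g x ^ (j + 1)) := by
      rw [hGH]; ring
    rw [e9]
    refine (norm_add_le _ _).trans ?_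
    rw [norm_sub_rev] at e2
    push_cast at e8
    have e10 : ‖h x ^ j - H ^ j‖ + ‖G ^ (j + 1) - g x ^ (j + 1)‖ ≤ j * δ + (j + 1) * δ := by
      gcongr
      · refine e7.trans ?_; gcongr
      · refine e8.trans ?_; gcongr
    refine e10.trans ?_
    have e11 : 0 < β ^ L * τ ^ (q + 1) := by positivity
    have e12 : j * δ + (j + 1) * δ = ((2 * j + 1) * A) * (β ^ L * τ ^ (q + 1)) := by
      rw [hδ]; ring
    rw [e12]
    gcongr
    nlinarith
  have hQ : ∀ z : ℂ, ‖z‖ ≤ 10 → ‖h z ^ j - g z ^ (j + 1)‖ ≤ (τ ^ (8 * j)) ^ (j + 1) := by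
    obtain ⟨Pa, hPa, hPa'⟩ := psum_poly (fun l => a l * (ε:ℂ) ^ l) L
    obtain ⟨Pb, hPb, hPb'⟩ := psum_poly (fun l => b l * (ε:ℂ) ^ l) L
    have hdeg : (Pb ^ j - Pa ^ (j + 1)).natDegree ≤ (j + 1) * L := by
      refine (Polynomial.natDegree_sub_le _ _).trans (max_le ?_ ?_)
      · refine Polynomial.natDegree_pow_le.trans ?_
        nlinarith
      · exact Polynomial.natDegree_pow_le.trans (by gcongr)
    have hev : ∀ z, h z ^ j - g z ^ (j + 1) =
        psum (Pb ^ j - Pa ^ (j + 1)).coeff ((j + 1) * L + 1) z := by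
      intro z
      rw [← poly_psum _ hdeg]
      simp only [Polynomial.eval_sub, Polynomial.eval_pow, hPa', hPb', psum_scale, hg, hh]
    intro z hz
    rw [hev]
    refine (pc (by norm_num) (A := (1 / 3) * (β ^ L * τ ^ (q + 1))) ?_ hz).trans ?_
    · intro x hx
      rw [← hev]; exact hQreal x hx
    · rw [← pow_mul, hq, pow_succ, pow_mul, hβ]
      have : ((1:ℝ) / 3 ^ (j + 1)) ^ L = 1 / (3 ^ (j + 1)) ^ L := by rw [div_pow, one_pow]
      rw [this]
      apply le_of_eq
      field_simp
  obtain ⟨F, hF, hFb⟩ := lemD hj hgd hhd (r := τ ^ (8 * j)) (ϱ := τ ^ 4) (by positivity)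
    (pow_le_one₀ hτ0.le hτ1) (by rw [← pow_mul]; ring_nf)
    (fun z hz => (hgs z hz).trans (by linarith)) hQ
  refine ⟨F, hF, ?_, ?_⟩
  · intro w hw
    obtain ⟨h1, h2⟩ := hFb w hw
    have := norm_add_le (F w - uq g h (τ ^ (8 * j)) w) (uq g h (τ ^ (8 * j)) w)
    rw [sub_add_cancel] at this
    have h4 : 100 * (j + 1) * τ ^ 4 ≤ 100 * (j + 1 : ℝ) :=
      mul_le_of_le_one_right (by positivity) (pow_le_one₀ hτ0.le hτ1)
    linarith
  · intro x hx
    have hxb : (x:ℂ) ∈ Metric.ball (0:ℂ) 1 := by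
      rw [mem_ball_zero_iff, Complex.norm_real]; exact hx
    have hxn : ‖(x:ℂ)‖ ≤ 10 := by rw [Complex.norm_real]; exact (hx.trans (by norm_num)).le
    obtain ⟨h1, h2⟩ := hFb x hxb
    have h4 := val_lemma hj (φ := φ (ε * x)) (g := g x) (h := h x) (r := τ ^ (8 * j))
      (ϱ := τ ^ 4) (δ := δ) (by positivity)
      (pow_le_one₀ hτ0.le hτ1) (by rw [← pow_mul]; ring_nf) (by
        rw [hδ]
        have e1 : τ ^ (q + 1) ≤ τ ^ (8 * j) := by
          apply pow_le_pow_of_le_one hτ0.le hτ1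
          rw [hq]; nlinarith
        calc A * β ^ L * τ ^ (q + 1) ≤ 1 * 1 * τ ^ (q + 1) := by gcongr; linarith
          _ ≤ _ := by simpa using e1) ((hgs x hxn).trans (by linarith))
      (hge x (hx.le.trans (by norm_num))) (hhe x (hx.le.trans (by norm_num))) (hQ x hxn)
    have h5 : uq (fun _ => g x) (fun _ => h x) (τ ^ (8 * j)) 0 = uq g h (τ ^ (8 * j)) x := rfl
    rw [h5] at h4
    have h6 := norm_sub_le_norm_sub_add_norm_sub (φ (ε * x)) (uq g h (τ ^ (8 * j)) x) (F x)
    rw [norm_sub_rev (uq g h (τ ^ (8 * j)) x)] at h6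
    have h7 : 0 < τ ^ 4 := by positivity
    nlinarith

end JorisAux

set_option linter.unnecessarySeqFocus false
namespace JorisAux
open Complex

lemma nat_pow_self_le (k : ℕ) : (k:ℝ) ^ k ≤ 3 ^ k * k.factorial := by
  have h := Real.pow_div_factorial_le_exp (k:ℝ) (by positivity) k
  rw [div_le_iff₀ (by positivity)] at h
  refine h.trans ?_
  gcongr
  rw [← mul_one (k:ℝ), Real.exp_nat_mul]
  gcongr
  exact Real.exp_one_lt_three.le

/-- telescoping estimate for finite differences -/
lemma telescope {φ : ℝ → ℂ} {n : ℕ → ℝ} {τ : ℕ → ℝ} {D B ε : ℝ} {F : ℕ → ℂ → ℂ}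
    (hD : 1 ≤ D) (hB : 0 < B) (hε : 0 < ε) (hn : ∀ k, 1 ≤ n k)
    (hτ0 : ∀ i, 0 < τ i) (hτ1 : ∀ i, τ i ≤ 1) (hτm : ∀ i, τ (i + 1) ≤ τ i)
    (hτn : ∀ i k, τ i ≤ n k * (B * (ε * (1 / 2) ^ i)) ^ k)
    (hF : ∀ i, DifferentiableOn ℂ (F i) (Metric.ball 0 1))
    (hFb : ∀ i, ∀ w ∈ Metric.ball (0:ℂ) 1, ‖F i w‖ ≤ D)
    (hFφ : ∀ i, ∀ x : ℝ, |x| < 1 → ‖φ (ε * (1 / 2) ^ i * x) - F i x‖ ≤ D * τ i ^ 4)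
    {k : ℕ} (hk : 1 ≤ k) {s : ℝ} (hs : 0 < s) (hsk : 100 * (k * s) ≤ ε) :
    ‖fd k (fun i => φ (i * s))‖ ≤
      (D * (2 + 44 * n 1 * B * ε)) * (432 * (B + 1 / ε)) ^ k * n k * (k * s) ^ k := by
  have hks : 0 < k * s := by
    have : (0:ℝ) < k := by exact_mod_cast hk
    positivity
  obtain ⟨I, hI1, hI2⟩ := exists_nat_pow_near_of_lt_one (x := 100 * (k * s) / ε) (y := (1/2:ℝ))
    (by positivity) (by rw [div_le_one hε]; exact hsk) (by norm_num) (by norm_num)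
  set e : ℕ → ℝ := fun i => ε * (1 / 2) ^ i with he
  have he0 : ∀ i, 0 < e i := fun i => by simp only [he]; positivity
  have hes : ∀ i, e (i + 1) = e i / 2 := fun i => by simp only [he, pow_succ]; ring
  have hI1' : e I < 200 * (k * s) := by
    rw [lt_div_iff₀ hε, pow_succ] at hI1
    simp only [he]; linarith
  have hI2' : 100 * (k * s) ≤ e I := by
    rw [div_le_iff₀ hε] at hI2; simp only [he]; linarith
  have hei : ∀ i ≤ I, 100 * (k * s) ≤ e i := by
    intro i hi
    refine hI2'.trans ?_
    simp only [he]
    have : (1/2:ℝ) ^ I ≤ (1/2) ^ i := pow_le_pow_of_le_one (by norm_num) (by norm_num) hi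
    gcongr
  set G : ℕ → ℂ → ℂ := fun i z => F (i + 1) z - F i (z / 2) with hG
  have hhalf : ∀ z ∈ Metric.ball (0:ℂ) 1, z / 2 ∈ Metric.ball (0:ℂ) 1 := by
    intro z hz
    rw [mem_ball_zero_iff] at hz ⊢
    rw [norm_div, Complex.norm_ofNat]; linarith [norm_nonneg z]
  have hGd : ∀ i, DifferentiableOn ℂ (G i) (Metric.ball 0 1) := by
    intro i
    refine (hF (i + 1)).sub ((hF i).comp (by fun_prop) hhalf)
  have hGb : ∀ i, ∀ z ∈ Metric.ball (0:ℂ) 1, ‖G i z‖ ≤ 2 * D := by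
    intro i z hz
    refine (norm_sub_le _ _).trans ?_
    linarith [hFb (i + 1) z hz, hFb i _ (hhalf z hz)]
  have hGr : ∀ i, ∀ x : ℝ, |x| < 1 → ‖G i x‖ ≤ 2 * D * τ i ^ 4 := by
    intro i x hx
    have h1 := hFφ (i + 1) x hx
    have h2 := hFφ i (x / 2) (by rw [abs_div, abs_two]; linarith [abs_nonneg x])
    have h3 : ε * (1 / 2) ^ (i + 1) * x = ε * (1 / 2) ^ i * (x / 2) := by rw [pow_succ]; ring
    rw [h3] at h1
    push_cast at h2
    have h4 : G i x = (φ (ε * (1 / 2) ^ i * (x / 2)) - F i (x / 2)) -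
      (φ (ε * (1 / 2) ^ i * (x / 2)) - F (i + 1) x) := by simp only [hG]; ring
    rw [h4]
    refine (norm_sub_le _ _).trans ?_
    have h5 : τ (i + 1) ^ 4 ≤ τ i ^ 4 := by
      have := (hτ0 (i + 1)).le
      gcongr; exact hτm i
    nlinarith
  have hGs : ∀ i, ∀ z ∈ Metric.ball (0:ℂ) (1/54), ‖G i z‖ ≤ 22 * D * τ i ^ 2 := by
    intro i z hz
    have hD2 : (0:ℝ) < 2 * D := by linarith
    have hnD : ‖((2 * D : ℝ) : ℂ)⁻¹‖ = (2 * D)⁻¹ := by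
      rw [norm_inv, Complex.norm_real, Real.norm_of_nonneg hD2.le]
    have h := two_const (G := fun z => ((2 * D : ℝ) : ℂ)⁻¹ * G i z) ((hGd i).const_mul _)
      (by
        intro w hw
        rw [norm_mul, hnD, inv_mul_le_iff₀ hD2, mul_one]; exact hGb i w hw)
      (κ := τ i ^ 2) (pow_pos (hτ0 i) 2) (pow_le_one₀ (hτ0 i).le (hτ1 i))
      (by
        intro x hx
        rw [norm_mul, hnD, inv_mul_le_iff₀ hD2, ← pow_mul]; exact hGr i x hx)
      (z := z) (by rw [mem_ball_zero_iff] at hz; exact hz.le)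
    rw [norm_mul, hnD, inv_mul_le_iff₀ hD2] at h
    linarith
  have htel : ∀ (x : ℝ) (J : ℕ), φ x = F 0 ((x / e 0 : ℝ) : ℂ) +
      ∑ i ∈ Finset.range J, G i ((x / e (i + 1) : ℝ) : ℂ) + (φ x - F J ((x / e J : ℝ) : ℂ)) := by
    intro x J
    induction J with
    | zero => simp
    | succ J ih =>
      rw [Finset.sum_range_succ]
      have h1 : ((x / e (J + 1) : ℝ) : ℂ) / 2 = ((x / e J : ℝ) : ℂ) := by
        rw [hes]; push_cast
        have : (e J : ℂ) ≠ 0 := by exact_mod_cast (he0 J).ne'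
        field_simp
      simp only [hG, h1]
      nth_rw 1 [ih]
      ring
  have hfd : fd k (fun i => φ (i * s)) = fd k (fun i => F 0 ((i * (s / e 0) : ℝ) : ℂ)) +
      ∑ l ∈ Finset.range I, fd k (fun i => G l ((i * (s / e (l + 1)) : ℝ) : ℂ)) +
      fd k (fun i => φ (i * s) - F I ((i * (s / e I) : ℝ) : ℂ)) := by
    rw [← fd_sum, ← fd_add, ← fd_add]
    apply fd_congr
    intro i _
    have := htel (i * s) I
    simp only [mul_div_assoc] at this
    exact this
  have hn0 : 0 < n k := by linarith [hn k]
  have hn1 : 0 < n 1 := by linarith [hn 1]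
  set X := (432 * (B + 1 / ε)) ^ k * n k * (k * s) ^ k with hX
  have hX0 : 0 < X := by positivity
  have t1 : ‖fd k (fun i => F 0 ((i * (s / e 0) : ℝ) : ℂ))‖ ≤ D * X := by
    have h1 : k * (s / e 0) < 1 := by
      rw [← mul_div_assoc, div_lt_one (he0 0)]
      linarith [hei 0 (Nat.zero_le _)]
    refine (fd_holo one_pos (hF 0) (hFb 0) (div_nonneg hs.le (he0 0).le) h1).trans ?_
    gcongr
    have e0 : e 0 = ε := by simp [he]
    rw [e0, hX]
    calc (4 * (k * (s / ε)) / 1) ^ k = (4 * (1 / ε)) ^ k * 1 * (k * s) ^ k := by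
          rw [mul_one, ← mul_pow]; congr 1; ring
      _ ≤ _ := by
        gcongr
        · norm_num
        · linarith
        · exact hn k
  have t2 : ∀ l ∈ Finset.range I, ‖fd k (fun i => G l ((i * (s / e (l + 1)) : ℝ) : ℂ))‖ ≤
      (22 * D * n 1 * B * X * ε) * (1 / 2) ^ l := by
    intro l hl
    have hl' : l + 1 ≤ I := by simpa using hl
    have h1 : k * (s / e (l + 1)) < 1 / 54 := by
      rw [← mul_div_assoc, div_lt_iff₀ (he0 _)]
      linarith [hei _ hl']
    refine (fd_holo (by norm_num) ((hGd l).mono (Metric.ball_subset_ball (by norm_num))) (hGs l)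
      (div_nonneg hs.le (he0 _).le) h1).trans ?_
    have h2 : 4 * (k * (s / e (l + 1))) / (1 / 54) = 432 * (k * s) / e l := by
      rw [hes]; have := (he0 l).ne'; field_simp; ring
    rw [h2]
    have h3 : τ l ^ 2 ≤ (n k * (B * e l) ^ k) * (n 1 * (B * e l) ^ 1) := by
      rw [sq]
      exact mul_le_mul (hτn l k) (hτn l 1) (hτ0 l).le
        (mul_nonneg hn0.le (pow_nonneg (mul_nonneg hB.le (he0 l).le) _))
    have h4 : 0 < 432 * (k * s) / e l := div_pos (by positivity) (he0 l)
    calc 22 * D * τ l ^ 2 * (432 * (k * s) / e l) ^ k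
        ≤ 22 * D * ((n k * (B * e l) ^ k) * (n 1 * (B * e l) ^ 1)) * (432 * (k * s) / e l) ^ k := by
          gcongr
      _ = 22 * D * n 1 * B * ((432 * B) ^ k * n k * (k * s) ^ k) * e l := by
          rw [div_pow, mul_pow B, mul_pow 432 B, mul_pow 432 (k * s)]
          have := (pow_pos (he0 l) k).ne'
          field_simp
      _ ≤ 22 * D * n 1 * B * X * e l := by
          have := he0 l
          have hb : B ≤ B + 1 / ε := by
            have : 0 < 1 / ε := by positivity
            linarith
          rw [hX]
          gcongr
      _ = _ := by simp only [he]; ring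
  have t3 : ‖fd k (fun i => φ (i * s) - F I ((i * (s / e I) : ℝ) : ℂ))‖ ≤ D * X := by
    have h1 : ∀ i ≤ k, ‖φ (i * s) - F I ((i * (s / e I) : ℝ) : ℂ)‖ ≤ D * τ I ^ 4 := by
      intro i hi
      have hik : (i:ℝ) ≤ k := by exact_mod_cast hi
      have h0 : 0 ≤ i * (s / e I) := mul_nonneg (by positivity) (div_nonneg hs.le (he0 I).le)
      have := hFφ I (i * (s / e I)) (by
        rw [abs_of_nonneg h0, ← mul_div_assoc, div_lt_one (he0 I)]
        nlinarith)
      have h2 : ε * (1 / 2) ^ I * (i * (s / e I)) = i * s := by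
        change e I * (i * (s / e I)) = i * s
        have := (he0 I).ne'
        field_simp
      rwa [h2] at this
    refine (fd_bound h1).trans ?_
    have h2 : τ I ^ 4 ≤ n k * (B * e I) ^ k := by
      refine le_trans ?_ (hτn I k)
      calc τ I ^ 4 ≤ τ I ^ 1 := pow_le_pow_of_le_one (hτ0 I).le (hτ1 I) (by norm_num)
        _ = _ := pow_one _
    calc 2 ^ k * (D * τ I ^ 4) ≤ 2 ^ k * (D * (n k * (B * e I) ^ k)) := by gcongr
      _ ≤ 2 ^ k * (D * (n k * (B * (200 * (k * s))) ^ k)) := by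
          have := (he0 I).le
          gcongr
      _ = D * ((400 * B) ^ k * n k * (k * s) ^ k) := by
          have : (400 * B) ^ k * (k * s) ^ k = 2 ^ k * (B * (200 * (k * s))) ^ k := by
            rw [← mul_pow, ← mul_pow]; congr 1; ring
          linear_combination (- D * n k) * this
      _ ≤ _ := by
          rw [hX]
          have : 0 < 1 / ε := by positivity
          gcongr
          · norm_num
          · linarith
  rw [hfd]
  refine (norm_add_le _ _).trans ((add_le_add ((norm_add_le _ _).trans
    (add_le_add t1 (norm_sum_le_of_le _ t2))) t3).trans ?_)
  rw [← Finset.mul_sum]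
  have h9 := (summable_geometric_two).sum_le_tsum (Finset.range I) (fun i _ => by positivity)
  rw [tsum_geometric_two] at h9
  have h10 : 0 < 22 * D * n 1 * B * X * ε := by positivity
  calc D * X + 22 * D * n 1 * B * X * ε * ∑ i ∈ Finset.range I, (1 / 2) ^ i + D * X
      ≤ D * X + 22 * D * n 1 * B * X * ε * 2 + D * X := by gcongr
    _ = _ := by rw [hX]; ring

lemma TD_scale {m : ℕ → ℝ} {A σ ρ c : ℝ} {g : ℝ → ℂ} {a : ℕ → ℂ} (hc : 1 ≤ c)
    (h : TD m A σ ρ g a) {A' : ℝ} (hA : A ≤ A' * c) (hm : ∀ k, 0 < m k) (hσ : 0 < σ) :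
    TD m A' σ ρ (fun s => (c:ℂ)⁻¹ * g s) (fun l => (c:ℂ)⁻¹ * a l) := by
  have hc0 : 0 < c := by linarith
  have hn : ‖(c:ℂ)⁻¹‖ = c⁻¹ := by
    rw [norm_inv, Complex.norm_real, Real.norm_of_nonneg hc0.le]
  have hp : ∀ L, psum (fun l => (c:ℂ)⁻¹ * a l) L = fun z => (c:ℂ)⁻¹ * psum a L z := by
    intro L; ext z; simp only [psum, Finset.mul_sum, mul_assoc]
  constructor
  · intro l
    rw [norm_mul, hn, inv_mul_le_iff₀ hc0]
    refine (h.1 l).trans ?_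
    have := hm l
    calc A * σ ^ l * m l ≤ (A' * c) * σ ^ l * m l := by gcongr
      _ = _ := by ring
  · intro L s hs
    rw [hp, ← mul_sub, norm_mul, hn, inv_mul_le_iff₀ hc0]
    refine (h.2 L s hs).trans ?_
    have := hm L
    calc A * σ ^ L * m L * |s| ^ L ≤ (A' * c) * σ ^ L * m L * |s| ^ L := by gcongr
      _ = _ := by ring

/-- the one dimensional finite-difference estimate, uniform in `φ` -/
lemma oneD {j : ℕ} (hj : 1 ≤ j) {m n : ℕ → ℝ} {C A σ ρ : ℝ}
    (hC : 1 ≤ C) (hm : ∀ k, 0 < m k) (hmn : ∀ k, m k ≤ n k)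
    (hmg : ∀ a b, m (a + b) ≤ C ^ (a + b) * m a * m b) (hσ : 0 < σ) (hρ : 0 < ρ)
    (hn0 : n 0 = 1) (hn1 : ∀ k, 1 ≤ n k)
    (hlc : ∀ k, n (k + 1) ^ 2 ≤ n k * n (k + 2))
    (hlim : ∀ c : ℝ, ∃ k, c * n k ≤ n (k + 1)) :
    ∃ K S : ℝ, 0 < K ∧ 0 < S ∧ ∀ k : ℕ, ∃ s₀ > 0, ∀ (φ : ℝ → ℂ) (a b : ℕ → ℂ),
      TD m A σ ρ (fun s => φ s ^ j) a → TD m A σ ρ (fun s => φ s ^ (j + 1)) b →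
      ∀ s, 0 < s → s ≤ s₀ →
        ‖fd k (fun i => φ (i * s))‖ ≤ K * S ^ k * (n k * k.factorial) * s ^ k := by
  have hnpos : ∀ k, 0 < n k := fun k => by linarith [hn1 k]
  have hj0 : (0:ℝ) < j + 1 := by positivity
  obtain ⟨lam, hlam1, hlamA⟩ : ∃ lam : ℝ, 1 ≤ lam ∧ A ≤ (1 / (12 * (j + 1 : ℝ))) * lam := by
    refine ⟨max 1 (12 * (j + 1) * A), le_max_left _ _, ?_⟩
    rw [one_div, ← div_eq_inv_mul, le_div_iff₀ (by positivity)]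
    have := le_max_right 1 (12 * (j + 1 : ℝ) * A)
    linarith
  have hlam0 : 0 < lam := by linarith
  obtain ⟨q, hq⟩ : ∃ q, q + 1 = 8 * j * (j + 1) := by
    refine ⟨8 * j * (j + 1) - 1, Nat.sub_add_cancel ?_⟩
    nlinarith
  set B : ℝ := 3 ^ (j + 1) * (20 * σ * C ^ q) with hB
  have hB0 : 0 < B := by positivity
  set ε : ℝ := ρ / 20 with hε
  have hε0 : 0 < ε := by positivity
  choose! p hp1 hp2 using fun (t : ℝ) (ht : 0 < t) => min_index hnpos hlc hlim ht
  set D : ℝ := 200 * (j + 1) with hD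
  have hD1 : 1 ≤ D := by rw [hD]; nlinarith
  set t : ℕ → ℝ := fun i => B * (ε * (1 / 2) ^ i) with ht
  have ht0 : ∀ i, 0 < t i := fun i => by simp only [ht]; positivity
  set τ : ℕ → ℝ := fun i => n (p (t i)) * t i ^ (p (t i)) with hτ
  have hτ0 : ∀ i, 0 < τ i := fun i => mul_pos (hnpos _) (pow_pos (ht0 i) _)
  have hτ1 : ∀ i, τ i ≤ 1 := fun i => by
    have := hp1 _ (ht0 i) 0
    simpa [hn0] using this
  have hτm : ∀ i, τ (i + 1) ≤ τ i := fun i => by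
    refine (hp1 _ (ht0 (i + 1)) (p (t i))).trans ?_
    have h1 := (hnpos (p (t i))).le
    have h2 := (ht0 (i + 1)).le
    have h3 : t (i + 1) ≤ t i := by
      simp only [ht, pow_succ]
      have : 0 < B * (ε * (1 / 2) ^ i) := by positivity
      nlinarith
    simp only [hτ]
    gcongr
  have hτn : ∀ i k, τ i ≤ n k * (B * (ε * (1 / 2) ^ i)) ^ k := fun i k => hp1 _ (ht0 i) k
  refine ⟨lam * (D * (2 + 44 * n 1 * B * ε)), 3 * (432 * (B + 1 / ε)), ?_, by positivity, ?_⟩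
  · have := hnpos 1
    positivity
  intro k
  refine ⟨ε / (100 * (k + 1)), by positivity, ?_⟩
  intro φ a b ha hb s hs hss
  have hle : ∀ i, ∀ k ≤ p (t i), n k * t i ^ k ≤ 1 := fun i k hk => by
    have := hp2 _ (ht0 i) k hk 0 (Nat.zero_le _)
    simpa [hn0] using this
  set ψ : ℝ → ℂ := fun s => (lam:ℂ)⁻¹ * φ s with hψ
  have hsc : ∀ i, 1 ≤ i → A ≤ (1 / (12 * (j + 1 : ℝ))) * lam ^ i := by
    intro i hi
    refine hlamA.trans ?_
    gcongr
    exact le_self_pow₀ hlam1 (by omega)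
  have ha' := TD_scale (one_le_pow₀ hlam1) ha (hsc j hj) hm hσ
  have hb' := TD_scale (one_le_pow₀ hlam1) hb (hsc (j + 1) (by omega)) hm hσ
  have hea : (fun s => ((lam ^ j : ℝ):ℂ)⁻¹ * φ s ^ j) = fun s => ψ s ^ j := by
    ext s; simp only [hψ, mul_pow, inv_pow]; push_cast; rfl
  have heb : (fun s => ((lam ^ (j + 1) : ℝ):ℂ)⁻¹ * φ s ^ (j + 1)) = fun s => ψ s ^ (j + 1) := by
    ext s; simp only [hψ, mul_pow, inv_pow]; push_cast; rfl
  rw [hea] at ha'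
  rw [heb] at hb'
  have hstep : ∀ i, _ := fun i => stepE hj (ε := ε * (1 / 2) ^ i) (B := B) (t := t i) (p := p (t i))
    (q := q) hq hC hm hmn hmg
    (by positivity) (by apply le_of_eq; field_simp) hσ (by positivity) hB0 rfl le_rfl (hle i) (by
      have : (1/2:ℝ) ^ i ≤ 1 := pow_le_one₀ (by norm_num) (by norm_num)
      have : ε * (1/2) ^ i ≤ ε := mul_le_of_le_one_right hε0.le this
      linarith) ha' hb'
  choose F hF hFb hFφ using hstep
  have hψφ : ∀ s, φ s = (lam:ℂ) * ψ s := fun s => by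
    simp only [hψ]; rw [mul_inv_cancel_left₀]; exact_mod_cast hlam0.ne'
  have hfd : fd k (fun i => φ (i * s)) = lam * fd k (fun i => ψ (i * s)) := by
    simp only [hψφ]; exact fd_const_mul _ _ _
  rw [hfd, norm_mul, Complex.norm_real, Real.norm_of_nonneg hlam0.le]
  have hn1' := hnpos 1
  rcases Nat.eq_zero_or_pos k with hk | hk
  · subst hk
    simp only [fd, zero_add, Finset.range_one, Finset.sum_singleton, Nat.choose_self]
    simp only [CharP.cast_eq_zero, zero_mul, pow_zero, Nat.sub_zero, Nat.cast_one, mul_one, one_mul,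
      Nat.factorial_zero, hn0]
    have h1 := hFφ 0 0 (by simp)
    have h2 := hFb 0 0 (Metric.mem_ball_self one_pos)
    simp only [mul_zero, Complex.ofReal_zero] at h1
    have h3 := norm_add_le (ψ 0 - F 0 0) (F 0 0)
    rw [sub_add_cancel] at h3
    have h4 : τ 0 ^ 4 ≤ 1 := pow_le_one₀ (hτ0 0).le (hτ1 0)
    have h5 : ‖ψ 0 - F 0 0‖ ≤ D := h1.trans (mul_le_of_le_one_right (by positivity) h4)
    gcongr
    have h6 : 0 < D * (44 * n 1 * B * ε) := by positivity
    linarith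
  · have h := telescope hD1 hB0 hε0 hn1 hτ0 hτ1 hτm hτn hF hFb hFφ hk hs (by
      rw [le_div_iff₀ (by positivity)] at hss
      linarith)
    calc lam * ‖fd k (fun i => ψ (i * s))‖
        ≤ lam * ((D * (2 + 44 * n 1 * B * ε)) * (432 * (B + 1 / ε)) ^ k * n k * (k * s) ^ k) := by
          gcongr
      _ = lam * (D * (2 + 44 * n 1 * B * ε)) * (432 * (B + 1 / ε)) ^ k * n k * s ^ k * k ^ k := by
          rw [mul_pow (k:ℝ)]; ring
      _ ≤ lam * (D * (2 + 44 * n 1 * B * ε)) * (432 * (B + 1 / ε)) ^ k * n k * s ^ k *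
            (3 ^ k * k.factorial) := by
          have := hnpos k
          gcongr
          exact nat_pow_self_le k
      _ = _ := by rw [mul_pow 3]; ring

end JorisAux

set_option linter.unnecessarySeqFocus false
namespace JorisAux
open Complex

section sym
variable {E F : Type*} [NormedAddCommGroup E] [NormedSpace ℝ E] [NormedAddCommGroup F]
  [NormedSpace ℝ F]

lemma smooth_iter {f : E → F} (hf : ContDiff ℝ (⊤ : ℕ∞) f) (n : ℕ) :
    ContDiff ℝ (⊤ : ℕ∞) (iteratedFDeriv ℝ n f) :=
  hf.iteratedFDeriv_right (by
    have : ((⊤ : ℕ∞) : WithTop ℕ∞) + (n : WithTop ℕ∞) = ((⊤ + n : ℕ∞) : WithTop ℕ∞) := rfl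
    rw [this, top_add])

lemma app_multi {n : ℕ} {G : E → ContinuousMultilinearMap ℝ (fun _ : Fin n => E) F}
    {G' : E →L[ℝ] ContinuousMultilinearMap ℝ (fun _ : Fin n => E) F} {x : E}
    (h : HasFDerivAt G G' x) (u : Fin n → E) (w : E) :
    fderiv ℝ (fun y => G y u) x w = G' w u := by
  have h1 := ((ContinuousMultilinearMap.apply ℝ (fun _ : Fin n => E) F u).hasFDerivAt
        (x := G x)).comp x h
  have h3 : (fun y => G y u) = (ContinuousMultilinearMap.apply ℝ (fun _ : Fin n => E) F u) ∘ G := rfl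
  rw [h3, h1.fderiv]; rfl

lemma app_lin {X : Type*} [NormedAddCommGroup X] [NormedSpace ℝ X] {H : E → E →L[ℝ] X}
    {H' : E →L[ℝ] E →L[ℝ] X} {x : E} (h : HasFDerivAt H H' x) (u : E) :
    HasFDerivAt (fun y => H y u) ((ContinuousLinearMap.apply ℝ X u).comp H') x :=
  (ContinuousLinearMap.hasFDerivAt (ContinuousLinearMap.apply ℝ X u)).comp x h

lemma key_two {f : E → F} (hf : ContDiff ℝ (⊤ : ℕ∞) f) (n : ℕ) (x : E) (u : Fin (n + 2) → E) :
    iteratedFDeriv ℝ (n + 2) f x u =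
      (fderiv ℝ (fderiv ℝ (iteratedFDeriv ℝ n f)) x (u 0) (u 1)) (Fin.tail (Fin.tail u)) := by
  have hdf : Differentiable ℝ (iteratedFDeriv ℝ (n + 1) f) :=
      (smooth_iter hf (n + 1)).differentiable (by simp)
  rw [iteratedFDeriv_succ_apply_left, ← app_multi (hdf x).hasFDerivAt]
  have hd0 : ContDiff ℝ (⊤ : ℕ∞) (iteratedFDeriv ℝ n f) := smooth_iter hf n
  have hdd : DifferentiableAt ℝ (fderiv ℝ (iteratedFDeriv ℝ n f)) x :=
    ((hd0.fderiv_right (m := (⊤ : ℕ∞)) (by simp)).differentiable (by simp)) x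
  have e1 : (fun y => iteratedFDeriv ℝ (n + 1) f y (Fin.tail u)) =
      fun y => (fderiv ℝ (iteratedFDeriv ℝ n f) y (u 1)) (Fin.tail (Fin.tail u)) := by
    ext y
    rw [iteratedFDeriv_succ_apply_left]; rfl
  rw [e1, app_multi (app_lin hdd.hasFDerivAt (u 1))]
  rfl

/-- the iterated derivative of a smooth function is invariant under adjacent swaps -/
lemma sym_swap {f : E → F} (hf : ContDiff ℝ (⊤ : ℕ∞) f) (n : ℕ) :
    ∀ (i : Fin n) (x : E) (v : Fin (n + 1) → E),
    iteratedFDeriv ℝ (n + 1) f x (v ∘ Equiv.swap i.castSucc i.succ) =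
      iteratedFDeriv ℝ (n + 1) f x v := by
  induction n with
  | zero => intro i; exact i.elim0
  | succ n ih =>
    intro i x v
    have hdf : Differentiable ℝ (iteratedFDeriv ℝ (n + 1) f) :=
      (smooth_iter hf (n + 1)).differentiable (by simp)
    have happ : ∀ (w : E) (u : Fin (n + 1) → E), (fderiv ℝ (iteratedFDeriv ℝ (n + 1) f) x w) u =
        fderiv ℝ (fun y => iteratedFDeriv ℝ (n + 1) f y u) x w := by
      exact fun w u => (app_multi (hdf x).hasFDerivAt u w).symm
    refine Fin.cases ?_ (fun i => ?_) i
    · -- swap of the first two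
      have hd0 : ContDiff ℝ (⊤ : ℕ∞) (iteratedFDeriv ℝ n f) := smooth_iter hf n
      have hsym : IsSymmSndFDerivAt ℝ (iteratedFDeriv ℝ n f) x :=
        (hd0.contDiffAt).isSymmSndFDerivAt (by
          rw [minSmoothness_of_isRCLikeNormedField]
          exact WithTop.coe_le_coe.2 (le_top (a := (2 : ℕ∞))))
      have key : ∀ u : Fin (n + 2) → E, iteratedFDeriv ℝ (n + 2) f x u =
          (fderiv ℝ (fderiv ℝ (iteratedFDeriv ℝ n f)) x (u 0) (u 1)) (Fin.tail (Fin.tail u)) := by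
        exact fun u => key_two hf n x u
      rw [key, key]
      have e0 : (v ∘ Equiv.swap (Fin.castSucc 0) (Fin.succ 0)) 0 = v 1 := by simp
      have e1 : (v ∘ Equiv.swap (Fin.castSucc (0 : Fin (n + 1))) (Fin.succ 0)) 1 = v 0 := by simp
      have e2 : Fin.tail (Fin.tail (v ∘ Equiv.swap (Fin.castSucc (0 : Fin (n + 1))) (Fin.succ 0))) =
          Fin.tail (Fin.tail v) := by
        ext k
        simp only [Fin.tail, Function.comp]
        rw [Equiv.swap_apply_of_ne_of_ne]
        · simp [Fin.ext_iff]
        · simp [Fin.ext_iff]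
      rw [e0, e1, e2, hsym.eq]
    · rw [iteratedFDeriv_succ_apply_left, iteratedFDeriv_succ_apply_left, happ, happ]
      have e0 : (v ∘ Equiv.swap (Fin.castSucc i.succ) (Fin.succ i.succ)) 0 = v 0 := by
        simp only [Function.comp]
        rw [Equiv.swap_apply_of_ne_of_ne]
        · simp [Fin.ext_iff]
        · simp [Fin.ext_iff]
      have e1 : Fin.tail (v ∘ Equiv.swap (Fin.castSucc i.succ) (Fin.succ i.succ)) =
          (Fin.tail v) ∘ Equiv.swap i.castSucc i.succ := by
        ext k
        simp only [Fin.tail, Function.comp]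
        congr 1
        rw [Fin.castSucc_succ]
        exact ((Fin.succ_injective _).swap_apply _ _ _)
      rw [e0, e1]
      congr 2
      ext y
      exact ih i y _

lemma sym_perm {f : E → F} (hf : ContDiff ℝ (⊤ : ℕ∞) f) {n : ℕ} (x : E) (σ : Equiv.Perm (Fin n)) :
    ∀ v : Fin n → E, iteratedFDeriv ℝ n f x (v ∘ σ) = iteratedFDeriv ℝ n f x v := by
  cases n with
  | zero => intro v; congr 1; ext i; exact i.elim0
  | succ n =>
    have hσ : σ ∈ Submonoid.closure (Set.range fun i : Fin n => Equiv.swap i.castSucc i.succ) := by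
      rw [Equiv.Perm.mclosure_swap_castSucc_succ]; trivial
    induction hσ using Submonoid.closure_induction with
    | mem σ h =>
      obtain ⟨i, rfl⟩ := h
      intro v; exact sym_swap hf n i x v
    | one => intro v; rfl
    | mul σ τ _ _ h1 h2 =>
      intro v
      have : v ∘ (σ * τ : Equiv.Perm _) = (v ∘ σ) ∘ τ := rfl
      rw [this, h2, h1]

/-- polarization inequality -/
lemma polar {k : ℕ} (L : ContinuousMultilinearMap ℝ (fun _ : Fin k => E) F)
    (hsym : ∀ (σ : Equiv.Perm (Fin k)) (v : Fin k → E), L (v ∘ σ) = L v) {B : ℝ} (hB : 0 ≤ B)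
    (hL : ∀ v : E, ‖v‖ ≤ 1 → ‖L (fun _ => v)‖ ≤ B) : ‖L‖ ≤ 3 ^ k * B := by
  classical
  -- the sign sums
  set T : Finset (Fin k → ℝ) := Fintype.piFinset (fun _ : Fin k => ({-1, 1} : Finset ℝ)) with hT
  have hTabs : ∀ c ∈ T, ∀ i, |c i| = 1 := by
    intro c hc i
    have := Fintype.mem_piFinset.1 hc i
    simp only [Finset.mem_insert, Finset.mem_singleton] at this
    rcases this with h | h <;> simp [h]
  have hTcard : T.card = 2 ^ k := by
    rw [hT, Fintype.card_piFinset_const]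
    congr 1
    rw [Finset.card_pair]; norm_num
  have hsum : ∀ r : Fin k → Fin k, ∑ c ∈ T, (∏ i, c i) * ∏ i, c (r i) =
      if Function.Bijective r then (2:ℝ) ^ k else 0 := by
    intro r
    have h1 : ∀ c : Fin k → ℝ, (∏ i, c i) * ∏ i, c (r i) =
        ∏ i, c i ^ (1 + (Finset.univ.filter (fun l => r l = i)).card) := by
      intro c
      have : ∏ i, c (r i) = ∏ i, c i ^ ((Finset.univ.filter (fun l => r l = i)).card) := by
        rw [← Finset.prod_fiberwise (s := Finset.univ) (g := r)]
        apply Finset.prod_congr rfl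
        intro i _
        rw [Finset.prod_congr rfl (g := fun _ => c i)]
        · rw [Finset.prod_const]
        · intro l hl; rw [(Finset.mem_filter.1 hl).2]
      rw [this, ← Finset.prod_mul_distrib]
      apply Finset.prod_congr rfl
      intro i _; rw [pow_add, pow_one]
    simp only [h1]
    rw [hT, ← Finset.prod_univ_sum (fun _ : Fin k => ({-1, 1} : Finset ℝ))
      (fun i y => y ^ (1 + (Finset.univ.filter (fun l => r l = i)).card))]
    split_ifs with hr
    · have : ∀ i, (Finset.univ.filter (fun l => r l = i)).card = 1 := by
        intro i
        rw [Finset.card_eq_one]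
        obtain ⟨l, hl, hl'⟩ := hr.existsUnique i
        refine ⟨l, ?_⟩
        ext y
        simp only [Finset.mem_filter, Finset.mem_univ, true_and, Finset.mem_singleton]
        exact ⟨fun h => hl' y h, fun h => h ▸ hl⟩
      simp only [this]
      rw [Finset.prod_congr rfl (g := fun _ => (2:ℝ))]
      · simp
      · intro i _
        rw [Finset.sum_pair (by norm_num)]; norm_num
    · have hns : ¬ Function.Surjective r := fun h => hr (Finite.injective_iff_surjective.2 h |>.bijective_of_finite)
      simp only [Function.Surjective] at hns
      push Not at hns
      obtain ⟨i, hi⟩ := hns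
      apply Finset.prod_eq_zero (Finset.mem_univ i)
      have : (Finset.univ.filter (fun l => r l = i)).card = 0 := by
        rw [Finset.card_eq_zero, Finset.filter_eq_empty_iff]
        intro l _; exact hi l
      rw [this, Finset.sum_pair (by norm_num)]; norm_num
  -- polarization identity
  have hid : ∀ v : Fin k → E, ∑ c ∈ T, (∏ i, c i) • L (fun _ => ∑ i, c i • v i) =
      ((2:ℝ) ^ k * k.factorial) • L v := by
    intro v
    have h1 : ∀ c : Fin k → ℝ, L (fun _ => ∑ i, c i • v i) =
        ∑ r : Fin k → Fin k, (∏ i, c (r i)) • L (v ∘ r) := by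
      intro c
      rw [L.map_sum (fun _ i => c i • v i)]
      apply Finset.sum_congr rfl
      intro r _
      exact L.map_smul_univ (fun i => c (r i)) (fun i => v (r i))
    simp only [h1, Finset.smul_sum, smul_smul]
    rw [Finset.sum_comm]
    simp only [← Finset.sum_smul, hsum, ite_smul, zero_smul]
    rw [← Finset.sum_filter]
    have h2 : ∀ r ∈ Finset.univ.filter (fun r : Fin k → Fin k => Function.Bijective r),
        (2:ℝ) ^ k • L (v ∘ r) = (2:ℝ) ^ k • L v := by
      intro r hr
      have hb := (Finset.mem_filter.1 hr).2
      have := hsym (Equiv.ofBijective r hb) v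
      rw [Equiv.coe_ofBijective] at this
      rw [this]
    rw [Finset.sum_congr rfl h2, Finset.sum_const]
    have h3 : (Finset.univ.filter (fun r : Fin k → Fin k => Function.Bijective r)).card =
        k.factorial := by
      rw [← Fintype.card_subtype]
      have e : Equiv.Perm (Fin k) ≃ {r : Fin k → Fin k // Function.Bijective r} :=
        Equiv.ofBijective (fun σ => ⟨σ, σ.bijective⟩) ⟨fun a b h => by
          ext i; simpa using congrArg (fun z => ((z.1 i : Fin k) : ℕ)) h, fun r =>
          ⟨Equiv.ofBijective r.1 r.2, rfl⟩⟩
      rw [← Fintype.card_congr e, Fintype.card_perm, Fintype.card_fin]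
    rw [h3, ← Nat.cast_smul_eq_nsmul ℝ, smul_smul, mul_comm]
  have hdiag : ∀ w : E, ∀ ρ : ℝ, 0 < ρ → ‖w‖ ≤ ρ → ‖L (fun _ => w)‖ ≤ ρ ^ k * B := by
    intro w ρ hρ hw
    have h1 : L (fun _ => w) = ρ ^ k • L (fun _ => ρ⁻¹ • w) := by
      have := L.map_smul_univ (fun _ : Fin k => ρ) (fun _ => ρ⁻¹ • w)
      simp only [Finset.prod_const, Finset.card_univ, Fintype.card_fin, smul_smul,
        mul_inv_cancel₀ hρ.ne', one_smul] at this
      exact this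
    rw [h1, norm_smul, Real.norm_of_nonneg (by positivity)]
    gcongr
    apply hL
    rw [norm_smul, norm_inv, Real.norm_of_nonneg hρ.le, inv_mul_le_iff₀ hρ, mul_one]
    exact hw
  have hunit : ∀ v : Fin k → E, (∀ i, ‖v i‖ ≤ 1) → ‖L v‖ ≤ 3 ^ k * B := by
    intro v hv
    rcases Nat.eq_zero_or_pos k with hk | hk
    · subst hk
      have : v = fun _ => 0 := by ext i; exact i.elim0
      rw [this]; simpa using hL 0 (by simp)
    have hk0 : (0:ℝ) < k := by exact_mod_cast hk
    have h1 := congrArg norm (hid v)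
    rw [norm_smul, Real.norm_of_nonneg (by positivity)] at h1
    have h2 : ‖∑ c ∈ T, (∏ i, c i) • L (fun _ => ∑ i, c i • v i)‖ ≤ 2 ^ k * (k ^ k * B) := by
      refine (norm_sum_le_of_le T (f := _) (n := fun _ => (k:ℝ) ^ k * B) ?_).trans ?_
      · intro c hc
        rw [norm_smul, norm_prod]
        have : ∏ i, ‖c i‖ = 1 := Finset.prod_eq_one (fun i _ => hTabs c hc i)
        rw [this, one_mul]
        apply hdiag _ _ hk0
        refine (norm_sum_le_of_le _ (n := fun _ => (1:ℝ)) ?_).trans ?_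
        · intro i _
          rw [norm_smul, Real.norm_eq_abs, hTabs c hc i, one_mul]; exact hv i
        · simp
      · rw [Finset.sum_const, hTcard]; simp
    rw [h1, mul_assoc] at h2
    have h3 := le_of_mul_le_mul_left h2 (by positivity)
    have h4 := nat_pow_self_le k
    have h5 : (0:ℝ) < k.factorial := by positivity
    have h6 : k.factorial * ‖L v‖ ≤ k.factorial * (3 ^ k * B) := by
      refine h3.trans ?_
      calc (k:ℝ) ^ k * B ≤ (3 ^ k * k.factorial) * B := by gcongr
        _ = _ := by ring
    exact le_of_mul_le_mul_left h6 h5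
  refine ContinuousMultilinearMap.opNorm_le_bound (by positivity) (fun v => ?_)
  by_cases hz : ∃ i, v i = 0
  · obtain ⟨i, hi⟩ := hz
    rw [L.map_coord_zero i hi, norm_zero]
    positivity
  push Not at hz
  have h1 : L v = (∏ i, ‖v i‖) • L (fun i => ‖v i‖⁻¹ • v i) := by
    rw [← L.map_smul_univ]
    congr 1
    ext i
    rw [smul_smul, mul_inv_cancel₀ (norm_ne_zero_iff.2 (hz i)), one_smul]
  rw [h1, norm_smul, Real.norm_of_nonneg (by positivity), mul_comm]
  gcongr
  apply hunit
  intro i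
  rw [norm_smul, norm_inv, norm_norm, inv_mul_cancel₀ (norm_ne_zero_iff.2 (hz i))]

end sym
end JorisAux

set_option linter.unnecessarySeqFocus false
namespace JorisAux
open Complex

section tay
variable {E F : Type*} [NormedAddCommGroup E] [NormedSpace ℝ E] [NormedAddCommGroup F]
  [NormedSpace ℝ F]

lemma deriv_tsum (L : ℕ) (c : ℕ → F) (s : ℝ) :
    HasDerivAt (fun s : ℝ => ∑ l ∈ Finset.range (L + 1), (s ^ l / l.factorial : ℝ) • c l)
      (∑ l ∈ Finset.range L, (s ^ l / l.factorial : ℝ) • c (l + 1)) s := by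
  have h : ∀ l ∈ Finset.range (L + 1), HasDerivAt (fun s : ℝ => (s ^ l / l.factorial : ℝ) • c l)
      (((l:ℝ) * s ^ (l - 1) / l.factorial : ℝ) • c l) s := by
    intro l _
    exact ((hasDerivAt_pow l s).div_const _).smul_const (c l)
  refine (HasDerivAt.fun_sum h).congr_deriv ?_
  rw [Finset.sum_range_succ']
  simp only [Nat.cast_zero, zero_mul, zero_div, zero_smul, add_zero]
  apply Finset.sum_congr rfl
  intro l _
  congr 1
  rw [Nat.factorial_succ]
  push_cast
  have : (0:ℝ) < l.factorial := by positivity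
  try simp only [add_tsub_cancel_right]
  field_simp

lemma taylor_pos (L : ℕ) : ∀ (ψ : ℕ → ℝ → F) (B t : ℝ), 0 ≤ t →
    (∀ l s, 0 ≤ s → s ≤ t → HasDerivAt (ψ l) (ψ (l + 1) s) s) →
    (∀ s, 0 ≤ s → s ≤ t → ‖ψ L s‖ ≤ B) →
    ‖ψ 0 t - ∑ l ∈ Finset.range L, (t ^ l / l.factorial : ℝ) • ψ l 0‖ ≤
      B * (t ^ L / L.factorial) := by
  induction L with
  | zero => intro ψ B t ht h1 h2; simpa using h2 t ht le_rfl
  | succ L ih =>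
    intro ψ B t ht h1 h2
    have hd : ∀ s, 0 ≤ s → s ≤ t → HasDerivAt
        (fun s => ψ 0 s - ∑ l ∈ Finset.range (L + 1), (s ^ l / l.factorial : ℝ) • ψ l 0)
        (ψ 1 s - ∑ l ∈ Finset.range L, (s ^ l / l.factorial : ℝ) • ψ (l + 1) 0) s :=
      fun s hs hs' => (h1 0 s hs hs').sub (deriv_tsum L (fun l => ψ l 0) s)
    have hB : ∀ s : ℝ, HasDerivAt (fun s : ℝ => B * (s ^ (L + 1) / (L + 1).factorial))
        (B * (s ^ L / L.factorial)) s := by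
      intro s
      refine (((hasDerivAt_pow (L + 1) s).div_const ((L + 1).factorial : ℝ)).const_mul B).congr_deriv ?_
      rw [Nat.factorial_succ]
      push_cast
      have : (0:ℝ) < L.factorial := by positivity
      try simp only [add_tsub_cancel_right]
      field_simp
    refine image_norm_le_of_norm_deriv_right_le_deriv_boundary' (a := 0) (b := t)
      (f := fun s => ψ 0 s - ∑ l ∈ Finset.range (L + 1), (s ^ l / l.factorial : ℝ) • ψ l 0)
      (f' := fun s => ψ 1 s - ∑ l ∈ Finset.range L, (s ^ l / l.factorial : ℝ) • ψ (l + 1) 0)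
      (B := fun s : ℝ => B * (s ^ (L + 1) / (L + 1).factorial))
      (B' := fun s : ℝ => B * (s ^ L / L.factorial))
      (fun s hs => (hd s hs.1 hs.2).continuousAt.continuousWithinAt)
      (fun s hs => (hd s hs.1 hs.2.le).hasDerivWithinAt) ?_
      (fun s _ => (hB s).continuousAt.continuousWithinAt)
      (fun s _ => (hB s).hasDerivWithinAt) ?_ ⟨ht, le_rfl⟩
    · simp [Finset.sum_range_succ', zero_pow]
    · intro s hs
      exact ih (fun l => ψ (l + 1)) B s hs.1 (fun l r hr hr' => h1 (l + 1) r hr (hr'.trans hs.2.le))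
        (fun r hr hr' => h2 r hr (hr'.trans hs.2.le))

lemma taylor_abs (L : ℕ) (ψ : ℕ → ℝ → F) (B t : ℝ)
    (h1 : ∀ l s, |s| ≤ |t| → HasDerivAt (ψ l) (ψ (l + 1) s) s)
    (h2 : ∀ s, |s| ≤ |t| → ‖ψ L s‖ ≤ B) :
    ‖ψ 0 t - ∑ l ∈ Finset.range L, (t ^ l / l.factorial : ℝ) • ψ l 0‖ ≤
      B * (|t| ^ L / L.factorial) := by
  rcases le_total 0 t with ht | ht
  · rw [abs_of_nonneg ht] at *
    exact taylor_pos L ψ B t ht (fun l s hs hs' => h1 l s (by rwa [abs_of_nonneg hs]))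
      (fun s hs hs' => h2 s (by rwa [abs_of_nonneg hs]))
  · rw [abs_of_nonpos ht] at *
    have := taylor_pos L (fun l s => ((-1:ℝ) ^ l) • ψ l (-s)) B (-t) (by linarith)
      (fun l s hs hs' => by
        have h := (h1 l (-s) (by rw [abs_neg, abs_of_nonneg hs]; exact hs')).scomp s
          (hasDerivAt_neg s)
        refine (h.const_smul ((-1:ℝ) ^ l)).congr_deriv ?_
        rw [smul_smul, pow_succ])
      (fun s hs hs' => by
        rw [norm_smul, norm_pow, norm_neg, norm_one, one_pow, one_mul]
        exact h2 (-s) (by rw [abs_neg, abs_of_nonneg hs]; exact hs'))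
    simp only [neg_neg, pow_zero, one_smul, neg_zero, smul_smul] at this
    convert this using 5 with l
    rw [div_mul_eq_mul_div, ← mul_pow]; simp

/-- derivative along a line -/
lemma line_deriv {f : E → F} {U : Set E} (hU : IsOpen U) (hf : ContDiffOn ℝ (⊤ : ℕ∞) f U)
    {x v : E} (l : ℕ) {s : ℝ} (hs : x + s • v ∈ U) :
    HasDerivAt (fun s : ℝ => iteratedFDeriv ℝ l f (x + s • v) (fun _ => v))
      (iteratedFDeriv ℝ (l + 1) f (x + s • v) (fun _ => v)) s := by
  have hc : ContDiffAt ℝ (⊤ : ℕ∞) f (x + s • v) := hf.contDiffAt (hU.mem_nhds hs)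
  have h1 : DifferentiableAt ℝ (iteratedFDeriv ℝ l f) (x + s • v) :=
    hc.differentiableAt_iteratedFDeriv (by exact_mod_cast WithTop.coe_lt_coe.2 (ENat.natCast_lt_top l))
  have h2 : HasDerivAt (fun s : ℝ => x + s • v) v s := by
    simpa using ((hasDerivAt_id s).smul_const v).const_add x
  have h3 := h1.hasFDerivAt.comp_hasDerivAt s h2
  have h4 := ((ContinuousMultilinearMap.apply ℝ (fun _ : Fin l => E) F (fun _ => v)).hasFDerivAt).comp_hasDerivAt s h3
  refine h4.congr_deriv ?_
  rw [iteratedFDeriv_succ_apply_left]; rfl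

/-- Taylor formula along a segment -/
lemma line_taylor {f : E → F} {U : Set E} (hU : IsOpen U) (hf : ContDiffOn ℝ (⊤ : ℕ∞) f U)
    {x v : E} (L : ℕ) {t B : ℝ} (hs : ∀ s, |s| ≤ |t| → x + s • v ∈ U)
    (hB : ∀ s, |s| ≤ |t| → ‖iteratedFDeriv ℝ L f (x + s • v) (fun _ => v)‖ ≤ B) :
    ‖f (x + t • v) - ∑ l ∈ Finset.range L, (t ^ l / l.factorial : ℝ) •
      iteratedFDeriv ℝ l f x (fun _ => v)‖ ≤ B * (|t| ^ L / L.factorial) := by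
  have := taylor_abs L (fun l s => iteratedFDeriv ℝ l f (x + s • v) (fun _ => v)) B t
    (fun l s h => line_deriv hU hf l (hs s h)) hB
  simpa using this
end tay

section diag
variable {E : Type*} [NormedAddCommGroup E] [NormedSpace ℝ E]

lemma diag_bound {f : E → ℂ} (hf : ContDiff ℝ (⊤ : ℕ∞) f) {x v : E} {k : ℕ} {B s₀ : ℝ}
    (hs₀ : 0 < s₀) (h : ∀ s : ℝ, 0 < s → s ≤ s₀ → ‖fd k (fun i => f (x + ((i:ℝ) * s) • v))‖ ≤ B * s ^ k) :
    ‖iteratedFDeriv ℝ k f x (fun _ => v)‖ ≤ B := by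
  -- bound of the next derivative on a compact segment
  have hcont : Continuous (fun s : ℝ => ‖iteratedFDeriv ℝ (k + 1) f (x + s • v) (fun _ => v)‖) := by
    refine Continuous.norm ?_
    rw [continuous_iff_continuousAt]
    intro s
    exact (line_deriv isOpen_univ hf.contDiffOn (k + 1) (mem_univ _)).continuousAt
  obtain ⟨Q, hQ⟩ := (isCompact_Icc (a := (-1:ℝ)) (b := 1)).bddAbove_image hcont.continuousOn
  have hQ' : ∀ s : ℝ, |s| ≤ 1 → ‖iteratedFDeriv ℝ (k + 1) f (x + s • v) (fun _ => v)‖ ≤ Q :=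
    fun s hs => hQ ⟨s, abs_le.1 hs, rfl⟩
  have hQ0 : 0 ≤ Q := (norm_nonneg _).trans (hQ' 0 (by simp))
  set a : ℕ → ℂ := fun l => iteratedFDeriv ℝ l f x (fun _ => v) / (l.factorial : ℂ) with ha
  have key : ∀ s : ℝ, 0 < s → s ≤ s₀ → (k:ℝ) * s ≤ 1 →
      ‖iteratedFDeriv ℝ k f x (fun _ => v)‖ ≤ B + (2 ^ k * (Q * k ^ (k + 1))) * s := by
    intro s hs hs' hk
    have hrem : ∀ i ≤ k, ‖f (x + ((i:ℝ) * s) • v) - psum a (k + 1) ((i:ℂ) * (s:ℂ))‖ ≤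
        Q * (k ^ (k + 1)) * s ^ (k + 1) := by
      intro i hi
      have hik : (i:ℝ) * s ≤ k * s := by gcongr
      have habs : |(i:ℝ) * s| ≤ 1 := by rw [abs_of_nonneg (by positivity)]; linarith
      have h1 := line_taylor (f := f) isOpen_univ hf.contDiffOn (x := x) (v := v) (k + 1)
        (t := (i:ℝ) * s) (B := Q) (fun _ _ => mem_univ _) (fun r hr => hQ' r (hr.trans habs))
      have e : ∑ l ∈ Finset.range (k + 1), (((i:ℝ) * s) ^ l / l.factorial : ℝ) •
          iteratedFDeriv ℝ l f x (fun _ => v) = psum a (k + 1) ((i:ℂ) * (s:ℂ)) := by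
        unfold psum
        apply Finset.sum_congr rfl
        intro l _
        rw [Complex.real_smul, ha]
        push_cast
        ring
      rw [e] at h1
      refine h1.trans ?_
      rw [abs_of_nonneg (by positivity), mul_assoc, ← mul_pow]
      refine mul_le_mul_of_nonneg_left ?_ hQ0
      refine (div_le_self (by positivity) ?_).trans ?_
      · exact_mod_cast Nat.succ_le_of_lt (Nat.factorial_pos _)
      · gcongr
    have h2 := fd_bound hrem
    rw [fd_sub] at h2
    have h3 : fd k (fun i => psum a (k + 1) ((i:ℂ) * (s:ℂ))) =
        iteratedFDeriv ℝ k f x (fun _ => v) * (s:ℂ) ^ k := by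
      have : (fun i : ℕ => psum a (k + 1) ((i:ℂ) * (s:ℂ))) =
          fun i : ℕ => psum a k ((i:ℂ) * (s:ℂ)) + (a k * (s:ℂ) ^ k) * (i:ℂ) ^ k := by
        ext i
        simp only [psum, Finset.sum_range_succ]
        ring
      rw [this, fd_add, fd_psum, fd_const_mul, fd_pow_self, ha]
      have : (k.factorial : ℂ) ≠ 0 := by exact_mod_cast (Nat.factorial_pos k).ne'
      field_simp
      ring
    rw [h3] at h2
    have h4 := h s hs hs'
    have h5 : ‖iteratedFDeriv ℝ k f x (fun _ => v) * (s:ℂ) ^ k‖ ≤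
        B * s ^ k + 2 ^ k * (Q * (k ^ (k + 1)) * s ^ (k + 1)) := by
      have := norm_sub_le (fd k (fun i => f (x + ((i:ℝ) * s) • v)))
        (fd k (fun i => f (x + ((i:ℝ) * s) • v)) - iteratedFDeriv ℝ k f x (fun _ => v) * (s:ℂ) ^ k)
      rw [sub_sub_cancel] at this
      linarith
    rw [norm_mul, norm_pow, Complex.norm_real, Real.norm_of_nonneg hs.le] at h5
    have h6 : 0 < s ^ k := by positivity
    refine le_of_mul_le_mul_right (h5.trans (le_of_eq ?_)) h6
    ring
  have hl : Tendsto (fun s : ℝ => B + (2 ^ k * (Q * k ^ (k + 1))) * s) (nhdsWithin 0 (Ioi 0)) (nhds B) := by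
    have : Continuous (fun s : ℝ => B + (2 ^ k * (Q * (k:ℝ) ^ (k + 1))) * s) := by fun_prop
    have := (this.tendsto 0).mono_left (nhdsWithin_le_nhds (s := Ioi 0))
    simpa using this
  refine ge_of_tendsto hl ?_
  have hp : (0:ℝ) < min s₀ (1 / (k + 1)) := by positivity
  filter_upwards [Ioc_mem_nhdsGT hp] with s hs
  refine key s hs.1 (hs.2.trans (min_le_left _ _)) ?_
  have h1 : s ≤ 1 / ((k:ℝ) + 1) := hs.2.trans (min_le_right _ _)
  rw [le_div_iff₀ (by positivity)] at h1
  nlinarith [hs.1]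
end diag
end JorisAux

set_option linter.unnecessarySeqFocus false
namespace JorisAux
open Complex

section lim
variable {E G F : Type*} [NormedAddCommGroup E] [NormedSpace ℝ E] [NormedAddCommGroup G]
  [NormedSpace ℝ G] [NormedAddCommGroup F] [NormedSpace ℝ F]

lemma interp {u : E → G} {u' : E → E →L[ℝ] G} {x : E} {s δ b : ℝ} (hs : 0 < s) (hb : 0 ≤ b)
    (h1 : ∀ y ∈ Metric.closedBall x s, HasFDerivAt u (u' y) y)
    (h2 : ∀ y ∈ Metric.closedBall x s, ‖u y‖ ≤ δ)
    (h3 : ∀ y ∈ Metric.closedBall x s, ‖u' y - u' x‖ ≤ b * s) :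
    ‖u' x‖ ≤ 2 * δ / s + b * s := by
  have hx : x ∈ Metric.closedBall x s := Metric.mem_closedBall_self hs.le
  have hδ : 0 ≤ δ := (norm_nonneg _).trans (h2 x hx)
  refine ContinuousLinearMap.opNorm_le_of_unit_norm (by positivity) (fun w hw => ?_)
  have hy : x + s • w ∈ Metric.closedBall x s := by
    rw [Metric.mem_closedBall, dist_eq_norm, add_sub_cancel_left, norm_smul, hw, mul_one,
      Real.norm_of_nonneg hs.le]
  have h4 := Convex.norm_image_sub_le_of_norm_hasFDerivWithin_le' (𝕜 := ℝ) (f' := u') (φ := u' x)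
    (fun y hy => (h1 y hy).hasFDerivWithinAt) h3 (convex_closedBall x s) hx hy
  rw [add_sub_cancel_left, map_smul, norm_smul, hw, mul_one, Real.norm_of_nonneg hs.le] at h4
  have h5 : ‖s • u' x w‖ ≤ 2 * δ + b * s * s := by
    have e : s • u' x w = (u (x + s • w) - u x) - (u (x + s • w) - u x - s • u' x w) := by abel
    rw [e]
    refine (norm_sub_le _ _).trans ?_
    have := norm_sub_le (u (x + s • w)) (u x)
    have := h2 _ hx
    have := h2 _ hy
    linarith
  rw [norm_smul, Real.norm_of_nonneg hs.le] at h5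
  have e : 2 * δ / s + b * s = (2 * δ + b * s * s) / s := by field_simp
  rw [e, le_div_iff₀ hs]
  linarith

lemma hasF_iter {f : E → F} (hf : ContDiff ℝ (⊤ : ℕ∞) f) (k : ℕ) (x : E) :
    HasFDerivAt (iteratedFDeriv ℝ k f)
      (continuousMultilinearCurryLeftEquiv ℝ (fun _ : Fin (k + 1) => E) F
        (iteratedFDeriv ℝ (k + 1) f x)) x := by
  have h := (((smooth_iter hf k).differentiable (by simp)) x).hasFDerivAt
  rw [fderiv_iteratedFDeriv] at h
  exact h

lemma lip_iter {f : E → F} (hf : ContDiff ℝ (⊤ : ℕ∞) f) (k : ℕ) {r A : ℝ}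
    (hA : ∀ x ∈ Metric.ball (0:E) r, ‖iteratedFDeriv ℝ (k + 1) f x‖ ≤ A) {x y : E}
    (hx : x ∈ Metric.ball (0:E) r) (hy : y ∈ Metric.ball (0:E) r) :
    ‖iteratedFDeriv ℝ k f y - iteratedFDeriv ℝ k f x‖ ≤ A * ‖y - x‖ :=
  Convex.norm_image_sub_le_of_norm_hasFDerivWithin_le (𝕜 := ℝ)
    (f' := fun x => continuousMultilinearCurryLeftEquiv ℝ (fun _ : Fin (k + 1) => E) F
        (iteratedFDeriv ℝ (k + 1) f x))
    (fun z _ => (hasF_iter hf k z).hasFDerivWithinAt)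
    (fun z hz => by rw [LinearIsometryEquiv.norm_map]; exact hA z hz) (convex_ball 0 r) hx hy

lemma iso_two {X Y : Type*} [NormedAddCommGroup X] [NormedSpace ℝ X] [NormedAddCommGroup Y]
    [NormedSpace ℝ Y] (e : X ≃ₗᵢ[ℝ] Y) (a b : X) : ‖e a - e b‖ = ‖a - b‖ := by
  rw [← map_sub, LinearIsometryEquiv.norm_map]

lemma iso_four {X Y : Type*} [NormedAddCommGroup X] [NormedSpace ℝ X] [NormedAddCommGroup Y]
    [NormedSpace ℝ Y] (e : X ≃ₗᵢ[ℝ] Y) (a b c d : X) :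
    ‖(e a - e b) - (e c - e d)‖ = ‖(a - b) - (c - d)‖ := by
  rw [← map_sub, ← map_sub, ← map_sub, LinearIsometryEquiv.norm_map]

lemma interp_iso {X : Type*} [NormedAddCommGroup X] [NormedSpace ℝ X] (e : X ≃ₗᵢ[ℝ] (E →L[ℝ] G))
    {u₁ u₂ : E → G} {w₁ w₂ : E → X} {x : E} {s δ a : ℝ} (hs : 0 < s) (ha : 0 ≤ a)
    (h1 : ∀ y, HasFDerivAt u₁ (e (w₁ y)) y) (h1' : ∀ y, HasFDerivAt u₂ (e (w₂ y)) y)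
    (h2 : ∀ y ∈ Metric.closedBall x s, ‖u₁ y - u₂ y‖ ≤ δ)
    (h3 : ∀ y ∈ Metric.closedBall x s, ‖w₁ y - w₁ x‖ ≤ a * ‖y - x‖)
    (h3' : ∀ y ∈ Metric.closedBall x s, ‖w₂ y - w₂ x‖ ≤ a * ‖y - x‖) :
    ‖w₁ x - w₂ x‖ ≤ 2 * δ / s + (2 * a) * s := by
  have h := interp (u := fun y => u₁ y - u₂ y) (u' := fun y => e (w₁ y) - e (w₂ y)) (x := x)
    (δ := δ) (b := 2 * a) hs (by positivity) (fun y _ => (h1 y).sub (h1' y)) h2 (fun y hy => by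
        have hd : ‖y - x‖ ≤ s := by rw [← dist_eq_norm]; exact hy
        rw [iso_four]
        have e : w₁ y - w₂ y - (w₁ x - w₂ x) = (w₁ y - w₁ x) - (w₂ y - w₂ x) := by abel
        rw [e]
        refine (norm_sub_le _ _).trans ?_
        have h4 : a * ‖y - x‖ ≤ a * s := by gcongr
        have := h3 y hy
        have := h3' y hy
        linarith)
  rwa [iso_two] at h

/-- Cauchy estimates for all derivatives -/
lemma cauchy_iter {g : ℕ → E → F} (hg : ∀ i, ContDiff ℝ (⊤ : ℕ∞) (g i)) {R : ℝ} {A : ℕ → ℝ}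
    (hA : ∀ k i, ∀ x ∈ Metric.ball (0:E) R, ‖iteratedFDeriv ℝ k (g i) x‖ ≤ A k)
    (h0 : ∀ ε > 0, ∃ N, ∀ i ≥ N, ∀ l ≥ N, ∀ x ∈ Metric.ball (0:E) R, ‖g i x - g l x‖ ≤ ε) (k : ℕ) :
    ∀ r < R, ∀ ε > 0, ∃ N, ∀ i ≥ N, ∀ l ≥ N, ∀ x ∈ Metric.ball (0:E) r,
      ‖iteratedFDeriv ℝ k (g i) x - iteratedFDeriv ℝ k (g l) x‖ ≤ ε := by
  induction k with
  | zero =>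
    intro r hr ε hε
    obtain ⟨N, hN⟩ := h0 ε hε
    refine ⟨N, fun i hi l hl x hx => ?_⟩
    rw [iteratedFDeriv_zero_eq_comp, iteratedFDeriv_zero_eq_comp]
    simp only [Function.comp]
    rw [← map_sub, LinearIsometryEquiv.norm_map]
    exact hN i hi l hl x (Metric.ball_subset_ball hr.le hx)
  | succ k ih =>
    intro r hr ε hε
    rcases le_or_gt r 0 with hr0 | hr0
    · refine ⟨0, fun i _ l _ x hx => ?_⟩
      rw [Metric.ball_eq_empty.2 hr0] at hx
      exact absurd hx (notMem_empty x)
    have hA0 : 0 ≤ A (k + 2) := (norm_nonneg _).trans (hA (k + 2) 0 0 (Metric.mem_ball_self (hr0.trans hr)))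
    set r' := (r + R) / 2 with hr'
    set b := 2 * A (k + 2) with hb
    have hb0 : 0 ≤ b := by positivity
    obtain ⟨s, hs, hs1, hs2⟩ : ∃ s : ℝ, 0 < s ∧ s < r' - r ∧ b * s ≤ ε / 2 := by
      refine ⟨min ((r' - r) / 2) (ε / (2 * (b + 1))), ?_, ?_, ?_⟩
      · have : 0 < r' - r := by rw [hr']; linarith
        positivity
      · refine (min_le_left _ _).trans_lt ?_
        have : 0 < r' - r := by rw [hr']; linarith
        linarith
      · have h1 : min ((r' - r) / 2) (ε / (2 * (b + 1))) ≤ ε / (2 * (b + 1)) := min_le_right _ _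
        calc b * min ((r' - r) / 2) (ε / (2 * (b + 1))) ≤ (b + 1) * (ε / (2 * (b + 1))) := by
              have : 0 ≤ ε / (2 * (b + 1)) := by positivity
              nlinarith
          _ = ε / 2 := by field_simp
    obtain ⟨N, hN⟩ := ih r' (by rw [hr']; linarith) (ε * s / 4) (by positivity)
    refine ⟨N, fun i hi l hl x hx => ?_⟩
    have hsub : Metric.closedBall x s ⊆ Metric.ball (0:E) r' := by
      intro y hy
      rw [Metric.mem_closedBall] at hy
      rw [Metric.mem_ball] at hx ⊢
      have := dist_triangle y x 0
      linarith
    have hsubR : Metric.ball (0:E) r' ⊆ Metric.ball (0:E) R :=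
      Metric.ball_subset_ball (by rw [hr']; linarith)
    have hxs : x ∈ Metric.closedBall x s := Metric.mem_closedBall_self hs.le
    have hxR := hsubR (hsub hxs)
    have h := interp_iso (continuousMultilinearCurryLeftEquiv ℝ (fun _ : Fin (k + 1) => E) F)
      (x := x) (δ := ε * s / 4) hs hA0 (hasF_iter (hg i) k) (hasF_iter (hg l) k)
      (fun y hy => hN i hi l hl y (hsub hy))
      (fun y hy => lip_iter (hg i) (k + 1) (hA (k + 2) i) hxR (hsubR (hsub hy)))
      (fun y hy => lip_iter (hg l) (k + 1) (hA (k + 2) l) hxR (hsubR (hsub hy)))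
    refine h.trans ?_
    have : 2 * (ε * s / 4) / s = ε / 2 := by field_simp; norm_num
    linarith

lemma limit_lemma [CompleteSpace F] {g : ℕ → E → F} {f : E → F}
    (hg : ∀ i, ContDiff ℝ (⊤ : ℕ∞) (g i)) {R : ℝ} {A : ℕ → ℝ}
    (hA : ∀ k i, ∀ x ∈ Metric.ball (0:E) R, ‖iteratedFDeriv ℝ k (g i) x‖ ≤ A k)
    (h0 : ∀ ε > 0, ∃ N, ∀ i ≥ N, ∀ x ∈ Metric.ball (0:E) R, ‖g i x - f x‖ ≤ ε) :
    ContDiffOn ℝ (⊤ : ℕ∞) f (Metric.ball 0 R) ∧ ∀ k, ∀ x ∈ Metric.ball (0:E) R,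
      ‖iteratedFDerivWithin ℝ k f (Metric.ball 0 R) x‖ ≤ A k := by
  have hc0 : ∀ ε > 0, ∃ N, ∀ i ≥ N, ∀ l ≥ N, ∀ x ∈ Metric.ball (0:E) R, ‖g i x - g l x‖ ≤ ε := by
    intro ε hε
    obtain ⟨N, hN⟩ := h0 (ε / 2) (by positivity)
    refine ⟨N, fun i hi l hl x hx => ?_⟩
    have h1 := hN i hi x hx
    have h2 := hN l hl x hx
    have e : g i x - g l x = (g i x - f x) - (g l x - f x) := by abel
    rw [e]
    refine (norm_sub_le _ _).trans ?_
    linarith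
  have hc := cauchy_iter hg hA hc0
  have hmid : ∀ x ∈ Metric.ball (0:E) R, ∃ r < R, x ∈ Metric.ball (0:E) r := by
    intro x hx
    rw [Metric.mem_ball] at hx
    obtain ⟨r, h1, h2⟩ := exists_between hx
    exact ⟨r, h2, h1⟩
  have hlim : ∀ x ∈ Metric.ball (0:E) R, ∀ k, ∃ p, Tendsto (fun i => iteratedFDeriv ℝ k (g i) x) atTop (nhds p) := by
    intro x hx k
    obtain ⟨r, hr, hxr⟩ := hmid x hx
    apply cauchySeq_tendsto_of_complete
    rw [Metric.cauchySeq_iff]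
    intro ε hε
    obtain ⟨N, hN⟩ := hc k r hr (ε / 2) (by positivity)
    refine ⟨N, fun i hi l hl => ?_⟩
    rw [dist_eq_norm]
    have := hN i hi l hl x hxr
    linarith
  classical
  set p : E → FormalMultilinearSeries ℝ E F := fun x k =>
    if h : x ∈ Metric.ball (0:E) R then Classical.choose (hlim x h k) else 0 with hp
  have hpl : ∀ x ∈ Metric.ball (0:E) R, ∀ k,
      Tendsto (fun i => iteratedFDeriv ℝ k (g i) x) atTop (nhds (p x k)) := by
    intro x hx k
    have := Classical.choose_spec (hlim x hx k)
    simp only [hp, hx, dif_pos]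
    exact this
  have hunif : ∀ k, ∀ r < R, ∀ ε > 0, ∃ N, ∀ i ≥ N, ∀ x ∈ Metric.ball (0:E) r,
      ‖p x k - iteratedFDeriv ℝ k (g i) x‖ ≤ ε := by
    intro k r hr ε hε
    obtain ⟨N, hN⟩ := hc k r hr ε hε
    refine ⟨N, fun i hi x hx => ?_⟩
    have h1 := ((hpl x (Metric.ball_subset_ball hr.le hx) k).sub_const (iteratedFDeriv ℝ k (g i) x)).norm
    refine le_of_tendsto h1 ?_
    filter_upwards [eventually_ge_atTop N] with l hl
    exact hN l hl i hi x hx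
  have hder : ∀ m, ∀ x ∈ Metric.ball (0:E) R, HasFDerivAt (fun x => p x m)
      (continuousMultilinearCurryLeftEquiv ℝ (fun _ : Fin (m + 1) => E) F (p x (m + 1))) x := by
    intro m x hx
    refine hasFDerivAt_of_tendstoLocallyUniformlyOn (l := atTop) (s := Metric.ball (0:E) R)
      (f := fun i => iteratedFDeriv ℝ m (g i))
      (f' := fun i y => continuousMultilinearCurryLeftEquiv ℝ (fun _ : Fin (m + 1) => E) F
        (iteratedFDeriv ℝ (m + 1) (g i) y))
      (g' := fun y => continuousMultilinearCurryLeftEquiv ℝ (fun _ : Fin (m + 1) => E) F (p y (m + 1)))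
      Metric.isOpen_ball ?_ (fun i y _ => hasF_iter (hg i) m y) (fun y hy => hpl y hy m) hx
    rw [Metric.tendstoLocallyUniformlyOn_iff]
    intro ε hε y hy
    obtain ⟨r, hr, hyr⟩ := hmid y hy
    obtain ⟨N, hN⟩ := hunif (m + 1) r hr (ε / 2) (by positivity)
    refine ⟨Metric.ball 0 r, mem_nhdsWithin_of_mem_nhds (Metric.isOpen_ball.mem_nhds hyr), ?_⟩
    filter_upwards [eventually_ge_atTop N] with i hi z hz
    rw [LinearIsometryEquiv.dist_map, dist_eq_norm]
    have := hN i hi z hz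
    linarith
  have hT : HasFTaylorSeriesUpToOn ((⊤ : ℕ∞) : WithTop ℕ∞) f p (Metric.ball 0 R) := by
    refine ⟨fun x hx => ?_, fun m _ x hx => (hder m x hx).hasFDerivWithinAt, fun m _ x hx =>
      (hder m x hx).continuousAt.continuousWithinAt⟩
    have h1 : Tendsto (fun i => g i x) atTop (nhds (f x)) := by
      rw [Metric.tendsto_atTop]
      intro ε hε
      obtain ⟨N, hN⟩ := h0 (ε / 2) (by positivity)
      refine ⟨N, fun i hi => ?_⟩
      rw [dist_eq_norm]
      have := hN i hi x hx
      linarith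
    have h2 := (continuousMultilinearCurryFin0 ℝ E F).continuous.tendsto (p x 0) |>.comp (hpl x hx 0)
    refine tendsto_nhds_unique h2 ?_
    refine h1.congr (fun i => ?_)
    simp [iteratedFDeriv_zero_eq_comp]
  refine ⟨hT.contDiffOn, fun k x hx => ?_⟩
  rw [← hT.eq_iteratedFDerivWithin_of_uniqueDiffOn (m := k)
    (by exact_mod_cast WithTop.coe_le_coe.2 le_top) Metric.isOpen_ball.uniqueDiffOn hx]
  refine le_of_tendsto (hpl x hx k).norm ?_
  exact Eventually.of_forall (fun i => hA k i x hx)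
end lim
end JorisAux

set_option linter.unnecessarySeqFocus false
namespace JorisAux
open Complex

section conv
variable {E : Type*} [NormedAddCommGroup E] [NormedSpace ℝ E] [FiniteDimensional ℝ E]
  [MeasurableSpace E] [BorelSpace E]

lemma fd_conv (μ : Measure E) [μ.IsAddHaarMeasure] {g : E → ℂ} (hgm : Measurable g)
    (hgi : LocallyIntegrable g μ) (φ : ContDiffBump (0:E)) (k : ℕ) (x w : E) {ε : ℝ} (hε : 0 ≤ ε)
    (h : ∀ y ∈ Metric.ball x φ.rOut, ‖fd k (fun i => g (y + (i:ℝ) • w))‖ ≤ ε) :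
    ‖fd k (fun i => (convolution (φ.normed μ) g (ContinuousLinearMap.lsmul ℝ ℝ) μ) (x + (i:ℝ) • w))‖
      ≤ ε := by
  set H : E → ℂ := fun y => fd k (fun i => g (y + (i:ℝ) • w)) with hH
  have hex := HasCompactSupport.convolutionExists_left (ContinuousLinearMap.lsmul ℝ ℝ (E := ℂ))
    (φ.hasCompactSupport_normed (μ := μ)) φ.continuous_normed hgi
  have e : fd k (fun i => (convolution (φ.normed μ) g (ContinuousLinearMap.lsmul ℝ ℝ) μ)
      (x + (i:ℝ) • w)) = convolution (φ.normed μ) H (ContinuousLinearMap.lsmul ℝ ℝ) μ x := by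
    rw [convolution_lsmul]
    have e1 : ∀ t, φ.normed μ t • H (x - t) = ∑ i ∈ Finset.range (k + 1),
        ((-1) ^ (k - i) * ((k.choose i : ℕ) : ℂ)) * (φ.normed μ t • g (x + (i:ℝ) • w - t)) := by
      intro t
      simp only [hH, fd, Finset.smul_sum]
      apply Finset.sum_congr rfl
      intro i _
      rw [mul_smul_comm]
      congr 4
      abel
    simp only [e1]
    rw [integral_finsetSum]
    · unfold fd
      apply Finset.sum_congr rfl
      intro i _
      rw [integral_const_mul]
      beta_reduce
      rw [convolution_lsmul]
    · intro i _
      exact ((hex (x + (i:ℝ) • w)).integrable).const_mul _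
  have hHm : Measurable H := by
    simp only [hH, fd]
    refine Finset.measurable_sum _ (fun i _ => ?_)
    exact (hgm.comp (measurable_id.add_const _)).const_mul _
  rw [e, ← dist_zero_right]
  exact dist_convolution_le hε φ.support_normed_eq.subset φ.nonneg_normed φ.integral_normed
    hHm.aestronglyMeasurable (fun y hy => by rw [dist_zero_right]; exact h y hy)

lemma fd_smooth (μ : Measure E) [μ.IsAddHaarMeasure] {f : E → ℂ} {R : ℝ} (hR : 0 < R) {B : ℕ → ℝ}
    (h : ∀ k, ∃ s₀ > 0, ∀ x ∈ Metric.ball (0:E) R, ∀ v : E, ‖v‖ ≤ 1 → ∀ s : ℝ, 0 < s → s ≤ s₀ →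
      ‖fd k (fun i => f (x + ((i:ℝ) * s) • v))‖ ≤ B k * s ^ k) :
    ContDiffOn ℝ (⊤ : ℕ∞) f (Metric.ball 0 (R / 2)) ∧ ∀ k, ∀ x ∈ Metric.ball (0:E) (R / 2),
      ‖iteratedFDerivWithin ℝ k f (Metric.ball 0 (R / 2)) x‖ ≤ 3 ^ k * B k := by
  classical
  have hBnn : ∀ k, 0 ≤ B k := by
    intro k
    obtain ⟨s₀, hs₀, hk⟩ := h k
    have h1 := (norm_nonneg _).trans (hk 0 (Metric.mem_ball_self hR) 0 (by simp) s₀ hs₀ le_rfl)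
    exact nonneg_of_mul_nonneg_left h1 (by positivity)
  have hbd : ∀ x ∈ Metric.ball (0:E) R, ‖f x‖ ≤ B 0 := by
    intro x hx
    obtain ⟨s₀, hs₀, hk⟩ := h 0
    simpa [fd] using hk x hx 0 (by simp) s₀ hs₀ le_rfl
  obtain ⟨s₁, hs₁, hk1⟩ := h 1
  have hlip : ∀ x ∈ Metric.ball (0:E) R, ∀ y, dist y x ≤ s₁ → dist (f y) (f x) ≤ B 1 * dist y x := by
    intro x hx y hy
    rcases eq_or_ne y x with hyx | hyx
    · rw [hyx]; simp
    have hpos : 0 < dist y x := dist_pos.2 hyx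
    have hn : ‖y - x‖ = dist y x := (dist_eq_norm _ _).symm
    have h1 := hk1 x hx ((dist y x)⁻¹ • (y - x)) (by
      rw [norm_smul, norm_inv, hn, Real.norm_of_nonneg hpos.le, inv_mul_cancel₀ hpos.ne'])
      (dist y x) hpos hy
    rw [dist_eq_norm (f y)]
    have e : fd 1 (fun i => f (x + ((i:ℝ) * dist y x) • ((dist y x)⁻¹ • (y - x)))) = f y - f x := by
      simp only [fd, Finset.sum_range_succ, Finset.sum_range_zero]
      simp [smul_smul, mul_inv_cancel₀ hpos.ne']
      ring
    rw [e, pow_one] at h1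
    exact h1
  have hcont : ContinuousOn f (Metric.ball (0:E) R) := by
    intro x hx
    refine ContinuousAt.continuousWithinAt ?_
    rw [Metric.continuousAt_iff]
    intro ε hε
    refine ⟨min s₁ (ε / (B 1 + 1)), lt_min hs₁ (div_pos hε (by linarith [hBnn 1])), fun y hy => ?_⟩
    have h1 := hlip x hx y (hy.le.trans (min_le_left _ _))
    have h2 := hy.trans_le (min_le_right _ _)
    rw [lt_div_iff₀ (by linarith [hBnn 1])] at h2
    have : 0 ≤ dist y x := dist_nonneg
    nlinarith
  set g : E → ℂ := (Metric.ball (0:E) R).indicator f with hg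
  have hgf : ∀ y ∈ Metric.ball (0:E) R, g y = f y := fun y hy => indicator_of_mem hy f
  have hgm : Measurable g := by
    rw [hg, ← Set.piecewise_eq_indicator]
    exact hcont.measurable_piecewise continuousOn_const measurableSet_ball
  have hgi : Integrable g μ := by
    have hc : Integrable ((Metric.ball (0:E) R).indicator (fun _ => B 0)) μ :=
      (integrableOn_const measure_ball_lt_top.ne).integrable_indicator measurableSet_ball
    refine hc.mono' hgm.aestronglyMeasurable (Eventually.of_forall (fun x => ?_))
    by_cases hx : x ∈ Metric.ball (0:E) R
    · rw [hg, indicator_of_mem hx, indicator_of_mem hx]; exact hbd x hx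
    · rw [hg, indicator_of_notMem hx, indicator_of_notMem hx, norm_zero]
  set η : ℝ := min (R / 4) s₁ with hη
  have hη0 : 0 < η := lt_min (by positivity) hs₁
  set φ : ℕ → ContDiffBump (0:E) := fun i =>
    ⟨η / (i + 1) / 2, η / (i + 1), by positivity, half_lt_self (by positivity)⟩ with hφ
  have hφo : ∀ i, (φ i).rOut = η / (i + 1) := fun i => rfl
  have hφη : ∀ i, (φ i).rOut ≤ η := by
    intro i
    rw [hφo]
    exact div_le_self hη0.le (by linarith [(Nat.cast_nonneg i : (0:ℝ) ≤ i)])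
  have hφR : ∀ i, (φ i).rOut ≤ R / 4 := fun i => (hφη i).trans (min_le_left _ _)
  set G : ℕ → E → ℂ := fun i =>
    convolution ((φ i).normed μ) g (ContinuousLinearMap.lsmul ℝ ℝ) μ with hG
  have hGs : ∀ i, ContDiff ℝ (⊤ : ℕ∞) (G i) := fun i =>
    HasCompactSupport.contDiff_convolution_left _ (φ i).hasCompactSupport_normed
      (φ i).contDiff_normed hgi.locallyIntegrable
  refine limit_lemma (g := G) hGs ?_ ?_
  · intro k i x hx
    refine polar _ (fun σ v => sym_perm (hGs i) x σ v) (hBnn k) (fun v hv => ?_)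
    obtain ⟨s₀, hs₀, hk⟩ := h k
    refine diag_bound (hGs i) (s₀ := min s₀ (R / 4 / (k + 1))) (lt_min hs₀ (by positivity)) ?_
    intro s hs hs'
    have hsk : (k:ℝ) * s ≤ R / 4 := by
      have h1 : s ≤ R / 4 / (k + 1) := hs'.trans (min_le_right _ _)
      rw [le_div_iff₀ (by positivity)] at h1
      nlinarith
    have h2 := fd_conv μ hgm hgi.locallyIntegrable (φ i) k x (s • v) (ε := B k * s ^ k)
      (mul_nonneg (hBnn k) (by positivity)) (fun y hy => by
        have hy1 : ‖y‖ < 3 * R / 4 := by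
          rw [Metric.mem_ball] at hy hx
          have := dist_triangle y x 0
          have := hφR i
          rw [← dist_zero_right]
          linarith
        have h3 := hk y (by rw [Metric.mem_ball, dist_zero_right]; linarith) v hv s hs
          (hs'.trans (min_le_left _ _))
        rw [fd_congr (b := fun i => f (y + ((i:ℝ) * s) • v))]
        · exact h3
        · intro l hl
          rw [smul_smul]
          apply hgf
          rw [Metric.mem_ball, dist_zero_right]
          refine (norm_add_le _ _).trans_lt ?_
          have h4 : ‖((l:ℝ) * s) • v‖ ≤ R / 4 := by
            rw [norm_smul, Real.norm_of_nonneg (by positivity)]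
            have hl' : (l:ℝ) * s ≤ k * s := by gcongr
            have : 0 ≤ (l:ℝ) * s := by positivity
            nlinarith [norm_nonneg v]
          linarith)
    simp only [smul_smul] at h2
    exact h2
  · intro ε hε
    obtain ⟨N, hN⟩ := exists_nat_gt (B 1 * η / ε)
    refine ⟨N, fun i hi x hx => ?_⟩
    have hxR : x ∈ Metric.ball (0:E) R := Metric.ball_subset_ball (by linarith) hx
    rw [← dist_eq_norm, ← hgf x hxR]
    have h1 : B 1 * (φ i).rOut ≤ ε := by
      rw [hφo]
      have : (N:ℝ) ≤ i := by exact_mod_cast hi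
      rw [div_lt_iff₀ hε] at hN
      rw [← mul_div_assoc, div_le_iff₀ (by positivity)]
      nlinarith
    refine (ContDiffBump.dist_normed_convolution_le hgm.aestronglyMeasurable (ε := B 1 * (φ i).rOut)
      (fun y hy => ?_)).trans h1
    have hyR : y ∈ Metric.ball (0:E) R := by
      rw [Metric.mem_ball] at hx hy ⊢
      have := dist_triangle y x 0
      have := hφR i
      linarith
    rw [hgf x hxR, hgf y hyR]
    rw [Metric.mem_ball] at hy
    refine (hlip x hxR y (hy.le.trans ((hφη i).trans (min_le_right _ _)))).trans ?_
    exact mul_le_mul_of_nonneg_left hy.le (hBnn 1)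
end conv
end JorisAux

set_option linter.unnecessarySeqFocus false
namespace JorisAux
open Complex

section asm
variable {E : Type*} [NormedAddCommGroup E] [NormedSpace ℝ E]

lemma TD_of {g : E → ℂ} {U : Set E} (hU : IsOpen U) (hg : ContDiffOn ℝ (⊤ : ℕ∞) g U) {M : ℕ → ℝ}
    {R C σ : ℝ} (hsub : Metric.ball (0:E) (2 * R) ⊆ U)
    (hb : ∀ x ∈ Metric.ball (0:E) (2 * R), ∀ k, ‖iteratedFDeriv ℝ k g x‖ ≤ C * σ ^ k * M k)
    {x v : E} (hx : x ∈ Metric.ball (0:E) R) (hv : ‖v‖ ≤ 1) :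
    TD (mseq M) C σ R (fun s => g (x + s • v))
      (fun l => iteratedFDeriv ℝ l g x (fun _ => v) / (l.factorial : ℂ)) := by
  rw [Metric.mem_ball, dist_zero_right] at hx
  have hR : 0 < R := (norm_nonneg _).trans_lt hx
  have hin : ∀ s : ℝ, |s| < R → x + s • v ∈ Metric.ball (0:E) (2 * R) := by
    intro s hs
    rw [Metric.mem_ball, dist_zero_right]
    refine (norm_add_le _ _).trans_lt ?_
    rw [norm_smul, Real.norm_eq_abs]
    have : |s| * ‖v‖ ≤ |s| := mul_le_of_le_one_right (abs_nonneg s) hv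
    linarith
  have hd : ∀ y ∈ Metric.ball (0:E) (2 * R), ∀ l, ‖iteratedFDeriv ℝ l g y (fun _ => v)‖ ≤
      C * σ ^ l * M l := by
    intro y hy l
    refine ((iteratedFDeriv ℝ l g y).le_opNorm _).trans ?_
    rw [Finset.prod_const]
    refine (mul_le_of_le_one_right (norm_nonneg _) (pow_le_one₀ (norm_nonneg _) hv)).trans (hb y hy l)
  refine ⟨fun l => ?_, fun L s hs => ?_⟩
  · have h1 := hd x (by simpa using hin 0 (by simpa using hR)) l
    rw [norm_div, Complex.norm_natCast, mseq, ← mul_div_assoc]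
    gcongr
  · have h1 := line_taylor hU hg (x := x) (v := v) L (t := s) (B := C * σ ^ L * M L)
      (fun r hr => hsub (hin r (hr.trans_lt hs))) (fun r hr => hd _ (hin r (hr.trans_lt hs)) L)
    have e : ∑ l ∈ Finset.range L, (s ^ l / l.factorial : ℝ) • iteratedFDeriv ℝ l g x (fun _ => v) =
        psum (fun l => iteratedFDeriv ℝ l g x (fun _ => v) / (l.factorial : ℂ)) L (s:ℂ) := by
      unfold psum
      apply Finset.sum_congr rfl
      intro l _
      rw [Complex.real_smul]
      push_cast
      ring
    rw [e] at h1
    refine h1.trans (le_of_eq ?_)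
    rw [mseq]
    ring

lemma mseq_pos {M : ℕ → ℝ} (hM : IsWeightSeq M) (k : ℕ) : 0 < mseq M k := by
  have := hM.2.1 k
  unfold mseq
  positivity

lemma mseq_zero {M : ℕ → ℝ} (hM : IsWeightSeq M) : mseq M 0 = 1 := by simp [mseq, hM.1]

lemma mseq_mono {M : ℕ → ℝ} (hM : IsWeightSeq M) (hl : LogConvexSeq (mseq M)) (k : ℕ) :
    mseq M k ≤ mseq M (k + 1) := by
  induction k with
  | zero => rw [mseq_zero hM]; simpa [mseq] using hM.2.2.1
  | succ k ih =>
    have h1 := hl (k + 1) (by omega)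
    simp only [Nat.add_sub_cancel] at h1
    have h2 := mseq_pos hM k
    have h3 := mseq_pos hM (k + 1)
    have h4 := mseq_pos hM (k + 1 + 1)
    have h5 : mseq M (k + 1) * mseq M (k + 1) ≤ mseq M (k + 1) * mseq M (k + 1 + 1) := by
      nlinarith
    exact le_of_mul_le_mul_left h5 h3

lemma mseq_ge_one {M : ℕ → ℝ} (hM : IsWeightSeq M) (hl : LogConvexSeq (mseq M)) (k : ℕ) :
    1 ≤ mseq M k := by
  rw [← mseq_zero hM]
  exact monotone_nat_of_le_succ (mseq_mono hM hl) (Nat.zero_le k)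

lemma mseq_lim {M : ℕ → ℝ} (hM : IsWeightSeq M) (hq : NonQuasianalytic M) (c : ℝ) :
    ∃ k, c * mseq M k ≤ mseq M (k + 1) := by
  by_contra hcon
  push Not at hcon
  have hc : 0 < c := by
    have h1 := (mseq_pos hM 1).trans (hcon 0)
    rwa [mseq_zero hM, mul_one] at h1
  have h1 : ∀ k : ℕ, 1 / (((k + 1 : ℕ)) : ℝ) ≤ c * (M k / M (k + 1)) := by
    intro k
    have h2 := hcon k
    have h3 := hM.2.1 k
    have h4 := hM.2.1 (k + 1)
    have h5 : (0:ℝ) < k.factorial := by positivity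
    have e : mseq M (k + 1) = M (k + 1) / (k + 1) / k.factorial := by
      rw [mseq, Nat.factorial_succ]; push_cast; field_simp
    rw [e, mseq, ← mul_div_assoc, div_lt_div_iff_of_pos_right h5, div_lt_iff₀ (by positivity)] at h2
    rw [← mul_div_assoc, div_le_div_iff₀ (by positivity) h4]
    push_cast
    linarith
  have h2 : Summable (fun k : ℕ => 1 / (((k + 1 : ℕ)) : ℝ)) :=
    Summable.of_nonneg_of_le (fun k => by positivity) h1 (Summable.mul_left c hq)
  exact Real.not_summable_one_div_natCast ((summable_nat_add_iff 1).1 h2)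

lemma mseq_mg {M : ℕ → ℝ} (hM : IsWeightSeq M) (hmg : ModerateGrowth M) :
    ∃ C : ℝ, 1 ≤ C ∧ ∀ a b, mseq M (a + b) ≤ C ^ (a + b) * mseq M a * mseq M b := by
  obtain ⟨C, hC, h⟩ := hmg
  refine ⟨max C 1, le_max_right _ _, fun a b => ?_⟩
  have ha := hM.2.1 a
  have hb := hM.2.1 b
  have h1 : M (a + b) ≤ (max C 1) ^ (a + b) * M a * M b := by
    refine (h a b).trans ?_
    gcongr
    exact le_max_left _ _
  have h2 : ((a.factorial : ℝ)) * b.factorial ≤ (a + b).factorial := by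
    exact_mod_cast Nat.le_of_dvd (Nat.factorial_pos _) (Nat.factorial_mul_factorial_dvd_factorial_add a b)
  have h3 : (0:ℝ) < (a.factorial : ℝ) * b.factorial := by positivity
  have hm : (0:ℝ) < max C 1 := lt_max_of_lt_right one_pos
  unfold mseq
  calc M (a + b) / (a + b).factorial ≤ ((max C 1) ^ (a + b) * M a * M b) / (a.factorial * b.factorial) := by
        gcongr
    _ = _ := by field_simp

lemma LM_nonempty {M : ℕ → ℝ} (hM : IsWeightSeq M) (hint : Intersectable M) : (LM M).Nonempty := by
  by_contra hcon
  rw [not_nonempty_iff_eq_empty] at hcon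
  have h1 : (fun k : ℕ => ((M k * k.factorial : ℝ) : ℂ)) ∈ Lambda M := by
    rw [hint, hcon]; simp
  obtain ⟨ρ, hρ, C, hC⟩ := h1
  have h2 : ∀ k : ℕ, (k.factorial : ℝ) ≤ C * ρ ^ k := by
    intro k
    have h3 := hC k
    have h4 := hM.2.1 k
    rw [Complex.norm_real, Real.norm_of_nonneg (by positivity)] at h3
    have h5 : M k * k.factorial ≤ M k * (C * ρ ^ k) := by linarith
    exact le_of_mul_le_mul_left h5 h4
  have hC0 : 0 < C := by
    have := h2 0
    simp at this
    linarith
  have h3 := (FloorSemiring.tendsto_pow_div_factorial_atTop ρ)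
  have h4 := (h3.eventually (gt_mem_nhds (show (0:ℝ) < 1 / C by positivity))).exists
  obtain ⟨k, hk⟩ := h4
  have h5 : (0:ℝ) < k.factorial := by positivity
  rw [div_lt_div_iff₀ h5 hC0] at hk
  have := h2 k
  linarith

lemma main {E : Type*} [NormedAddCommGroup E] [NormedSpace ℝ E] [FiniteDimensional ℝ E]
    [MeasurableSpace E] [BorelSpace E] (μ : Measure E) [μ.IsAddHaarMeasure] (M : ℕ → ℝ)
    (hM : IsWeightSeq M) (hint : Intersectable M)
    (hmg : ModerateGrowth M) (f : E → ℂ) (j : ℕ) (hj : 1 ≤ j)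
    (h1 : ∃ U : Set E, IsOpen U ∧ 0 ∈ U ∧ RoumieuOn M (f ^ j) U)
    (h2 : ∃ U : Set E, IsOpen U ∧ 0 ∈ U ∧ RoumieuOn M (f ^ (j + 1)) U) :
    ∃ U : Set E, IsOpen U ∧ 0 ∈ U ∧ RoumieuOn M f U := by
  obtain ⟨U₁, hU₁, h01, hs1, hr1⟩ := h1
  obtain ⟨U₂, hU₂, h02, hs2, hr2⟩ := h2
  have : ProperSpace E := FiniteDimensional.proper ℝ E
  obtain ⟨R', hR', hball⟩ := Metric.isOpen_iff.1 (hU₁.inter hU₂) 0 ⟨h01, h02⟩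
  obtain ⟨R, hR, hRR⟩ : ∃ R : ℝ, 0 < R ∧ 2 * R < R' := ⟨R' / 4, by positivity, by linarith⟩
  have hcl : closure (Metric.ball (0:E) (2 * R)) ⊆ U₁ ∩ U₂ :=
    (Metric.closure_ball_subset_closedBall.trans (Metric.closedBall_subset_ball hRR)).trans hball
  have hcc : IsCompact (closure (Metric.ball (0:E) (2 * R))) := Metric.isBounded_ball.isCompact_closure
  obtain ⟨C₁, σ₁, hC₁, hσ₁, hb₁⟩ := hr1 _ Metric.isOpen_ball hcc (hcl.trans inter_subset_left)
  obtain ⟨C₂, σ₂, hC₂, hσ₂, hb₂⟩ := hr2 _ Metric.isOpen_ball hcc (hcl.trans inter_subset_right)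
  have hsub1 : Metric.ball (0:E) (2 * R) ⊆ U₁ := (subset_closure.trans hcl).trans inter_subset_left
  have hsub2 : Metric.ball (0:E) (2 * R) ⊆ U₂ := (subset_closure.trans hcl).trans inter_subset_right
  set A := max C₁ C₂ with hA
  set σ := max σ₁ σ₂ with hσd
  have hσ : 0 < σ := lt_max_of_lt_left hσ₁
  have hA0 : 0 < A := lt_max_of_lt_left hC₁
  have hb₁' : ∀ x ∈ Metric.ball (0:E) (2 * R), ∀ k, ‖iteratedFDeriv ℝ k (f ^ j) x‖ ≤ A * σ ^ k * M k := by
    intro x hx k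
    have h := hb₁ x hx k
    have := hM.2.1 k
    rw [iteratedFDerivWithin_of_isOpen k hU₁ (hsub1 hx)] at h
    refine h.trans ?_
    gcongr
    · exact le_max_left _ _
    · exact le_max_left _ _
  have hb₂' : ∀ x ∈ Metric.ball (0:E) (2 * R), ∀ k, ‖iteratedFDeriv ℝ k (f ^ (j + 1)) x‖ ≤ A * σ ^ k * M k := by
    intro x hx k
    have h := hb₂ x hx k
    have := hM.2.1 k
    rw [iteratedFDerivWithin_of_isOpen k hU₂ (hsub2 hx)] at h
    refine h.trans ?_
    gcongr
    · exact le_max_right _ _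
    · exact le_max_right _ _
  obtain ⟨C, hC, hmgC⟩ := mseq_mg hM hmg
  -- the estimate for each `N`
  have key : ∀ N ∈ LM M, ∃ K S : ℝ, 0 < K ∧ 0 < S ∧
      (ContDiffOn ℝ (⊤ : ℕ∞) f (Metric.ball 0 (R / 2)) ∧ ∀ k, ∀ x ∈ Metric.ball (0:E) (R / 2),
      ‖iteratedFDerivWithin ℝ k f (Metric.ball 0 (R / 2)) x‖ ≤ 3 ^ k * (K * S ^ k * N k)) := by
    rintro N ⟨hN, hNq, hMN, hNl⟩
    have hmn : ∀ k, mseq M k ≤ mseq N k := by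
      intro k
      have := hMN k
      unfold mseq
      gcongr
    obtain ⟨K, S, hK, hS, hone⟩ := oneD hj (m := mseq M) (n := mseq N) (A := A) (ρ := R) hC (mseq_pos hM) hmn hmgC
      hσ hR (mseq_zero hN) (mseq_ge_one hN hNl) (fun k => by
        have := hNl (k + 1) (by omega)
        simpa only [Nat.add_sub_cancel] using this) (mseq_lim hN hNq)
    refine ⟨K, S, hK, hS, fd_smooth μ hR (B := fun k => K * S ^ k * N k) (fun k => ?_)⟩
    obtain ⟨s₀, hs₀, hk⟩ := hone k
    refine ⟨s₀, hs₀, fun x hx v hv s hs hs' => ?_⟩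
    have h := hk (fun s => f (x + s • v)) _ _ (TD_of hU₁ hs1 hsub1 hb₁' hx hv)
      (TD_of hU₂ hs2 hsub2 hb₂' hx hv) s hs hs'
    refine h.trans (le_of_eq ?_)
    have : (0:ℝ) < k.factorial := by positivity
    rw [mseq]
    field_simp
  obtain ⟨N₀, hN₀⟩ := LM_nonempty hM hint
  obtain ⟨K₀, S₀, _, _, hsm, hbd0⟩ := key N₀ hN₀
  have h0 : (0:E) ∈ Metric.ball (0:E) (R / 2) := Metric.mem_ball_self (by positivity)
  refine ⟨Metric.ball 0 (R / 2), Metric.isOpen_ball, h0, hsm, ?_⟩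
  set W := Metric.ball (0:E) (R / 2) with hW
  set c : ℕ → ℝ := fun k => sSup ((fun x => ‖iteratedFDerivWithin ℝ k f W x‖) '' W) with hc
  have hbdd : ∀ k, BddAbove ((fun x => ‖iteratedFDerivWithin ℝ k f W x‖) '' W) := by
    intro k
    refine ⟨3 ^ k * (K₀ * S₀ ^ k * N₀ k), ?_⟩
    rintro _ ⟨x, hx, rfl⟩
    exact hbd0 k x hx
  have hcle : ∀ k, ∀ x ∈ W, ‖iteratedFDerivWithin ℝ k f W x‖ ≤ c k :=
    fun k x hx => le_csSup (hbdd k) ⟨x, hx, rfl⟩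
  have hcnn : ∀ k, 0 ≤ c k := fun k => (norm_nonneg _).trans (hcle k 0 h0)
  have hcL : (fun k => ((c k : ℝ) : ℂ)) ∈ Lambda M := by
    rw [hint]
    simp only [mem_iInter]
    intro N hN
    obtain ⟨K, S, hK, hS, _, hbd⟩ := key N hN
    refine ⟨3 * S, by positivity, K, fun k => ?_⟩
    rw [Complex.norm_real, Real.norm_of_nonneg (hcnn k)]
    refine csSup_le (Set.Nonempty.image _ ⟨0, h0⟩) ?_
    rintro _ ⟨x, hx, rfl⟩
    refine (hbd k x hx).trans (le_of_eq ?_)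
    rw [mul_pow]; ring
  obtain ⟨ρ, hρ, D, hD⟩ := hcL
  intro V _ _ hV
  refine ⟨max D 1, ρ, lt_max_of_lt_right one_pos, hρ, fun x hx k => ?_⟩
  have h3 := hD k
  rw [Complex.norm_real, Real.norm_of_nonneg (hcnn k)] at h3
  refine (hcle k x (hV (subset_closure hx))).trans (h3.trans ?_)
  have := hM.2.1 k
  gcongr
  exact le_max_left _ _
end asm
end JorisAux

theorem statement6 (d : ℕ) (hd : 1 ≤ d) (M : ℕ → ℝ)
    (hM : IsWeightSeq M) (hq : Quasianalytic M) (hint : Intersectable M)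
    (hmg : ModerateGrowth M)
    (f : EuclideanSpace ℝ (Fin d) → ℂ) (j : ℕ) (hj : 1 ≤ j)
    (h1 : ∃ U : Set (EuclideanSpace ℝ (Fin d)), IsOpen U ∧ 0 ∈ U ∧ RoumieuOn M (f ^ j) U)
    (h2 : ∃ U : Set (EuclideanSpace ℝ (Fin d)), IsOpen U ∧ 0 ∈ U ∧
      RoumieuOn M (f ^ (j + 1)) U) :
    ∃ U : Set (EuclideanSpace ℝ (Fin d)), IsOpen U ∧ 0 ∈ U ∧ RoumieuOn M f U := by
  exact JorisAux.main volume M hM hint hmg f j hj h1 h2
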